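/- arXiv:1312.4716 — 6 statements merged into one kernel-verified Lean document; each statement's English description precedes it below -/
import Mathlib

section
/- Let k be a positive integer, n = 2k, and let U = {λ ∈ F_{3^n} : λ^{3^k+1} = 1} be the unit circle of F_{3^n}. For every a ∈ F_{3^n} with a^{3^k - 1} = -1, there is exactly one λ ∈ U satisfying λ^{3^{n-1}} + λ^{1-3^{n-1}} + a^{3^k}·λ + a = 0 (here λ^{1-3^{n-1}} denotes λ·(λ^{3^{n-1}})^{-1}, which is well defined since λ ≠ 0). -/
theorem aux_inj {F : Type*} [Field F] (h3 : (3 : F) = 0) [CharP F 3] (k : ℕ) (d : F)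
    (hd : d ^ 3 = d) (hq : d ^ (3 ^ k) = -d) : d = 0 := by
  have h : ∀ j : ℕ, d ^ (3 ^ j) = d := by
    intro j
    induction j with
    | zero => simp
    | succ j ih => rw [pow_succ, pow_mul, ih, hd]
  rw [h k] at hq
  linear_combination d * h3 - hq

/-- Existence of the solution of `s^3 - s = -a` on the trace-zero space. -/
theorem aux_ex {F : Type*} [Field F] [Fintype F] (h3 : (3 : F) = 0) [CharP F 3] (k : ℕ) (a : F)
    (ha : a ^ (3 ^ k) = -a) : ∃ s : F, s ^ (3 ^ k) = -s ∧ s ^ 3 - s = -a := by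
  have : Fact (Nat.Prime 3) := ⟨Nat.prime_three⟩
  have hodd : Odd (3 ^ k) := Odd.pow (by decide)
  have hm : ∀ s : {s : F // s ^ (3 ^ k) = -s},
      (s.1 ^ 3 - s.1) ^ (3 ^ k) = -(s.1 ^ 3 - s.1) := by
    rintro ⟨s, hs⟩
    simp only
    rw [sub_pow_char_pow, ← pow_mul, mul_comm, pow_mul, hs]
    ring
  let f : {s : F // s ^ (3 ^ k) = -s} → {s : F // s ^ (3 ^ k) = -s} :=
    fun s => ⟨s.1 ^ 3 - s.1, hm s⟩
  have hf : Function.Injective f := by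
    rintro ⟨s, hs⟩ ⟨t, ht⟩ hst
    have hst' : s ^ 3 - s = t ^ 3 - t := congrArg Subtype.val hst
    have := aux_inj h3 k (s - t) (by rw [sub_pow_char]; linear_combination hst')
      (by rw [sub_pow_char_pow, hs, ht]; ring)
    exact Subtype.ext (sub_eq_zero.mp this)
  have hsurj := Finite.surjective_of_injective hf
  obtain ⟨s, hs⟩ := hsurj ⟨-a, by rw [hodd.neg_pow, ha]⟩
  exact ⟨s.1, s.2, congrArg Subtype.val hs⟩

/-- **Lemma (uniqueness of the unit-circle root).**
Let `k ≥ 1`, `n = 2k`, and let `F` be the finite field with `3^n` elements.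
For every `a ∈ F` with `a^(3^k - 1) = -1`, there is exactly one `λ` on the unit circle
`U = {λ : λ^(3^k + 1) = 1}` satisfying
`λ^(3^(n-1)) + λ·(λ^(3^(n-1)))⁻¹ + a^(3^k)·λ + a = 0`. -/
theorem stmt_0 (k : ℕ) (hk : 0 < k) (n : ℕ) (hn : n = 2 * k)
    (F : Type*) [Field F] [Fintype F] (hF : Fintype.card F = 3 ^ n)
    (a : F) (ha : a ^ (3 ^ k - 1) = -1) :
    ∃! l : F, l ^ (3 ^ k + 1) = 1 ∧
      l ^ (3 ^ (n - 1)) + l * (l ^ (3 ^ (n - 1)))⁻¹ + a ^ (3 ^ k) * l + a = 0 := by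
  have : Fact (Nat.Prime 3) := ⟨Nat.prime_three⟩
  have : CharP F 3 := charP_of_card_eq_prime_pow hF
  have h3 : (3 : F) = 0 := by exact_mod_cast CharP.cast_eq_zero F 3
  have hodd : Odd (3 ^ k) := Odd.pow (by decide)
  have hq : a ^ (3 ^ k) = -a := by
    have : 3 ^ k = (3 ^ k - 1) + 1 := (Nat.sub_add_cancel (Nat.one_le_pow _ _ (by norm_num))).symm
    rw [this, pow_succ, ha]; ring
  have ha0 : a ≠ 0 := by
    rintro rfl
    have : 3 ^ k - 1 ≠ 0 := by
      have := Nat.one_lt_pow hk.ne' (show 1 < 3 by norm_num)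
      omega
    rw [zero_pow this] at ha
    exact one_ne_zero (neg_eq_zero.mp ha.symm)
  have hn1 : 3 ^ n = 3 ^ (n - 1) * 3 := by
    rw [← pow_succ]; congr 1; omega
  have hcard : ∀ x : F, x ^ (3 ^ n) = x := fun x => by rw [← hF]; exact FiniteField.pow_card x
  -- analysis of a solution
  have key : ∀ l : F, l ^ (3 ^ k + 1) = 1 →
      l ^ (3 ^ (n - 1)) + l * (l ^ (3 ^ (n - 1)))⁻¹ + a ^ (3 ^ k) * l + a = 0 →
      ∃ s m : F, s ^ (3 ^ k) = -s ∧ s ^ 3 - s = -a ∧ l = m ^ 3 ∧ m * (s + 1) = s - 1 := by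
    intro l h1 h2
    set m := l ^ (3 ^ (n - 1)) with hm
    have hl : m ^ 3 = l := by rw [hm, ← pow_mul, ← hn1, hcard]
    have hmU : m ^ (3 ^ k) * m = 1 := by
      rw [← pow_succ, hm, ← pow_mul, mul_comm, pow_mul, h1, one_pow]
    have hm0 : m ≠ 0 := right_ne_zero_of_mul_eq_one hmU
    have he : m + m ^ 2 - a * m ^ 3 + a = 0 := by
      rw [hq, ← hl] at h2
      field_simp at h2
      linear_combination h2
    have hm1 : 1 - m ≠ 0 := by
      intro h
      have : m = 1 := (sub_eq_zero.mp h).symm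
      rw [this] at he
      exact one_ne_zero (α := F) (by linear_combination h3 - he)
    have hm1' : m - 1 ≠ 0 := by
      intro h; apply hm1; linear_combination -h
    refine ⟨(1 + m) / (1 - m), m, ?_, ?_, hl.symm, ?_⟩
    · have hinv : m ^ (3 ^ k) = m⁻¹ := eq_inv_of_mul_eq_one_left hmU
      rw [div_pow, add_pow_char_pow, sub_pow_char_pow, one_pow, hinv]
      have h5 : 1 - m⁻¹ ≠ 0 := by
        intro h
        apply hm1'
        field_simp at h
        linear_combination h
      rw [← neg_div, div_eq_div_iff h5 hm1]
      field_simp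
      ring
    · rw [← sub_eq_zero]
      field_simp
      linear_combination he + (m + m ^ 2 - a * m + a * m ^ 2) * h3
    · field_simp
      ring
  obtain ⟨s, hs, hsa⟩ := aux_ex h3 k a hq
  have hs1 : s + 1 ≠ 0 := by
    intro h
    apply ha0
    have : s = -1 := eq_neg_of_add_eq_zero_left h
    rw [this] at hsa
    linear_combination hsa
  have hs2 : s - 1 ≠ 0 := by
    intro h
    apply ha0
    have : s = 1 := sub_eq_zero.mp h
    rw [this] at hsa
    linear_combination hsa
  have hs3 : -s + 1 ≠ 0 := by
    intro h; apply hs2; linear_combination -h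
  refine ⟨((s - 1) / (s + 1)) ^ 3, ⟨?_, ?_⟩, ?_⟩
  · rw [← pow_mul, mul_comm, pow_mul]
    have : ((s - 1) / (s + 1)) ^ (3 ^ k + 1) = 1 := by
      rw [pow_succ, div_pow, add_pow_char_pow, sub_pow_char_pow, one_pow, hs]
      field_simp
      ring
    rw [this, one_pow]
  · have : (((s - 1) / (s + 1)) ^ 3) ^ (3 ^ (n - 1)) = (s - 1) / (s + 1) := by
      rw [← pow_mul, mul_comm, ← hn1, hcard]
    rw [this, hq]
    have haa : a = s - s ^ 3 := by linear_combination hsa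
    rw [haa]
    field_simp
    linear_combination (2 * s ^ 3 - 2 * s ^ 5) * h3
  · rintro l ⟨h1, h2⟩
    obtain ⟨t, m, ht, hta, rfl, hmt⟩ := key l h1 h2
    have hd := aux_inj h3 k (t - s) (by rw [sub_pow_char]; linear_combination hta - hsa)
      (by rw [sub_pow_char_pow, hs, ht]; ring)
    have : t = s := sub_eq_zero.mp hd
    subst this
    rw [← hmt, mul_div_cancel_right₀ _ hs1]
end

section
/- Let k be a positive integer, n = 2k, and d = 3^k + 2. For every a ∈ F_{3^n} with a^{3^k - 1} = -1, the polynomial a^{-1}x^d is a complete permutation polynomial over F_{3^n}; that is, both the map x ↦ a^{-1}x^d and the map x ↦ a^{-1}x^d + x are bijections of F_{3^n}. -/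
theorem stmt_1 (k : ℕ) (hk : 0 < k) (n : ℕ) (hn : n = 2 * k) (d : ℕ) (hd : d = 3 ^ k + 2)
    (F : Type*) [Field F] [Fintype F] (hF : Fintype.card F = 3 ^ n)
    (a : F) (ha : a ^ (3 ^ k - 1) = -1) :
    Function.Bijective (fun x : F => a⁻¹ * x ^ d) ∧
    Function.Bijective (fun x : F => a⁻¹ * x ^ d + x) := by
  haveI : Fact (Nat.Prime 3) := ⟨Nat.prime_three⟩
  haveI : CharP F 3 := charP_of_card_eq_prime_pow hF
  have h3 : (3 : F) = 0 := by exact_mod_cast CharP.cast_eq_zero F 3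
  have hq : 1 < 3 ^ k := Nat.one_lt_pow hk.ne' (by norm_num)
  have ha0 : a ≠ 0 := by
    rintro rfl
    rw [zero_pow (by omega)] at ha
    exact one_ne_zero (neg_eq_zero.mp ha.symm)
  obtain ⟨s, hs⟩ : ∃ s : F →+* F, ∀ x, s x = x ^ 3 ^ k :=
    ⟨iterateFrobenius F 3 k, fun x => iterateFrobenius_def 3 k x⟩
  have hss : ∀ x, s (s x) = x := by
    intro x
    rw [hs, hs, ← pow_mul, ← pow_add, ← two_mul, ← hn, ← hF, FiniteField.pow_card]
  have hsa : s a = -a := by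
    rw [hs, show 3 ^ k = (3 ^ k - 1) + 1 by omega, pow_succ, ha]; ring
  have hne : ∀ t, s t = t → t ≠ a ∧ t ≠ -a := by
    intro t ht
    have key : a = -a → False := fun h => ha0 (by linear_combination a * h3 - h)
    constructor
    · rintro rfl
      exact key (ht.symm.trans hsa)
    · rintro rfl
      rw [map_neg, hsa, neg_neg] at ht
      exact key ht
  have hN : ∀ x, s (x * s x) = x * s x := by
    intro x; rw [map_mul, hss, mul_comm]
  have hpow : ∀ x, x ^ d = x * (x * s x) := by
    intro x; rw [hd, hs, pow_add]; ring
  constructor <;> rw [← Finite.injective_iff_bijective] <;> intro x y hxy <;>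
    simp only [hpow] at hxy
  · have h1 : x * (x * s x) = y * (y * s y) := mul_left_cancel₀ (inv_ne_zero ha0) hxy
    have h2 := congrArg s h1
    rw [map_mul, hN, map_mul, hN] at h2
    have h4 : (x * s x - y * s y) ^ 3 = 0 := by
      linear_combination (s x * (x * s x)) * h1 + (y * (y * s y)) * h2
        - (x * s x) * (y * s y) * (x * s x - y * s y) * h3
    have h5 : x * s x = y * s y := sub_eq_zero.mp (pow_eq_zero_iff (by norm_num) |>.mp h4)
    by_cases h0 : x * s x = 0
    · have z : ∀ z, z * s z = 0 → z = 0 := by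
        intro z hz
        rcases mul_eq_zero.mp hz with h | h
        · exact h
        · exact (map_eq_zero s).mp h
      rw [z x h0, z y (h5 ▸ h0)]
    · rw [← h5] at h1
      exact mul_right_cancel₀ h0 h1
  · have h1 : x * (x * s x + a) = y * (y * s y + a) := by
      have := congrArg (a * ·) hxy
      field_simp at this
      linear_combination this
    have h2 := congrArg s h1
    rw [map_mul, map_add, hN, map_mul, map_add, hN, hsa] at h2
    have h4 : (x * s x - y * s y) * ((x * s x - y * s y - a) * (x * s x - y * s y + a)) = 0 := by
      linear_combination (s x * (x * s x - a)) * h1 + (y * (y * s y + a)) * h2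
        - (x * s x) * (y * s y) * (x * s x - y * s y) * h3
    have hD : s (x * s x - y * s y) = x * s x - y * s y := by rw [map_sub, hN, hN]
    obtain ⟨n1, n2⟩ := hne _ hD
    have h5 : x * s x = y * s y := by
      rcases mul_eq_zero.mp h4 with h | h
      · exact sub_eq_zero.mp h
      · rcases mul_eq_zero.mp h with h | h
        · exact absurd (sub_eq_zero.mp h) n1
        · exact absurd (eq_neg_of_add_eq_zero_left h) n2
    rw [← h5] at h1
    refine mul_right_cancel₀ ?_ h1
    intro h
    exact (hne _ (hN x)).2 (eq_neg_of_add_eq_zero_left h)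
end

section
/- Let p be an odd prime, k a positive integer, n = 2k, and let i be an integer with 1 ≤ i ≤ n. Set d = (p^k - 1)·(p^i - 1)/2 + p^i. For every a ∈ F_{p^n} with a^{p^k - 1} = -1, the polynomial a^{-1}x^d is a complete permutation polynomial over F_{p^n}; that is, both x ↦ a^{-1}x^d and x ↦ a^{-1}x^d + x are bijections of F_{p^n}. -/
/-- **Theorem.** Let `p` be an odd prime, `k ≥ 1`, `n = 2k`, `1 ≤ i ≤ n`, and
`d = (p^k - 1)·(p^i - 1)/2 + p^i` (the division is exact since `p` is odd).
Let `F` be the finite field with `p^n` elements. For every `a ∈ F` with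
`a^(p^k - 1) = -1`, the monomial `a⁻¹ x^d` is a complete permutation polynomial
over `F`: both `x ↦ a⁻¹ x^d` and `x ↦ a⁻¹ x^d + x` are bijections of `F`. -/
theorem stmt_2 (p : ℕ) (hp : p.Prime) (hodd : Odd p) (k : ℕ) (hk : 0 < k)
    (n : ℕ) (hn : n = 2 * k) (i : ℕ) (hi1 : 1 ≤ i) (hin : i ≤ n)
    (d : ℕ) (hd : d = (p ^ k - 1) * ((p ^ i - 1) / 2) + p ^ i)
    (F : Type*) [Field F] [Fintype F] (hF : Fintype.card F = p ^ n)
    (a : F) (ha : a ^ (p ^ k - 1) = -1) :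
    Function.Bijective (fun x : F => a⁻¹ * x ^ d) ∧
    Function.Bijective (fun x : F => a⁻¹ * x ^ d + x) := by
  have : Fact p.Prime := ⟨hp⟩
  have hcard : (p : F) = 0 := by
    have h := Nat.cast_card_eq_zero F
    rw [hF, Nat.cast_pow] at h
    exact pow_eq_zero_iff (by omega) |>.1 h
  have : CharP F p := (CharP.charP_iff_prime_eq_zero hp).2 hcard
  have hp2 : p ≠ 2 := by rintro rfl; exact absurd hodd (by decide)
  have h2 : (2 : F) ≠ 0 := by
    intro h
    have h' : ((2 : ℕ) : F) = 0 := by exact_mod_cast h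
    rw [CharP.cast_eq_zero_iff F p] at h'
    exact hp2 ((Nat.prime_dvd_prime_iff_eq hp Nat.prime_two).1 h')
  have hqodd : Odd (p ^ k) := hodd.pow
  obtain ⟨s, hs⟩ : ∃ s, p ^ i = 2 * s + 1 := hodd.pow
  have hs' : (p ^ i - 1) / 2 = s := by omega
  have hqpos : 0 < p ^ k := hqodd.pos
  have hqq : ∀ x : F, (x ^ p ^ k) ^ p ^ k = x := by
    intro x
    rw [← pow_mul, ← pow_add, ← two_mul, ← hn, ← hF, FiniteField.pow_card]
  have haq : a ^ p ^ k = -a := by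
    conv_lhs => rw [← Nat.sub_add_cancel hqpos, pow_succ, ha]
    ring
  have ha0 : a ≠ 0 := by
    rintro rfl
    have h1 : (p ^ k - 1) ≠ 0 := by
      have := Nat.one_lt_pow hk.ne' hp.one_lt
      omega
    rw [zero_pow h1] at ha
    exact one_ne_zero (neg_eq_zero.1 ha.symm)
  have hadd : ∀ x y : F, (x + y) ^ p ^ k = x ^ p ^ k + y ^ p ^ k :=
    fun x y => add_pow_char_pow x y p k
  have hsubi : ∀ x y : F, (x - y) ^ p ^ i = x ^ p ^ i - y ^ p ^ i :=
    fun x y => sub_pow_char_pow x y _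
  have hsubk : ∀ x y : F, (x - y) ^ p ^ k = x ^ p ^ k - y ^ p ^ k :=
    fun x y => sub_pow_char_pow x y _
  have hdd : d = (p ^ k + 1) * s + 1 := by
    rw [hd, hs', hs]
    obtain ⟨m, hm⟩ := Nat.exists_eq_add_of_lt hqpos
    rw [hm]
    simp only [zero_add, Nat.add_sub_cancel]
    ring
  rw [hs] at hsubi
  clear hd hs'
  subst hdd
  generalize p ^ k = q at *
  have hb0 : a⁻¹ ≠ 0 := inv_ne_zero ha0
  have hbq : (a⁻¹) ^ q = -a⁻¹ := by rw [inv_pow, haq, inv_neg]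
  generalize a⁻¹ = b at *
  have hN : ∀ x : F, (x ^ (q + 1)) ^ q = x ^ (q + 1) := by
    intro x
    rw [pow_succ, mul_pow, hqq, mul_comm]
  -- anything of the form `b * D ^ s` with `D` in the subfield is anti-invariant
  have hanti : ∀ D : F, D ^ q = D → (b * D ^ s) ^ q = -(b * D ^ s) := by
    intro D hD
    rw [mul_pow, hbq, ← pow_mul, mul_comm s q, pow_mul, hD]
    ring
  have hne1 : ∀ u : F, u ^ q = -u → u ^ 2 ≠ 1 := by
    intro u hu h
    rcases (mul_self_eq_one_iff.1 ((sq u).symm.trans h)) with rfl | rfl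
    · rw [one_pow] at hu
      apply h2; linear_combination hu
    · rw [hqodd.neg_one_pow] at hu
      apply h2; linear_combination -hu
  have hform : ∀ x : F, b * x ^ ((q + 1) * s + 1) = x * (b * (x ^ (q + 1)) ^ s) := by
    intro x
    rw [pow_succ, pow_mul]
    ring
  constructor
  · apply Finite.injective_iff_bijective.1
    intro x y hxy
    simp only [hform] at hxy
    have hu := hanti _ (hN x)
    have hv := hanti _ (hN y)
    have key : ∀ z u : F, u ^ q = -u → (z * u) ^ q * (z * u) = z ^ (q + 1) * (- u ^ 2) := by
      intro z u h
      rw [mul_pow, h, pow_succ]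
      ring
    have h1 := congrArg (fun z => z ^ q * z) hxy
    simp only [key _ _ hu, key _ _ hv] at h1
    have h1' : b ^ 2 * ((x ^ (q + 1)) ^ (2 * s + 1)) = b ^ 2 * ((y ^ (q + 1)) ^ (2 * s + 1)) := by
      generalize x ^ (q + 1) = N at *
      generalize y ^ (q + 1) = M at *
      have e2 : ∀ z : F, z ^ (2 * s + 1) = z * (z ^ s) ^ 2 := fun z => by ring
      rw [e2, e2]
      linear_combination -h1
    have h2' := mul_left_cancel₀ (pow_ne_zero 2 hb0) h1'
    have h3 : x ^ (q + 1) = y ^ (q + 1) := by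
      have := hsubi (x ^ (q + 1)) (y ^ (q + 1))
      rw [h2', sub_self] at this
      exact sub_eq_zero.1 (pow_eq_zero_iff (by omega) |>.1 this)
    by_cases hx : x = 0
    · rw [hx, zero_pow (by omega)] at h3
      rw [hx, pow_eq_zero_iff (by omega) |>.1 h3.symm]
    · rw [← h3] at hxy
      exact mul_right_cancel₀ (mul_ne_zero hb0 (pow_ne_zero _ (pow_ne_zero _ hx))) hxy
  · apply Finite.injective_iff_bijective.1
    intro x y hxy
    simp only [hform] at hxy
    have hu := hanti _ (hN x)
    have hv := hanti _ (hN y)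
    have key : ∀ z u : F, u ^ q = -u →
        (z * u + z) ^ q * (z * u + z) = z ^ (q + 1) * (1 - u ^ 2) := by
      intro z u h
      rw [hadd, mul_pow, h, pow_succ]
      ring
    have h1 := congrArg (fun z => z ^ q * z) hxy
    simp only [key _ _ hu, key _ _ hv] at h1
    have hD : (x ^ (q + 1) - y ^ (q + 1)) ^ q = x ^ (q + 1) - y ^ (q + 1) := by
      rw [hsubk, hN, hN]
    have h3 : x ^ (q + 1) = y ^ (q + 1) := by
      have hsub := hsubi (x ^ (q + 1)) (y ^ (q + 1))
      generalize x ^ (q + 1) = N at *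
      generalize y ^ (q + 1) = M at *
      by_contra hne
      have hD0 : N - M ≠ 0 := sub_ne_zero.2 hne
      apply hne1 _ (hanti _ hD)
      apply mul_left_cancel₀ hD0
      have e : (N - M) * (b * (N - M) ^ s) ^ 2 = b ^ 2 * (N - M) ^ (2 * s + 1) := by ring
      rw [e, hsub]
      have e2 : ∀ z : F, z ^ (2 * s + 1) = z * (z ^ s) ^ 2 := fun z => by ring
      rw [e2, e2]
      linear_combination -h1
    rw [← h3] at hxy
    have hne : b * (x ^ (q + 1)) ^ s + 1 ≠ 0 := by
      intro h
      apply hne1 _ hu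
      rw [eq_neg_of_add_eq_zero_left h]
      ring
    apply mul_right_cancel₀ hne
    linear_combination hxy
end

section
/- Let p be an odd prime with p ≠ 5, k a positive integer with gcd(5, p^k - 1) = 1, n = 4k, and d = (p^{4k} - 1)/(p^k - 1) + 1. Let a ∈ F_{p^n}, a ≠ 0, set a_i = a^{p^{ik}} for 0 ≤ i ≤ 3, and let λ_1, λ_2, λ_3, λ_4 be the elementary symmetric functions of a_0, a_1, a_2, a_3 (so λ_1 = a_0+a_1+a_2+a_3, ..., λ_4 = a_0a_1a_2a_3), which lie in F_{p^k}. Then a^{-1}x^d is a complete permutation polynomial over F_{p^n} if and only if one of the following holds (all arithmetic in F_{p^k}; fractions denote division by the invertible elements 5, 25, 125 since p ≠ 5): (1) -(2/5)λ_1² + λ_2 = 0, -(2/5)λ_1λ_3 - (3/125)λ_1⁴ + (3/25)λ_2λ_1² + λ_4 = 0, and λ_3 + (4/25)λ_1³ - (3/5)λ_1λ_2 = 0; (2) p^k ≡ 2 or 3 (mod 5), 5^{-1}·(-(2/5)λ_1² + λ_2)² = -(2/5)λ_1λ_3 - (3/125)λ_1⁴ + (3/25)λ_2λ_1² + λ_4,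 and λ_3 + (4/25)λ_1³ - (3/5)λ_1λ_2 = 0; (3) p = 3, k = 2, λ_2 = λ_1², λ_3 = -λ_1³, and (λ_4 + λ_1⁴)² = -1; (4) p = 3, k = 1, λ_2 = λ_1² + 1, λ_3 = -λ_1³, and λ_4 = -λ_1⁴; (5) p = 3, k = 1, λ_2 = λ_1² + 2, λ_3 = -λ_1³, and λ_4 = -λ_1⁴ + 1; (6) p = 7, k = 1, λ_1² + λ_2 = 0, λ_1λ_3 + 3λ_1⁴ - λ_2λ_1² + λ_4 = 0, and λ_3 + λ_1³ - 2λ_1λ_2 = 2 or -2; (7) p = 7, k = 1, and there exists v ∈ {3, 5, 6} with λ_1² + λ_2 = v, λ_1λ_3 + 3λ_1⁴ - λ_2λ_1² + λ_4 = 3v², and λ_3 + λ_1³ - 2λ_1λ_2 = 1 or -1; (8) p = 13, k = 1, and there exists v ∈ {2, -2, 5, -5, 6, -6} with -3λ_1² + λ_2 = v, -3λ_1λ_3 - 2λ_1⁴ - 3λ_2λ_1² + λ_4 = 3v², and λ_3 - 4λ_1³ + 2λ_1λ_2 = 0. -/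
open Polynomial in
noncomputable def phiPol {K : Type*} [Field K] (A B C : K) : K[X] :=
  1 + X ^ 2 * (Polynomial.C A + Polynomial.C B * X + Polynomial.C C * X ^ 2)

lemma sum_pow_K {K : Type*} [Field K] [Fintype K] (i : ℕ) (hi : 0 < i) :
    ∑ x : K, x ^ i = if (Fintype.card K - 1) ∣ i then -1 else 0 := by
  classical
  rw [← FiniteField.sum_pow_units K i]
  rw [← Finset.sum_subset (Finset.subset_univ (Finset.univ.erase (0:K)))]
  · symm
    refine Finset.sum_bij (fun u _ => (u : K)) ?_ ?_ ?_ ?_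
    · intro u _; simp
    · intro u _ v _ h; exact Units.ext h
    · intro b hb
      exact ⟨Units.mk0 b (by simpa using hb), Finset.mem_univ _, rfl⟩
    · intro u _; simp
  · intro x _ hx
    have : x = 0 := by simpa using hx
    rw [this, zero_pow hi.ne']

lemma hermite0 {K : Type*} [Field K] [Fintype K] (f : K → K) (hf : Function.Bijective f)
    (t : ℕ) (h0 : 0 < t) (h1 : t < Fintype.card K - 1) : ∑ x : K, f x ^ t = 0 := by
  rw [hf.sum_comp (fun x => x ^ t)]
  rw [sum_pow_K t h0, if_neg]
  intro h
  have := Nat.le_of_dvd h0 h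
  omega

open Polynomial in
lemma hermiteE {K : Type*} [Field K] [Fintype K] (A B C : K)
    (hf : Function.Bijective (fun x : K => x ^ 5 + A * x ^ 3 + B * x ^ 2 + C * x))
    (s t : ℕ) (ht : 5 * t = Fintype.card K + s) (hs : s + 2 < Fintype.card K) :
    ((phiPol A B C) ^ t).coeff (s + 1) = 0 := by
  classical
  set q := Fintype.card K with hq
  have hS0 := hermite0 _ hf t (by omega) (by omega)
  have hS : ∑ y : K, y ^ (q - 2 - s) * (eval y (phiPol A B C)) ^ t = 0 := by
    rw [← hS0, ← (inv_involutive (G := K)).bijective.sum_comp]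
    refine Finset.sum_congr rfl fun x _ => ?_
    by_cases hx : x = 0
    · subst hx
      have : q - 2 - s ≠ 0 := by omega
      simp [this, show t ≠ 0 by omega]
    have h1 : x ^ (q - 1) = 1 := FiniteField.pow_card_sub_one_eq_one x hx
    have h2 : (x ^ 5 + A * x ^ 3 + B * x ^ 2 + C * x) = x ^ 5 * eval x⁻¹ (phiPol A B C) := by
      simp [phiPol]; field_simp; ring
    rw [h2, mul_pow, ← pow_mul]
    congr 1
    rw [inv_pow]
    refine inv_eq_of_mul_eq_one_left ?_
    rw [← pow_add, show 5 * t + (q - 2 - s) = (q - 1) * 2 by omega, pow_mul, h1, one_pow]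
  have hdeg : ((phiPol A B C) ^ t).natDegree < 4 * t + 1 := by
    have h4 : (phiPol A B C).natDegree ≤ 4 := by
      unfold phiPol; compute_degree!
    have := natDegree_pow_le_of_le t h4
    omega
  have key : ∑ y : K, y ^ (q - 2 - s) * (eval y (phiPol A B C)) ^ t
      = - ((phiPol A B C) ^ t).coeff (s + 1) := by
    simp_rw [← eval_pow, eval_eq_sum_range' hdeg, Finset.mul_sum]
    rw [Finset.sum_comm]
    have : ∀ i ∈ Finset.range (4 * t + 1), ∑ y : K, y ^ (q - 2 - s) * (((phiPol A B C) ^ t).coeff i * y ^ i)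
        = if i = s + 1 then - ((phiPol A B C) ^ t).coeff (s + 1) else 0 := by
      intro i hi
      have hi := Finset.mem_range.1 hi
      have e : ∀ y : K, y ^ (q - 2 - s) * (((phiPol A B C) ^ t).coeff i * y ^ i)
         = ((phiPol A B C) ^ t).coeff i * y ^ (q - 2 - s + i) := by intro y; rw [pow_add]; ring
      simp_rw [e]
      rw [← Finset.mul_sum, sum_pow_K _ (by omega), ← hq]
      by_cases h : i = s + 1
      · rw [if_pos h, if_pos]
        · rw [h]; ring
        · rw [show q - 2 - s + i = q - 1 by omega]
      · rw [if_neg h, if_neg, mul_zero]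
        rintro ⟨c, hc⟩
        have hc2 : c < 2 := by
          by_contra h2
          have : (q - 1) * 2 ≤ (q-1) * c := Nat.mul_le_mul_left _ (by omega)
          omega
        interval_cases c <;> omega
    rw [Finset.sum_congr rfl this, Finset.sum_ite_eq']
    split_ifs with h
    · rfl
    · rw [coeff_eq_zero_of_natDegree_lt, neg_zero]
      have : ¬ (s + 1 < 4 * t + 1) := by simpa using h
      omega
  rw [key] at hS
  exact neg_eq_zero.1 hS

open Polynomial in
lemma quad_coeff {K : Type*} [Field K] (A B C : K) (n m : ℕ) :
    ((Polynomial.C A + Polynomial.C B * X + Polynomial.C C * X ^ 2) ^ n).coeff m =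
    ∑ l ∈ Finset.range (n + 1), if 2 * l ≤ m then
      ((n.choose l : ℕ) : K) * (((n - l).choose (m - 2 * l) : ℕ) : K) *
        C ^ l * B ^ (m - 2 * l) * A ^ (n - l - (m - 2 * l)) else 0 := by
  have lin : ∀ (N M : ℕ), ((Polynomial.C B * X + Polynomial.C A) ^ N).coeff M =
      ((N.choose M : ℕ) : K) * B ^ M * A ^ (N - M) := by
    intro N M
    rw [add_pow, finsetSum_coeff]
    have : ∀ j ∈ Finset.range (N+1), ((Polynomial.C B * X) ^ j * Polynomial.C A ^ (N - j) * ((N.choose j : ℕ) : K[X])).coeff M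
        = if M = j then ((N.choose j : ℕ) : K) * B ^ j * A ^ (N - j) else 0 := by
      intro j _
      have : ((Polynomial.C B * X) ^ j * Polynomial.C A ^ (N - j) * ((N.choose j : ℕ) : K[X]))
         = Polynomial.C (((N.choose j : ℕ) : K) * B ^ j * A ^ (N - j)) * X ^ j := by
        simp [mul_pow]; ring
      rw [this, coeff_C_mul_X_pow]
    rw [Finset.sum_congr rfl this, Finset.sum_ite_eq]
    split_ifs with h
    · rfl
    · have : N < M := by simpa using h
      simp [Nat.choose_eq_zero_of_lt this]
  rw [show Polynomial.C A + Polynomial.C B * X + Polynomial.C C * X ^ 2 =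
     Polynomial.C C * X ^ 2 + (Polynomial.C B * X + Polynomial.C A) by ring, add_pow, finsetSum_coeff]
  refine Finset.sum_congr rfl fun l _ => ?_
  have : ((Polynomial.C C * X ^ 2) ^ l * (Polynomial.C B * X + Polynomial.C A) ^ (n - l) * ((n.choose l : ℕ) : K[X]))
     = Polynomial.C (((n.choose l : ℕ) : K) * C ^ l) * ((Polynomial.C B * X + Polynomial.C A) ^ (n - l) * X ^ (2 * l)) := by
    simp [mul_pow, pow_mul]; ring
  rw [this, coeff_C_mul, coeff_mul_X_pow']
  split_ifs with h
  · rw [lin]; ring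
  · simp

open Polynomial in
lemma phi_coeff {K : Type*} [Field K] (A B C : K) (t e : ℕ) :
    ((phiPol A B C) ^ t).coeff e = ∑ n ∈ Finset.range (e / 2 + 1), ((t.choose n : ℕ) : K) *
     ∑ l ∈ Finset.range (n + 1), if 2 * l ≤ e - 2 * n then
      ((n.choose l : ℕ) : K) * (((n - l).choose (e - 2 * n - 2 * l) : ℕ) : K) *
        C ^ l * B ^ (e - 2 * n - 2 * l) * A ^ (n - l - (e - 2 * n - 2 * l)) else 0 := by
  simp_rw [← quad_coeff]
  unfold phiPol
  rw [add_comm, add_pow, finsetSum_coeff]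
  simp only [one_pow, mul_one]
  have : ∀ n, ((X ^ 2 * (Polynomial.C A + Polynomial.C B * X + Polynomial.C C * X ^ 2)) ^ n * ((t.choose n : ℕ) : K[X])).coeff e
    = if n < e / 2 + 1 then ((t.choose n : ℕ) : K) * ((Polynomial.C A + Polynomial.C B * X + Polynomial.C C * X ^ 2) ^ n).coeff (e - 2 * n) else 0 := by
    intro n
    have : ((X ^ 2 * (Polynomial.C A + Polynomial.C B * X + Polynomial.C C * X ^ 2)) ^ n * ((t.choose n : ℕ) : K[X]))
     = Polynomial.C ((t.choose n : ℕ) : K) * ((Polynomial.C A + Polynomial.C B * X + Polynomial.C C * X ^ 2) ^ n * X ^ (2 * n)) := by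
      rw [mul_pow, ← pow_mul]; simp; ring
    rw [this, coeff_C_mul, coeff_mul_X_pow']
    have : 2 * n ≤ e ↔ n < e / 2 + 1 := by omega
    simp [this]
  simp_rw [this]
  rw [← Finset.sum_filter]
  refine Finset.sum_subset ?_ ?_
  · intro n hn; simp at hn ⊢; omega
  · intro n hn hn'
    simp at hn hn'
    have : t < n := by by_contra h; have := hn' (by omega); omega
    simp [Nat.choose_eq_zero_of_lt this]

lemma chooseK {K : Type*} [Field K] [Fintype K] (p k : ℕ) (hp : p.Prime) (hp5 : p ≠ 5) [CharP K p]
    (s t : ℕ) (ht : 5 * t = p ^ k + s) (n : ℕ) (hn : ¬ p ^ k ∣ n.factorial) (m : ℕ) (N : ℤ)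
    (h : 5 ^ m * ∏ i ∈ Finset.range n, ((s : ℤ) - 5 * i) = 5 ^ n * (n.factorial : ℤ) * N) :
    (5 : K) ^ m * ((t.choose n : ℕ) : K) = (N : K) := by
  have h1 : ∏ i ∈ Finset.range n, ((t : ℤ) - i) = n.factorial * t.choose n := by
    have := Nat.descFactorial_eq_factorial_mul_choose t n
    rw [← Nat.cast_mul, ← this, ← descPochhammer_eval_eq_descFactorial ℤ t n,
      descPochhammer_eval_eq_prod_range]
  have h2 : (5:ℤ) ^ n * (n.factorial * t.choose n) = ∏ i ∈ Finset.range n, (((p ^ k : ℕ) : ℤ) + (s - 5 * i)) := by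
    rw [← h1, ← Finset.card_range n, ← Finset.prod_const, Finset.card_range, ← Finset.prod_mul_distrib]
    refine Finset.prod_congr rfl fun i _ => ?_
    have : (5:ℤ) * t = ((p ^ k : ℕ) : ℤ) + s := by exact_mod_cast ht
    linear_combination this
  have h3 : ((p ^ k : ℕ) : ℤ) ∣ (5:ℤ) ^ n * (n.factorial * t.choose n) - ∏ i ∈ Finset.range n, ((s : ℤ) - 5 * i) := by
    rw [h2]
    refine (Int.modEq_iff_dvd).1 ?_
    apply Int.ModEq.prod
    intro i _
    exact (Int.modEq_iff_dvd).2 ⟨1, by ring⟩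
  have h4 : ((p ^ k : ℕ) : ℤ) ∣ 5 ^ n * ((n.factorial : ℤ) * (5 ^ m * t.choose n - N)) := by
    have := h3.mul_left (5 ^ m)
    have e : 5 ^ n * ((n.factorial : ℤ) * (5 ^ m * t.choose n - N)) = 5 ^ m * ((5:ℤ) ^ n * (n.factorial * t.choose n) - ∏ i ∈ Finset.range n, ((s : ℤ) - 5 * i)) := by
      linear_combination h
    rw [e]
    exact this
  have c5 : IsCoprime ((p ^ k : ℕ) : ℤ) ((5:ℤ) ^ n) := by
    have : Nat.Coprime (p ^ k) (5 ^ n) :=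
      Nat.Coprime.pow _ _ ((Nat.coprime_primes hp (by norm_num)).2 hp5)
    exact_mod_cast this.isCoprime
  have h5 := c5.dvd_of_dvd_mul_left h4
  have h6 : (p : ℤ) ∣ (5 ^ m * t.choose n - N) := by
    by_contra hc
    apply hn
    have c : IsCoprime ((p ^ k : ℕ) : ℤ) (5 ^ m * t.choose n - N) := by
      push_cast
      apply IsCoprime.pow_left
      exact ((Nat.prime_iff_prime_int.1 hp).coprime_iff_not_dvd).2 hc
    have := c.dvd_of_dvd_mul_right h5
    exact_mod_cast this
  have h7 := (CharP.intCast_eq_zero_iff K p _).2 h6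
  push_cast at h7
  exact sub_eq_zero.1 h7

lemma hermiteF {K : Type*} [Field K] [Fintype K] (p k : ℕ) (hp : p.Prime) (hp5 : p ≠ 5) [CharP K p]
    (hK : Fintype.card K = p ^ k) (A B C : K)
    (hf : Function.Bijective (fun x : K => x ^ 5 + A * x ^ 3 + B * x ^ 2 + C * x))
    (s : ℕ) (ht : (p ^ k + s) % 5 = 0) (hs : s + 2 < p ^ k) :
    ∃ c : ℕ → K, (∀ (n m : ℕ) (N : ℤ), ¬ p ^ k ∣ n.factorial →
      5 ^ m * ∏ i ∈ Finset.range n, ((s : ℤ) - 5 * i) = 5 ^ n * (n.factorial : ℤ) * N →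
      (5 : K) ^ m * c n = (N : K)) ∧
    ∑ n ∈ Finset.range ((s + 1) / 2 + 1), c n *
     ∑ l ∈ Finset.range (n + 1), (if 2 * l ≤ (s + 1) - 2 * n then
      ((n.choose l : ℕ) : K) * (((n - l).choose ((s + 1) - 2 * n - 2 * l) : ℕ) : K) *
        C ^ l * B ^ ((s + 1) - 2 * n - 2 * l) * A ^ (n - l - ((s + 1) - 2 * n - 2 * l)) else 0) = 0 := by
  obtain ⟨t, ht⟩ := Nat.dvd_of_mod_eq_zero ht
  refine ⟨fun n => ((t.choose n : ℕ) : K), ?_, ?_⟩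
  · intro n m N hn h
    exact chooseK p k hp hp5 s t ht.symm n hn m N h
  · rw [← phi_coeff]
    exact hermiteE A B C hf s t (by rw [hK]; exact ht.symm) (by rw [hK]; exact hs)


set_option maxHeartbeats 2000000 in
lemma e3 {K : Type*} [Field K] [Fintype K] (p k : ℕ) (hp : p.Prime) (hp5 : p ≠ 5) [CharP K p]
    (hK : Fintype.card K = p ^ k) (A B C : K) (h5 : (5 : K) ≠ 0)
    (hf : Function.Bijective (fun x : K => x ^ 5 + A * x ^ 3 + B * x ^ 2 + C * x))
    (ht : p ^ k % 5 = 2) (hs : 5 < p ^ k) (hnd : ¬ p ^ k ∣ Nat.factorial 2) :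
    (15)*C^1 + (-3)*A^2 = 0 := by
  obtain ⟨c, hc, h⟩ := hermiteF p k hp hp5 hK _ _ _ hf 3 (by omega) (by omega)
  simp [Finset.sum_range_succ, -mul_eq_zero] at h
  try simp [Nat.choose, -mul_eq_zero] at h
  have c1 := hc 1 1 (3) (fun hh => hnd (hh.trans (Nat.factorial_dvd_factorial (by norm_num)))) (by norm_num [Finset.prod_range_succ, Nat.factorial])
  have c2 := hc 2 2 (-3) (fun hh => hnd (hh.trans (Nat.factorial_dvd_factorial (by norm_num)))) (by norm_num [Finset.prod_range_succ, Nat.factorial])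
  push_cast at c1 c2
  refine (mul_eq_zero.1 ?_).resolve_left (pow_ne_zero 0 h5)
  linear_combination 5^2 * h - 5^1 * ((1)*C^1) * c1 - 5^0 * ((1)*A^2) * c2

set_option maxHeartbeats 2000000 in
lemma e8 {K : Type*} [Field K] [Fintype K] (p k : ℕ) (hp : p.Prime) (hp5 : p ≠ 5) [CharP K p]
    (hK : Fintype.card K = p ^ k) (A B C : K) (h5 : (5 : K) ≠ 0)
    (hf : Function.Bijective (fun x : K => x ^ 5 + A * x ^ 3 + B * x ^ 2 + C * x))
    (ht : p ^ k % 5 = 2) (hs : 10 < p ^ k) (hnd : ¬ p ^ k ∣ Nat.factorial 4) :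
    (-40)*B^3 + (-240)*A^1*B^1*C^1 + (56)*A^3*B^1 = 0 := by
  obtain ⟨c, hc, h⟩ := hermiteF p k hp hp5 hK _ _ _ hf 8 (by omega) (by omega)
  simp [Finset.sum_range_succ, -mul_eq_zero] at h
  try simp [Nat.choose, -mul_eq_zero] at h
  have c3 := hc 3 3 (-8) (fun hh => hnd (hh.trans (Nat.factorial_dvd_factorial (by norm_num)))) (by norm_num [Finset.prod_range_succ, Nat.factorial])
  have c4 := hc 4 4 (14) (fun hh => hnd (hh.trans (Nat.factorial_dvd_factorial (by norm_num)))) (by norm_num [Finset.prod_range_succ, Nat.factorial])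
  push_cast at c3 c4
  refine (mul_eq_zero.1 ?_).resolve_left (pow_ne_zero 0 h5)
  linear_combination 5^4 * h - 5^1 * ((1)*B^3 + (6)*A^1*B^1*C^1) * c3 - 5^0 * ((4)*A^3*B^1) * c4

set_option maxHeartbeats 2000000 in
lemma e13u {K : Type*} [Field K] [Fintype K] (p k : ℕ) (hp : p.Prime) (hp5 : p ≠ 5) [CharP K p]
    (hK : Fintype.card K = p ^ k) (u : K) (h5 : (5 : K) ≠ 0)
    (hf : Function.Bijective (fun x : K => x ^ 5 + (5*u^2) * x ^ 3 + (5*u^3) * x ^ 2 + (5*u^4) * x))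
    (ht : p ^ k % 5 = 2) (hs : 15 < p ^ k) (hnd : ¬ p ^ k ∣ Nat.factorial 7) :
    (26)*u^14 = 0 := by
  obtain ⟨c, hc, h⟩ := hermiteF p k hp hp5 hK _ _ _ hf 13 (by omega) (by omega)
  simp [Finset.sum_range_succ, -mul_eq_zero] at h
  try simp [Nat.choose, -mul_eq_zero] at h
  have c4 := hc 4 4 (-26) (fun hh => hnd (hh.trans (Nat.factorial_dvd_factorial (by norm_num)))) (by norm_num [Finset.prod_range_succ, Nat.factorial])
  have c5 := hc 5 6 (182) (fun hh => hnd (hh.trans (Nat.factorial_dvd_factorial (by norm_num)))) (by norm_num [Finset.prod_range_succ, Nat.factorial])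
  have c6 := hc 6 7 (-364) (fun hh => hnd (hh.trans (Nat.factorial_dvd_factorial (by norm_num)))) (by norm_num [Finset.prod_range_succ, Nat.factorial])
  have c7 := hc 7 8 (884) (fun hh => hnd (hh.trans (Nat.factorial_dvd_factorial (by norm_num)))) (by norm_num [Finset.prod_range_succ, Nat.factorial])
  push_cast at c4 c5 c6 c7
  refine (mul_eq_zero.1 ?_).resolve_left (pow_ne_zero 8 h5)
  linear_combination 5^8 * h - 5^4 * ((6250)*u^14) * c4 - 5^2 * ((140625)*u^14) * c5 - 5^1 * ((328125)*u^14) * c6 - 5^0 * ((78125)*u^14) * c7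

set_option maxHeartbeats 2000000 in
lemma e28u {K : Type*} [Field K] [Fintype K] (p k : ℕ) (hp : p.Prime) (hp5 : p ≠ 5) [CharP K p]
    (hK : Fintype.card K = p ^ k) (u : K) (h5 : (5 : K) ≠ 0)
    (hf : Function.Bijective (fun x : K => x ^ 5 + (5*u^2) * x ^ 3 + (5*u^3) * x ^ 2 + (5*u^4) * x))
    (ht : p ^ k % 5 = 2) (hs : 30 < p ^ k) (hnd : ¬ p ^ k ∣ Nat.factorial 14) :
    (-1167572)*u^29 = 0 := by
  obtain ⟨c, hc, h⟩ := hermiteF p k hp hp5 hK _ _ _ hf 28 (by omega) (by omega)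
  simp [Finset.sum_range_succ, -mul_eq_zero] at h
  try simp [Nat.choose, -mul_eq_zero] at h
  have c8 := hc 8 9 (6279) (fun hh => hnd (hh.trans (Nat.factorial_dvd_factorial (by norm_num)))) (by norm_num [Finset.prod_range_succ, Nat.factorial])
  have c9 := hc 9 10 (-8372) (fun hh => hnd (hh.trans (Nat.factorial_dvd_factorial (by norm_num)))) (by norm_num [Finset.prod_range_succ, Nat.factorial])
  have c10 := hc 10 12 (71162) (fun hh => hnd (hh.trans (Nat.factorial_dvd_factorial (by norm_num)))) (by norm_num [Finset.prod_range_succ, Nat.factorial])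
  have c11 := hc 11 13 (-142324) (fun hh => hnd (hh.trans (Nat.factorial_dvd_factorial (by norm_num)))) (by norm_num [Finset.prod_range_succ, Nat.factorial])
  have c12 := hc 12 14 (320229) (fun hh => hnd (hh.trans (Nat.factorial_dvd_factorial (by norm_num)))) (by norm_num [Finset.prod_range_succ, Nat.factorial])
  have c13 := hc 13 15 (-788256) (fun hh => hnd (hh.trans (Nat.factorial_dvd_factorial (by norm_num)))) (by norm_num [Finset.prod_range_succ, Nat.factorial])
  have c14 := hc 14 16 (2083248) (fun hh => hnd (hh.trans (Nat.factorial_dvd_factorial (by norm_num)))) (by norm_num [Finset.prod_range_succ, Nat.factorial])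
  push_cast at c8 c9 c10 c11 c12 c13 c14
  refine (mul_eq_zero.1 ?_).resolve_left (pow_ne_zero 15 h5)
  linear_combination 5^16 * h - 5^7 * ((43750000)*u^29) * c8 - 5^6 * ((4500000000)*u^29) * c9 - 5^4 * ((81542968750)*u^29) * c10 - 5^3 * ((441503906250)*u^29) * c11 - 5^2 * ((837890625000)*u^29) * c12 - 5^1 * ((539550781250)*u^29) * c13 - 5^0 * ((85449218750)*u^29) * c14

set_option maxHeartbeats 2000000 in
lemma e13B {K : Type*} [Field K] [Fintype K] (p k : ℕ) (hp : p.Prime) (hp5 : p ≠ 5) [CharP K p]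
    (hK : Fintype.card K = p ^ k) (A C : K) (h5 : (5 : K) ≠ 0)
    (hf : Function.Bijective (fun x : K => x ^ 5 + A * x ^ 3 + 0 * x ^ 2 + C * x))
    (ht : p ^ k % 5 = 2) (hs : 15 < p ^ k) (hnd : ¬ p ^ k ∣ Nat.factorial 7) :
    (-65000)*A^1*C^3 + (45500)*A^3*C^2 + (-10920)*A^5*C^1 + (884)*A^7 = 0 := by
  obtain ⟨c, hc, h⟩ := hermiteF p k hp hp5 hK _ _ _ hf 13 (by omega) (by omega)
  simp [Finset.sum_range_succ, -mul_eq_zero] at h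
  try simp [Nat.choose, -mul_eq_zero] at h
  have c4 := hc 4 4 (-26) (fun hh => hnd (hh.trans (Nat.factorial_dvd_factorial (by norm_num)))) (by norm_num [Finset.prod_range_succ, Nat.factorial])
  have c5 := hc 5 6 (182) (fun hh => hnd (hh.trans (Nat.factorial_dvd_factorial (by norm_num)))) (by norm_num [Finset.prod_range_succ, Nat.factorial])
  have c6 := hc 6 7 (-364) (fun hh => hnd (hh.trans (Nat.factorial_dvd_factorial (by norm_num)))) (by norm_num [Finset.prod_range_succ, Nat.factorial])
  have c7 := hc 7 8 (884) (fun hh => hnd (hh.trans (Nat.factorial_dvd_factorial (by norm_num)))) (by norm_num [Finset.prod_range_succ, Nat.factorial])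
  push_cast at c4 c5 c6 c7
  refine (mul_eq_zero.1 ?_).resolve_left (pow_ne_zero 0 h5)
  linear_combination 5^8 * h - 5^4 * ((4)*A^1*C^3) * c4 - 5^2 * ((10)*A^3*C^2) * c5 - 5^1 * ((6)*A^5*C^1) * c6 - 5^0 * ((1)*A^7) * c7

set_option maxHeartbeats 2000000 in
lemma e13uC {K : Type*} [Field K] [Fintype K] (p k : ℕ) (hp : p.Prime) (hp5 : p ≠ 5) [CharP K p]
    (hK : Fintype.card K = p ^ k) (C u : K) (h5 : (5 : K) ≠ 0)
    (hf : Function.Bijective (fun x : K => x ^ 5 + (5*u^2) * x ^ 3 + (5*u^3) * x ^ 2 + C * x))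
    (ht : p ^ k % 5 = 2) (hs : 15 < p ^ k) (hnd : ¬ p ^ k ∣ Nat.factorial 7) :
    (-91650)*u^14 + (16380)*C^1*u^10 + (1040)*C^2*u^6 + (-104)*C^3*u^2 = 0 := by
  obtain ⟨c, hc, h⟩ := hermiteF p k hp hp5 hK _ _ _ hf 13 (by omega) (by omega)
  simp [Finset.sum_range_succ, -mul_eq_zero] at h
  try simp [Nat.choose, -mul_eq_zero] at h
  have c4 := hc 4 4 (-26) (fun hh => hnd (hh.trans (Nat.factorial_dvd_factorial (by norm_num)))) (by norm_num [Finset.prod_range_succ, Nat.factorial])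
  have c5 := hc 5 6 (182) (fun hh => hnd (hh.trans (Nat.factorial_dvd_factorial (by norm_num)))) (by norm_num [Finset.prod_range_succ, Nat.factorial])
  have c6 := hc 6 7 (-364) (fun hh => hnd (hh.trans (Nat.factorial_dvd_factorial (by norm_num)))) (by norm_num [Finset.prod_range_succ, Nat.factorial])
  have c7 := hc 7 8 (884) (fun hh => hnd (hh.trans (Nat.factorial_dvd_factorial (by norm_num)))) (by norm_num [Finset.prod_range_succ, Nat.factorial])
  push_cast at c4 c5 c6 c7
  refine (mul_eq_zero.1 ?_).resolve_left (pow_ne_zero 5 h5)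
  linear_combination 5^8 * h - 5^4 * ((150)*C^2*u^6 + (20)*C^3*u^2) * c4 - 5^2 * ((15625)*u^14 + (18750)*C^1*u^10 + (1250)*C^2*u^6) * c5 - 5^1 * ((234375)*u^14 + (18750)*C^1*u^10) * c6 - 5^0 * ((78125)*u^14) * c7

set_option maxHeartbeats 2000000 in
lemma e43C {K : Type*} [Field K] [Fintype K] (p k : ℕ) (hp : p.Prime) (hp5 : p ≠ 5) [CharP K p]
    (hK : Fintype.card K = p ^ k) (C : K) (h5 : (5 : K) ≠ 0)
    (hf : Function.Bijective (fun x : K => x ^ 5 + 0 * x ^ 3 + 0 * x ^ 2 + C * x))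
    (ht : p ^ k % 5 = 2) (hs : 45 < p ^ k) (hnd : ¬ p ^ k ∣ Nat.factorial 11) :
    (1709981)*C^11 = 0 := by
  obtain ⟨c, hc, h⟩ := hermiteF p k hp hp5 hK _ _ _ hf 43 (by omega) (by omega)
  simp [Finset.sum_range_succ, -mul_eq_zero] at h
  try simp [Nat.choose, -mul_eq_zero] at h
  have c11 := hc 11 13 (1709981) (fun hh => hnd (hh.trans (Nat.factorial_dvd_factorial (by norm_num)))) (by norm_num [Finset.prod_range_succ, Nat.factorial])
  push_cast at c11
  refine (mul_eq_zero.1 ?_).resolve_left (pow_ne_zero 0 h5)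
  linear_combination 5^13 * h - 5^0 * ((1)*C^11) * c11

set_option maxHeartbeats 2000000 in
lemma e2 {K : Type*} [Field K] [Fintype K] (p k : ℕ) (hp : p.Prime) (hp5 : p ≠ 5) [CharP K p]
    (hK : Fintype.card K = p ^ k) (A B C : K) (h5 : (5 : K) ≠ 0)
    (hf : Function.Bijective (fun x : K => x ^ 5 + A * x ^ 3 + B * x ^ 2 + C * x))
    (ht : p ^ k % 5 = 3) (hs : 4 < p ^ k) (hnd : ¬ p ^ k ∣ Nat.factorial 1) :
    (2)*B^1 = 0 := by
  obtain ⟨c, hc, h⟩ := hermiteF p k hp hp5 hK _ _ _ hf 2 (by omega) (by omega)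
  simp [Finset.sum_range_succ, -mul_eq_zero] at h
  try simp [Nat.choose, -mul_eq_zero] at h
  have c1 := hc 1 1 (2) (fun hh => hnd (hh.trans (Nat.factorial_dvd_factorial (by norm_num)))) (by norm_num [Finset.prod_range_succ, Nat.factorial])
  push_cast at c1
  refine (mul_eq_zero.1 ?_).resolve_left (pow_ne_zero 0 h5)
  linear_combination 5^1 * h - 5^0 * ((1)*B^1) * c1

set_option maxHeartbeats 2000000 in
lemma e7 {K : Type*} [Field K] [Fintype K] (p k : ℕ) (hp : p.Prime) (hp5 : p ≠ 5) [CharP K p]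
    (hK : Fintype.card K = p ^ k) (A C : K) (h5 : (5 : K) ≠ 0)
    (hf : Function.Bijective (fun x : K => x ^ 5 + A * x ^ 3 + 0 * x ^ 2 + C * x))
    (ht : p ^ k % 5 = 3) (hs : 9 < p ^ k) (hnd : ¬ p ^ k ∣ Nat.factorial 4) :
    (175)*C^2 + (-105)*A^2*C^1 + (14)*A^4 = 0 := by
  obtain ⟨c, hc, h⟩ := hermiteF p k hp hp5 hK _ _ _ hf 7 (by omega) (by omega)
  simp [Finset.sum_range_succ, -mul_eq_zero] at h
  try simp [Nat.choose, -mul_eq_zero] at h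
  have c2 := hc 2 2 (7) (fun hh => hnd (hh.trans (Nat.factorial_dvd_factorial (by norm_num)))) (by norm_num [Finset.prod_range_succ, Nat.factorial])
  have c3 := hc 3 3 (-7) (fun hh => hnd (hh.trans (Nat.factorial_dvd_factorial (by norm_num)))) (by norm_num [Finset.prod_range_succ, Nat.factorial])
  have c4 := hc 4 4 (14) (fun hh => hnd (hh.trans (Nat.factorial_dvd_factorial (by norm_num)))) (by norm_num [Finset.prod_range_succ, Nat.factorial])
  push_cast at c2 c3 c4
  refine (mul_eq_zero.1 ?_).resolve_left (pow_ne_zero 0 h5)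
  linear_combination 5^4 * h - 5^2 * ((1)*C^2) * c2 - 5^1 * ((3)*A^2*C^1) * c3 - 5^0 * ((1)*A^4) * c4

set_option maxHeartbeats 2000000 in
lemma e17u {K : Type*} [Field K] [Fintype K] (p k : ℕ) (hp : p.Prime) (hp5 : p ≠ 5) [CharP K p]
    (hK : Fintype.card K = p ^ k) (u : K) (h5 : (5 : K) ≠ 0)
    (hf : Function.Bijective (fun x : K => x ^ 5 + (5*u^1) * x ^ 3 + 0 * x ^ 2 + (10*u^2) * x))
    (ht : p ^ k % 5 = 3) (hs : 19 < p ^ k) (hnd : ¬ p ^ k ∣ Nat.factorial 9) :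
    (17)*u^9 = 0 := by
  obtain ⟨c, hc, h⟩ := hermiteF p k hp hp5 hK _ _ _ hf 17 (by omega) (by omega)
  simp [Finset.sum_range_succ, -mul_eq_zero] at h
  try simp [Nat.choose, -mul_eq_zero] at h
  have c5 := hc 5 6 (-357) (fun hh => hnd (hh.trans (Nat.factorial_dvd_factorial (by norm_num)))) (by norm_num [Finset.prod_range_succ, Nat.factorial])
  have c6 := hc 6 7 (476) (fun hh => hnd (hh.trans (Nat.factorial_dvd_factorial (by norm_num)))) (by norm_num [Finset.prod_range_succ, Nat.factorial])
  have c7 := hc 7 8 (-884) (fun hh => hnd (hh.trans (Nat.factorial_dvd_factorial (by norm_num)))) (by norm_num [Finset.prod_range_succ, Nat.factorial])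
  have c8 := hc 8 9 (1989) (fun hh => hnd (hh.trans (Nat.factorial_dvd_factorial (by norm_num)))) (by norm_num [Finset.prod_range_succ, Nat.factorial])
  have c9 := hc 9 10 (-5083) (fun hh => hnd (hh.trans (Nat.factorial_dvd_factorial (by norm_num)))) (by norm_num [Finset.prod_range_succ, Nat.factorial])
  push_cast at c5 c6 c7 c8 c9
  refine (mul_eq_zero.1 ?_).resolve_left (pow_ne_zero 10 h5)
  linear_combination 5^10 * h - 5^4 * ((250000)*u^9) * c5 - 5^3 * ((2500000)*u^9) * c6 - 5^2 * ((6562500)*u^9) * c7 - 5^1 * ((6250000)*u^9) * c8 - 5^0 * ((1953125)*u^9) * c9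

set_option maxHeartbeats 2000000 in
lemma e37u {K : Type*} [Field K] [Fintype K] (p k : ℕ) (hp : p.Prime) (hp5 : p ≠ 5) [CharP K p]
    (hK : Fintype.card K = p ^ k) (u : K) (h5 : (5 : K) ≠ 0)
    (hf : Function.Bijective (fun x : K => x ^ 5 + (5*u^1) * x ^ 3 + 0 * x ^ 2 + (10*u^2) * x))
    (ht : p ^ k % 5 = 3) (hs : 39 < p ^ k) (hnd : ¬ p ^ k ∣ Nat.factorial 19) :
    (1152624)*u^19 = 0 := by
  obtain ⟨c, hc, h⟩ := hermiteF p k hp hp5 hK _ _ _ hf 37 (by omega) (by omega)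
  simp [Finset.sum_range_succ, -mul_eq_zero] at h
  try simp [Nat.choose, -mul_eq_zero] at h
  have c10 := hc 10 12 (332112) (fun hh => hnd (hh.trans (Nat.factorial_dvd_factorial (by norm_num)))) (by norm_num [Finset.prod_range_succ, Nat.factorial])
  have c11 := hc 11 13 (-392496) (fun hh => hnd (hh.trans (Nat.factorial_dvd_factorial (by norm_num)))) (by norm_num [Finset.prod_range_succ, Nat.factorial])
  have c12 := hc 12 14 (588744) (fun hh => hnd (hh.trans (Nat.factorial_dvd_factorial (by norm_num)))) (by norm_num [Finset.prod_range_succ, Nat.factorial])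
  have c13 := hc 13 15 (-1041624) (fun hh => hnd (hh.trans (Nat.factorial_dvd_factorial (by norm_num)))) (by norm_num [Finset.prod_range_succ, Nat.factorial])
  have c14 := hc 14 16 (2083248) (fun hh => hnd (hh.trans (Nat.factorial_dvd_factorial (by norm_num)))) (by norm_num [Finset.prod_range_succ, Nat.factorial])
  have c15 := hc 15 18 (-22915728) (fun hh => hnd (hh.trans (Nat.factorial_dvd_factorial (by norm_num)))) (by norm_num [Finset.prod_range_succ, Nat.factorial])
  have c16 := hc 16 19 (54424854) (fun hh => hnd (hh.trans (Nat.factorial_dvd_factorial (by norm_num)))) (by norm_num [Finset.prod_range_succ, Nat.factorial])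
  have c17 := hc 17 20 (-137662866) (fun hh => hnd (hh.trans (Nat.factorial_dvd_factorial (by norm_num)))) (by norm_num [Finset.prod_range_succ, Nat.factorial])
  have c18 := hc 18 21 (367100976) (fun hh => hnd (hh.trans (Nat.factorial_dvd_factorial (by norm_num)))) (by norm_num [Finset.prod_range_succ, Nat.factorial])
  have c19 := hc 19 22 (-1024018512) (fun hh => hnd (hh.trans (Nat.factorial_dvd_factorial (by norm_num)))) (by norm_num [Finset.prod_range_succ, Nat.factorial])
  push_cast at c10 c11 c12 c13 c14 c15 c16 c17 c18 c19
  refine (mul_eq_zero.1 ?_).resolve_left (pow_ne_zero 20 h5)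
  linear_combination 5^22 * h - 5^10 * ((50000000000)*u^19) * c10 - 5^9 * ((2062500000000)*u^19) * c11 - 5^8 * ((24750000000000)*u^19) * c12 - 5^7 * ((134062500000000)*u^19) * c13 - 5^6 * ((391015625000000)*u^19) * c14 - 5^4 * ((666503906250000)*u^19) * c15 - 5^3 * ((683593750000000)*u^19) * c16 - 5^2 * ((415039062500000)*u^19) * c17 - 5^1 * ((137329101562500)*u^19) * c18 - 5^0 * ((19073486328125)*u^19) * c19

set_option maxHeartbeats 2000000 in
lemma e17 {K : Type*} [Field K] [Fintype K] (p k : ℕ) (hp : p.Prime) (hp5 : p ≠ 5) [CharP K p]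
    (hK : Fintype.card K = p ^ k) (A C : K) (h5 : (5 : K) ≠ 0)
    (hf : Function.Bijective (fun x : K => x ^ 5 + A * x ^ 3 + 0 * x ^ 2 + C * x))
    (ht : p ^ k % 5 = 3) (hs : 19 < p ^ k) (hnd : ¬ p ^ k ∣ Nat.factorial 9) :
    (-1115625)*A^1*C^4 + (1190000)*A^3*C^3 + (-464100)*A^5*C^2 + (79560)*A^7*C^1 + (-5083)*A^9 = 0 := by
  obtain ⟨c, hc, h⟩ := hermiteF p k hp hp5 hK _ _ _ hf 17 (by omega) (by omega)
  simp [Finset.sum_range_succ, -mul_eq_zero] at h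
  try simp [Nat.choose, -mul_eq_zero] at h
  have c5 := hc 5 6 (-357) (fun hh => hnd (hh.trans (Nat.factorial_dvd_factorial (by norm_num)))) (by norm_num [Finset.prod_range_succ, Nat.factorial])
  have c6 := hc 6 7 (476) (fun hh => hnd (hh.trans (Nat.factorial_dvd_factorial (by norm_num)))) (by norm_num [Finset.prod_range_succ, Nat.factorial])
  have c7 := hc 7 8 (-884) (fun hh => hnd (hh.trans (Nat.factorial_dvd_factorial (by norm_num)))) (by norm_num [Finset.prod_range_succ, Nat.factorial])
  have c8 := hc 8 9 (1989) (fun hh => hnd (hh.trans (Nat.factorial_dvd_factorial (by norm_num)))) (by norm_num [Finset.prod_range_succ, Nat.factorial])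
  have c9 := hc 9 10 (-5083) (fun hh => hnd (hh.trans (Nat.factorial_dvd_factorial (by norm_num)))) (by norm_num [Finset.prod_range_succ, Nat.factorial])
  push_cast at c5 c6 c7 c8 c9
  refine (mul_eq_zero.1 ?_).resolve_left (pow_ne_zero 0 h5)
  linear_combination 5^10 * h - 5^4 * ((5)*A^1*C^4) * c5 - 5^3 * ((20)*A^3*C^3) * c6 - 5^2 * ((21)*A^5*C^2) * c7 - 5^1 * ((8)*A^7*C^1) * c8 - 5^0 * ((1)*A^9) * c9

set_option maxHeartbeats 2000000 in
lemma e27C {K : Type*} [Field K] [Fintype K] (p k : ℕ) (hp : p.Prime) (hp5 : p ≠ 5) [CharP K p]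
    (hK : Fintype.card K = p ^ k) (C : K) (h5 : (5 : K) ≠ 0)
    (hf : Function.Bijective (fun x : K => x ^ 5 + 0 * x ^ 3 + 0 * x ^ 2 + C * x))
    (ht : p ^ k % 5 = 3) (hs : 29 < p ^ k) (hnd : ¬ p ^ k ∣ Nat.factorial 7) :
    (-5049)*C^7 = 0 := by
  obtain ⟨c, hc, h⟩ := hermiteF p k hp hp5 hK _ _ _ hf 27 (by omega) (by omega)
  simp [Finset.sum_range_succ, -mul_eq_zero] at h
  try simp [Nat.choose, -mul_eq_zero] at h
  have c7 := hc 7 8 (-5049) (fun hh => hnd (hh.trans (Nat.factorial_dvd_factorial (by norm_num)))) (by norm_num [Finset.prod_range_succ, Nat.factorial])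
  push_cast at c7
  refine (mul_eq_zero.1 ?_).resolve_left (pow_ne_zero 0 h5)
  linear_combination 5^8 * h - 5^0 * ((1)*C^7) * c7

set_option maxHeartbeats 2000000 in
lemma e1 {K : Type*} [Field K] [Fintype K] (p k : ℕ) (hp : p.Prime) (hp5 : p ≠ 5) [CharP K p]
    (hK : Fintype.card K = p ^ k) (A B C : K) (h5 : (5 : K) ≠ 0)
    (hf : Function.Bijective (fun x : K => x ^ 5 + A * x ^ 3 + B * x ^ 2 + C * x))
    (ht : p ^ k % 5 = 4) (hs : 3 < p ^ k) (hnd : ¬ p ^ k ∣ Nat.factorial 1) :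
    (1)*A^1 = 0 := by
  obtain ⟨c, hc, h⟩ := hermiteF p k hp hp5 hK _ _ _ hf 1 (by omega) (by omega)
  simp [Finset.sum_range_succ, -mul_eq_zero] at h
  try simp [Nat.choose, -mul_eq_zero] at h
  have c1 := hc 1 1 (1) (fun hh => hnd (hh.trans (Nat.factorial_dvd_factorial (by norm_num)))) (by norm_num [Finset.prod_range_succ, Nat.factorial])
  push_cast at c1
  refine (mul_eq_zero.1 ?_).resolve_left (pow_ne_zero 0 h5)
  linear_combination 5^1 * h - 5^0 * ((1)*A^1) * c1

set_option maxHeartbeats 2000000 in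
lemma e6 {K : Type*} [Field K] [Fintype K] (p k : ℕ) (hp : p.Prime) (hp5 : p ≠ 5) [CharP K p]
    (hK : Fintype.card K = p ^ k) (B C : K) (h5 : (5 : K) ≠ 0)
    (hf : Function.Bijective (fun x : K => x ^ 5 + 0 * x ^ 3 + B * x ^ 2 + C * x))
    (ht : p ^ k % 5 = 4) (hs : 8 < p ^ k) (hnd : ¬ p ^ k ∣ Nat.factorial 2) :
    (6)*B^1*C^1 = 0 := by
  obtain ⟨c, hc, h⟩ := hermiteF p k hp hp5 hK _ _ _ hf 6 (by omega) (by omega)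
  simp [Finset.sum_range_succ, -mul_eq_zero] at h
  try simp [Nat.choose, -mul_eq_zero] at h
  have c2 := hc 2 2 (3) (fun hh => hnd (hh.trans (Nat.factorial_dvd_factorial (by norm_num)))) (by norm_num [Finset.prod_range_succ, Nat.factorial])
  push_cast at c2
  refine (mul_eq_zero.1 ?_).resolve_left (pow_ne_zero 0 h5)
  linear_combination 5^2 * h - 5^0 * ((2)*B^1*C^1) * c2

set_option maxHeartbeats 2000000 in
lemma e11 {K : Type*} [Field K] [Fintype K] (p k : ℕ) (hp : p.Prime) (hp5 : p ≠ 5) [CharP K p]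
    (hK : Fintype.card K = p ^ k) (B C : K) (h5 : (5 : K) ≠ 0)
    (hf : Function.Bijective (fun x : K => x ^ 5 + 0 * x ^ 3 + B * x ^ 2 + C * x))
    (ht : p ^ k % 5 = 4) (hs : 13 < p ^ k) (hnd : ¬ p ^ k ∣ Nat.factorial 4) :
    (55)*C^3 + (-11)*B^4 = 0 := by
  obtain ⟨c, hc, h⟩ := hermiteF p k hp hp5 hK _ _ _ hf 11 (by omega) (by omega)
  simp [Finset.sum_range_succ, -mul_eq_zero] at h
  try simp [Nat.choose, -mul_eq_zero] at h
  have c3 := hc 3 3 (11) (fun hh => hnd (hh.trans (Nat.factorial_dvd_factorial (by norm_num)))) (by norm_num [Finset.prod_range_succ, Nat.factorial])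
  have c4 := hc 4 4 (-11) (fun hh => hnd (hh.trans (Nat.factorial_dvd_factorial (by norm_num)))) (by norm_num [Finset.prod_range_succ, Nat.factorial])
  push_cast at c3 c4
  refine (mul_eq_zero.1 ?_).resolve_left (pow_ne_zero 0 h5)
  linear_combination 5^4 * h - 5^1 * ((1)*C^3) * c3 - 5^0 * ((1)*B^4) * c4

set_option maxHeartbeats 2000000 in
lemma e16 {K : Type*} [Field K] [Fintype K] (p k : ℕ) (hp : p.Prime) (hp5 : p ≠ 5) [CharP K p]
    (hK : Fintype.card K = p ^ k) (B C : K) (h5 : (5 : K) ≠ 0)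
    (hf : Function.Bijective (fun x : K => x ^ 5 + 0 * x ^ 3 + B * x ^ 2 + C * x))
    (ht : p ^ k % 5 = 4) (hs : 18 < p ^ k) (hnd : ¬ p ^ k ∣ Nat.factorial 5) :
    (-352)*B^3*C^2 = 0 := by
  obtain ⟨c, hc, h⟩ := hermiteF p k hp hp5 hK _ _ _ hf 16 (by omega) (by omega)
  simp [Finset.sum_range_succ, -mul_eq_zero] at h
  try simp [Nat.choose, -mul_eq_zero] at h
  have c5 := hc 5 6 (-176) (fun hh => hnd (hh.trans (Nat.factorial_dvd_factorial (by norm_num)))) (by norm_num [Finset.prod_range_succ, Nat.factorial])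
  push_cast at c5
  refine (mul_eq_zero.1 ?_).resolve_left (pow_ne_zero 1 h5)
  linear_combination 5^6 * h - 5^0 * ((10)*B^3*C^2) * c5


lemma pk_le (p k n v : ℕ) (h : p ^ k ∣ n.factorial) (hv : ¬ p ^ (v + 1) ∣ n.factorial) : k ≤ v := by
  by_contra hk
  exact hv ((pow_dvd_pow p (by omega)).trans h)

lemma p_le (p k n : ℕ) (hp : p.Prime) (hk : 0 < k) (h : p ^ k ∣ n.factorial) : p ≤ n :=
  (hp.dvd_factorial).1 ((dvd_pow_self p hk.ne').trans h)

lemma nd7 (p k : ℕ) (hp : p.Prime) (hodd : Odd p) (hp5 : p ≠ 5) (hk : 0 < k) (hq : 9 < p ^ k) :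
    ¬ p ^ k ∣ Nat.factorial 7 := by
  intro h
  have h1 := p_le p k 7 hp hk h
  have h2 := hp.two_le
  interval_cases p
  · exact absurd hodd (by decide)
  · have := pk_le 3 k 7 2 h (by decide)
    interval_cases k <;> simp at hq
  · exact absurd hodd (by decide)
  · exact hp5 rfl
  · exact absurd hp (by decide)
  · have := pk_le 7 k 7 1 h (by decide)
    interval_cases k <;> simp at hq

lemma nd9 (p k : ℕ) (hp : p.Prime) (hodd : Odd p) (hp5 : p ≠ 5) (hk : 0 < k) (hq : 9 < p ^ k)
    (h5 : p ^ k % 5 = 3) :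
    ¬ p ^ k ∣ Nat.factorial 9 := by
  intro h
  have h1 := p_le p k 9 hp hk h
  have h2 := hp.two_le
  interval_cases p
  · exact absurd hodd (by decide)
  · have := pk_le 3 k 9 4 h (by decide)
    interval_cases k <;> simp at hq h5
  · exact absurd hodd (by decide)
  · exact hp5 rfl
  · exact absurd hp (by decide)
  · have := pk_le 7 k 9 1 h (by decide)
    interval_cases k <;> simp at hq
  · exact absurd hp (by decide)
  · exact absurd hp (by decide)

lemma nz_of {K : Type*} [Field K] (p : ℕ) [CharP K p] (r : ℕ) (h : ¬ p ∣ r) : (r : K) ≠ 0 :=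
  fun h0 => h ((CharP.cast_eq_zero_iff K p r).1 h0)

lemma sq_three (k : ℕ) (h : 3 ^ k % 5 = 2) : 3 ^ k % 4 = 3 := by
  have h1 : ∀ m, 3 ^ (4 * m) % 20 = 1 := by
    intro m; induction m with
    | zero => rfl
    | succ n ih => rw [Nat.mul_add, pow_add]; omega
  have := h1 (k / 4)
  have hk : k = 4 * (k / 4) + k % 4 := by omega
  rw [hk, pow_add] at h ⊢
  have h4 : k % 4 < 4 := Nat.mod_lt _ (by norm_num)
  interval_cases (k % 4) <;> omega

lemma fwd2 {K : Type*} [Field K] [Fintype K] (p k : ℕ) (hp : p.Prime) (hodd : Odd p) (hp5 : p ≠ 5)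
    [CharP K p] (hk : 0 < k)
    (hK : Fintype.card K = p ^ k) (A B C : K) (h5 : (5 : K) ≠ 0) (h2 : (2 : K) ≠ 0)
    (hf : Function.Bijective (fun x : K => x ^ 5 + A * x ^ 3 + B * x ^ 2 + C * x))
    (hm : p ^ k % 5 = 2) (hq : 15 < p ^ k) : B = 0 ∧ 5 * C = A ^ 2 := by
  have hn7 := nd7 p k hp hodd hp5 hk (by omega)
  have hn4 : ¬ p ^ k ∣ Nat.factorial 4 := fun h => hn7 (h.trans (Nat.factorial_dvd_factorial (by norm_num)))
  have hn2 : ¬ p ^ k ∣ Nat.factorial 2 := fun h => hn7 (h.trans (Nat.factorial_dvd_factorial (by norm_num)))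
  have E3 := e3 p k hp hp5 hK A B C h5 hf hm (by omega) hn2
  have E8 := e8 p k hp hp5 hK A B C h5 hf hm (by omega) hn4
  have E8' : B = 0 ∨ 5 * B ^ 2 = A ^ 3 := by
    have : (2:K) ^ 3 * (B * (5 * B ^ 2 - A ^ 3)) = 0 := by
      linear_combination -E8 - 16 * A * B * E3
    rcases mul_eq_zero.1 ((mul_eq_zero.1 this).resolve_left (pow_ne_zero 3 h2)) with h | h
    · exact Or.inl h
    · exact Or.inr (sub_eq_zero.1 h)
  by_cases h3 : p = 3
  · subst h3
    have h3 : (3 : K) = 0 := by exact_mod_cast (CharP.cast_eq_zero K 3)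
    by_cases hB : B = 0
    · refine ⟨hB, ?_⟩
      subst hB
      have E := e13B 3 k hp hp5 hK A C h5 hf hm (by omega) hn7
      by_cases hA : A = 0
      · subst hA
        have hC : C = 0 := by
          by_cases hq45 : 45 < 3 ^ k
          · have E43 := e43C 3 k hp hp5 hK C h5 hf hm hq45 (by
              intro h
              have := pk_le 3 k 11 4 h (by decide)
              interval_cases k <;> simp at hq45 hm)
            have : C ^ 11 = 0 := by linear_combination -E43 + C ^ 11 * 569994 * h3
            exact pow_eq_zero_iff (by norm_num) |>.1 this
          · have hk3 : k = 3 := by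
              have : k ≤ 3 := by
                by_contra h
                have : 3 ^ 4 ≤ 3 ^ k := Nat.pow_le_pow_right (by norm_num) (by omega)
                omega
              interval_cases k <;> simp at hq ⊢
            subst hk3
            have hS := hermite0 _ hf 14 (by norm_num) (by rw [hK]; norm_num)
            have hx : ∀ x : K, (x ^ 5 + 0 * x ^ 3 + 0 * x ^ 2 + C * x) ^ 14 =
               x^70 + 2*C*x^66 + C^2*x^62 + C^3*x^58 + 2*C^4*x^54 + C^5*x^50
               + C^9*x^34 + 2*C^10*x^30 + C^11*x^26 + C^12*x^22 + 2*C^13*x^18 + C^14*x^14 := by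
              intro x
              have e3 : ∀ a b : K, (a + b) ^ 3 = a ^ 3 + b ^ 3 := by
                intro a b; linear_combination (a^2*b+a*b^2) * h3
              have : (x ^ 5 + 0 * x ^ 3 + 0 * x ^ 2 + C * x) ^ 14 =
                (((x^5 + C * x)^3)^3) * ((x^5+C*x)^3) * (x^5 + C*x)^2 := by ring
              rw [this, e3, e3]; ring
            simp_rw [hx, Finset.sum_add_distrib, mul_assoc, ← Finset.mul_sum] at hS
            simp only [sum_pow_K _ (show 0 < 70 by norm_num), sum_pow_K _ (show 0 < 66 by norm_num),
              sum_pow_K _ (show 0 < 62 by norm_num), sum_pow_K _ (show 0 < 58 by norm_num),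
              sum_pow_K _ (show 0 < 54 by norm_num), sum_pow_K _ (show 0 < 50 by norm_num),
              sum_pow_K _ (show 0 < 34 by norm_num), sum_pow_K _ (show 0 < 30 by norm_num),
              sum_pow_K _ (show 0 < 26 by norm_num), sum_pow_K _ (show 0 < 22 by norm_num),
              sum_pow_K _ (show 0 < 18 by norm_num), sum_pow_K _ (show 0 < 14 by norm_num), hK] at hS
            norm_num at hS
            exact hS
        subst hC; simp
      · -- A nonzero
        have hm1 : ¬ IsSquare (-1 : K) := by
          rw [FiniteField.isSquare_neg_one_iff, hK]
          have := sq_three k hm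
          simpa using this
        have E' : A * ((C + A ^ 2) * ((C - A ^ 2) ^ 2 + A ^ 4)) = 0 := by
          linear_combination E + (21667*A*C^3 - 15167 * A^3*C^2 + 3640*A^5*C - 294*A^7) * h3
        rcases mul_eq_zero.1 ((mul_eq_zero.1 E').resolve_left hA) with h | h
        · linear_combination 5 * h - 2 * A^2 * h3
        · exfalso; apply hm1
          refine ⟨(C - A ^ 2) / A ^ 2, ?_⟩
          field_simp
          linear_combination -h
    · exfalso
      have hAB := E8'.resolve_left hB
      have hA : A ≠ 0 := by
        rintro rfl
        have : (5:K) * B ^ 2 = 0 := by rw [hAB]; ring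
        simp [h5, hB] at this
      obtain ⟨u, hu⟩ : ∃ u, u = B / A := ⟨_, rfl⟩
      have hB' : B = u * A := by rw [hu]; field_simp
      have hA' : A = 5 * u ^ 2 := by
        apply mul_left_cancel₀ (pow_ne_zero 2 hA)
        rw [hB'] at hAB
        linear_combination -hAB
      have hB'' : B = 5 * u ^ 3 := by rw [hB', hA']; ring
      have hu0 : u ≠ 0 := by rintro rfl; apply hB; rw [hB'']; ring
      rw [hA', hB''] at hf
      have E := e13uC 3 k hp hp5 hK C u h5 hf hm (by omega) hn7
      have E' : u ^ 2 * (C ^ 2 * (C - u ^ 4)) = 0 := by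
        linear_combination E + (35*C^3*u^2 - 347 * C^2*u^6 - 5460 * C * u^10+30550*u^14) * h3
      rcases mul_eq_zero.1 ((mul_eq_zero.1 E').resolve_left (pow_ne_zero 2 hu0)) with h | h
      · have hC : C = 0 := by simpa using h
        subst hC
        have := @hf.1 u (-u) (by dsimp only; linear_combination 4 * u^5 * h3)
        have : 2 * u = 0 := by linear_combination this
        simp [h2, hu0] at this
      · have := @hf.1 u 0 (by dsimp only; linear_combination u * h + 4 * u^5 * h3)
        exact hu0 this
  · have h3 : (3 : K) ≠ 0 := by
      exact_mod_cast nz_of (K := K) p 3 (fun h => h3 ((Nat.prime_dvd_prime_iff_eq hp (by norm_num)).1 h))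
    have hC : 5 * C = A ^ 2 := by
      apply mul_left_cancel₀ h3
      linear_combination E3
    refine ⟨?_, hC⟩
    by_contra hB
    have hAB := E8'.resolve_left hB
    have hA : A ≠ 0 := by
      rintro rfl
      have : (5:K) * B ^ 2 = 0 := by rw [hAB]; ring
      simp [h5, hB] at this
    obtain ⟨u, hu⟩ : ∃ u, u = B / A := ⟨_, rfl⟩
    have hB' : B = u * A := by rw [hu]; field_simp
    have hA' : A = 5 * u ^ 2 := by
      apply mul_left_cancel₀ (pow_ne_zero 2 hA)
      rw [hB'] at hAB
      linear_combination -hAB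
    have hB'' : B = 5 * u ^ 3 := by rw [hB', hA']; ring
    have hC' : C = 5 * u ^ 4 := by
      apply mul_left_cancel₀ h5; rw [hC, hA']; ring
    have hu0 : u ≠ 0 := by rintro rfl; apply hB; rw [hB'']; ring
    rw [hA', hB'', hC'] at hf
    by_cases h13 : p = 13
    · subst h13
      have hq' : 30 < 13 ^ k := by
        by_contra h
        have : k ≤ 1 := by
          by_contra h'
          have : 13 ^ 2 ≤ 13 ^ k := Nat.pow_le_pow_right (by norm_num) (by omega)
          omega
        interval_cases k; simp at hm
      have E := e28u 13 k hp hp5 hK u h5 hf hm hq' (by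
        intro h
        have := pk_le 13 k 14 1 h (by decide)
        interval_cases k; simp at hm)
      have : ((1167572 : ℕ) : K) ≠ 0 := nz_of 13 _ (by decide)
      have h0 : ((1167572 : ℕ) : K) * u ^ 29 = 0 := by push_cast; linear_combination -E
      simp [this, hu0] at h0
      exact this (by exact_mod_cast h0)
    · have E := e13u p k hp hp5 hK u h5 hf hm (by omega) hn7
      have h13' : ((13 : ℕ) : K) ≠ 0 := nz_of p 13 (fun h => h13 ((Nat.prime_dvd_prime_iff_eq hp (by norm_num)).1 h))
      have h0 : 2 * (((13 : ℕ) : K) * u ^ 14) = 0 := by push_cast; linear_combination E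
      have h0 := (mul_eq_zero.1 h0).resolve_left h2
      have h0 := (mul_eq_zero.1 h0).resolve_left h13'
      exact hu0 (pow_eq_zero_iff (by norm_num) |>.1 h0)

lemma fwd3a {K : Type*} [Field K] [Fintype K] (p k : ℕ) (hp : p.Prime) (hodd : Odd p) (hp5 : p ≠ 5)
    [CharP K p] (hk : 0 < k)
    (hK : Fintype.card K = p ^ k) (A B C : K) (h5 : (5 : K) ≠ 0) (h2 : (2 : K) ≠ 0)
    (hf : Function.Bijective (fun x : K => x ^ 5 + A * x ^ 3 + B * x ^ 2 + C * x))
    (hm : p ^ k % 5 = 3) (hq : 9 < p ^ k) : B = 0 ∧ (p ≠ 7 → 5 * C = A ^ 2 ∨ 5 * C = 2 * A ^ 2) := by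
  have hn9 := nd9 p k hp hodd hp5 hk hq hm
  have hn4 : ¬ p ^ k ∣ Nat.factorial 4 := fun h => hn9 (h.trans (Nat.factorial_dvd_factorial (by norm_num)))
  have hn1 : ¬ p ^ k ∣ Nat.factorial 1 := fun h => hn9 (h.trans (Nat.factorial_dvd_factorial (by norm_num)))
  have E2 := e2 p k hp hp5 hK A B C h5 hf hm (by omega) hn1
  have hB : B = 0 := by simpa [h2] using E2
  subst hB
  refine ⟨rfl, fun h7 => ?_⟩
  have E7 := e7 p k hp hp5 hK A C h5 hf hm hq hn4
  have h7 : ((7 : ℕ) : K) ≠ 0 := nz_of p 7 (fun h => h7 ((Nat.prime_dvd_prime_iff_eq hp (by norm_num)).1 h))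
  have : ((7 : ℕ) : K) * ((5 * C - A ^ 2) * (5 * C - 2 * A ^ 2)) = 0 := by
    push_cast; linear_combination E7
  rcases mul_eq_zero.1 ((mul_eq_zero.1 this).resolve_left h7) with h | h
  · exact Or.inl (sub_eq_zero.1 h)
  · exact Or.inr (sub_eq_zero.1 h)

lemma fwd3 {K : Type*} [Field K] [Fintype K] (p k : ℕ) (hp : p.Prime) (hodd : Odd p) (hp5 : p ≠ 5)
    [CharP K p] (hk : 0 < k)
    (hK : Fintype.card K = p ^ k) (A B C : K) (h5 : (5 : K) ≠ 0) (h2 : (2 : K) ≠ 0)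
    (hf : Function.Bijective (fun x : K => x ^ 5 + A * x ^ 3 + B * x ^ 2 + C * x))
    (hm : p ^ k % 5 = 3) (hq : 19 < p ^ k) : B = 0 ∧ 5 * C = A ^ 2 := by
  have hn9 := nd9 p k hp hodd hp5 hk (by omega) hm
  obtain ⟨hB, hAC⟩ := fwd3a p k hp hodd hp5 hk hK A B C h5 h2 hf hm (by omega)
  subst hB
  refine ⟨rfl, ?_⟩
  by_cases h7 : p = 7
  · subst h7
    have h70 : (7 : K) = 0 := by exact_mod_cast (CharP.cast_eq_zero K 7)
    have E := e17 7 k hp hp5 hK A C h5 hf hm hq hn9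
    have E' : A ^ 7 * (5 * C - A ^ 2) = 0 := by
      linear_combination E - (-159375*A^1*C^4 + (170000)*A^3*C^3 + (-66300)*A^5*C^2 + 11365*A^7*C - 726*A^9) * h70
    rcases mul_eq_zero.1 E' with h | h
    · have hA : A = 0 := by simpa using h
      subst hA
      have hq2 : 29 < 7 ^ k := by
        by_contra h
        have : k ≤ 1 := by
          by_contra h'
          have : 7 ^ 2 ≤ 7 ^ k := Nat.pow_le_pow_right (by norm_num) (by omega)
          omega
        interval_cases k; simp at hm
      have E := e27C 7 k hp hp5 hK C h5 hf hm hq2 (nd7 7 k hp hodd hp5 hk (by omega))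
      have : ((5049 : ℕ) : K) ≠ 0 := nz_of 7 _ (by decide)
      have h0 : ((5049 : ℕ) : K) * C ^ 7 = 0 := by push_cast; linear_combination -E
      have h0 := (mul_eq_zero.1 h0).resolve_left this
      have hC : C = 0 := by simpa using h0
      subst hC; simp
    · exact sub_eq_zero.1 h
  · rcases hAC h7 with h | h
    · exact h
    · obtain ⟨u, hu⟩ : ∃ u, u = A / 5 := ⟨_, rfl⟩
      have hA : A = 5 * u ^ 1 := by rw [hu]; field_simp
      have hC : C = 10 * u ^ 2 := by
        apply mul_left_cancel₀ h5; rw [h, hA]; ring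
      have hu0 : u = 0 := by
        rw [hA, hC] at hf
        by_cases h17 : p = 17
        · subst h17
          have hk2 : 2 ≤ k := by
            by_contra h
            have : k ≤ 1 := by omega
            interval_cases k; simp at hm
          have hq2 : 39 < 17 ^ k := by
            have : 17 ^ 2 ≤ 17 ^ k := Nat.pow_le_pow_right (by norm_num) hk2
            omega
          have E := e37u 17 k hp hp5 hK u h5 hf hm hq2 (by
            intro h
            have := pk_le 17 k 19 1 h (by decide)
            omega)
          have : ((1152624 : ℕ) : K) ≠ 0 := nz_of 17 _ (by decide)
          have h0 : ((1152624 : ℕ) : K) * u ^ 19 = 0 := by push_cast; linear_combination E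
          have h0 := (mul_eq_zero.1 h0).resolve_left this
          exact pow_eq_zero_iff (by norm_num) |>.1 h0
        · have E := e17u p k hp hp5 hK u h5 hf hm hq hn9
          have h17' : ((17 : ℕ) : K) ≠ 0 := nz_of p 17 (fun h => h17 ((Nat.prime_dvd_prime_iff_eq hp (by norm_num)).1 h))
          have h0 : ((17 : ℕ) : K) * u ^ 9 = 0 := by push_cast; linear_combination E
          have h0 := (mul_eq_zero.1 h0).resolve_left h17'
          exact pow_eq_zero_iff (by norm_num) |>.1 h0
      subst hu0
      rw [hA, hC]; ring

lemma fwd4 {K : Type*} [Field K] [Fintype K] (p k : ℕ) (hp : p.Prime) (hodd : Odd p) (hp5 : p ≠ 5)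
    [CharP K p] (hk : 0 < k)
    (hK : Fintype.card K = p ^ k) (A B C : K) (h5 : (5 : K) ≠ 0) (h2 : (2 : K) ≠ 0)
    (hf : Function.Bijective (fun x : K => x ^ 5 + A * x ^ 3 + B * x ^ 2 + C * x))
    (hm : p ^ k % 5 = 4) (hq : 18 < p ^ k) : A = 0 ∧ B = 0 ∧ C = 0 := by
  have hn7 := nd7 p k hp hodd hp5 hk (by omega)
  have hn5 : ¬ p ^ k ∣ Nat.factorial 5 := fun h => hn7 (h.trans (Nat.factorial_dvd_factorial (by norm_num)))
  have hn4 : ¬ p ^ k ∣ Nat.factorial 4 := fun h => hn7 (h.trans (Nat.factorial_dvd_factorial (by norm_num)))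
  have hn2 : ¬ p ^ k ∣ Nat.factorial 2 := fun h => hn7 (h.trans (Nat.factorial_dvd_factorial (by norm_num)))
  have hn1 : ¬ p ^ k ∣ Nat.factorial 1 := fun h => hn7 (h.trans (Nat.factorial_dvd_factorial (by norm_num)))
  have E1 := e1 p k hp hp5 hK A B C h5 hf hm (by omega) hn1
  have hA : A = 0 := by simpa using E1
  subst hA
  refine ⟨rfl, ?_⟩
  have h11 : ((11 : ℕ) : K) ≠ 0 := nz_of p 11 (fun h => by
    have := (Nat.prime_dvd_prime_iff_eq hp (by norm_num)).1 h
    subst this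
    have : 11 ^ k % 5 = 1 := by rw [Nat.pow_mod]; simp
    omega)
  have E11 := e11 p k hp hp5 hK B C h5 hf hm (by omega) hn4
  have E11' : 5 * C ^ 3 = B ^ 4 := by
    have : ((11 : ℕ) : K) * (5 * C ^ 3 - B ^ 4) = 0 := by push_cast; linear_combination E11
    exact sub_eq_zero.1 ((mul_eq_zero.1 this).resolve_left h11)
  have hBC : B = 0 ∨ C = 0 := by
    by_cases h3 : p = 3
    · have E16 := e16 p k hp hp5 hK B C h5 hf hm hq hn5
      have : ((352 : ℕ) : K) ≠ 0 := nz_of p 352 (by subst h3; decide)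
      have h0 : ((352 : ℕ) : K) * (B ^ 3 * C ^ 2) = 0 := by push_cast; linear_combination -E16
      have h0 := (mul_eq_zero.1 h0).resolve_left this
      simpa using h0
    · have h3 : (3 : K) ≠ 0 := by
        exact_mod_cast nz_of (K := K) p 3 (fun h => h3 ((Nat.prime_dvd_prime_iff_eq hp (by norm_num)).1 h))
      have E6 := e6 p k hp hp5 hK B C h5 hf hm (by omega) hn2
      have h0 : 2 * (3 * (B * C)) = 0 := by linear_combination E6
      simpa [h2, h3] using h0
  rcases hBC with h | h
  · subst h; simpa [h5] using E11'
  · subst h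
    have : B ^ 4 = 0 := by rw [← E11']; ring
    exact ⟨by simpa using this, rfl⟩

lemma fwd9 {K : Type*} [Field K] [Fintype K] [CharP K 3]
    (hK : Fintype.card K = 9) (A B C : K) (h5 : (5 : K) ≠ 0)
    (hf : Function.Bijective (fun x : K => x ^ 5 + A * x ^ 3 + B * x ^ 2 + C * x)) :
    A = 0 ∧ B = 0 ∧ (C = 0 ∨ C ^ 2 = -1) := by
  have h3 : (3 : K) = 0 := by exact_mod_cast (CharP.cast_eq_zero K 3)
  have E1 := e1 3 2 (by norm_num) (by norm_num) (by rw [hK]; norm_num) A B C h5 hf (by norm_num) (by norm_num) (by decide)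
  have hA : A = 0 := by simpa using E1
  subst hA
  refine ⟨rfl, ?_⟩
  have e3 : ∀ a b : K, (a + b) ^ 3 = a ^ 3 + b ^ 3 := by
    intro a b; linear_combination (a^2*b+a*b^2) * h3
  have hS := hermite0 _ hf 4 (by norm_num) (by rw [hK]; norm_num)
  have hT := hermite0 _ hf 5 (by norm_num) (by rw [hK]; norm_num)
  have hx : ∀ x : K, (x ^ 5 + 0 * x ^ 3 + B * x ^ 2 + C * x) ^ 4 =
     x ^ 20 + B * x ^ 17 + C * x ^ 16 + B ^ 3 * x ^ 11 + B ^ 4 * x ^ 8 + B ^ 3 * C * x ^ 7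
      + C ^ 3 * x ^ 8 + C ^ 3 * B * x ^ 5 + C ^ 4 * x ^ 4 := by
    intro x
    have : (x ^ 5 + 0 * x ^ 3 + B * x ^ 2 + C * x) ^ 4 = (x ^ 5 + B * x ^ 2 + C * x) ^ 3 * (x ^ 5 + B * x ^ 2 + C * x) := by ring
    rw [this, e3, e3]; ring
  have hy : ∀ x : K, (x ^ 5 + 0 * x ^ 3 + B * x ^ 2 + C * x) ^ 5 =
     x^25 + 2*B*x^22 + 2*C*x^21 + B^2*x^19 + 2*B*C*x^18 + C^2*x^17
     + B^3*(x^16 + 2*B*x^13 + 2*C*x^12 + B^2*x^10 + 2*B*C*x^9 + C^2*x^8)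
     + C^3*(x^13 + 2*B*x^10 + 2*C*x^9 + B^2*x^7 + 2*B*C*x^6 + C^2*x^5) := by
    intro x
    have : (x ^ 5 + 0 * x ^ 3 + B * x ^ 2 + C * x) ^ 5 = (x ^ 5 + B * x ^ 2 + C * x) ^ 3 * (x ^ 5 + B * x ^ 2 + C * x) ^ 2 := by ring
    rw [this, e3, e3]; ring
  have S : ∀ i, 0 < i → ∑ x : K, x ^ i = if 8 ∣ i then -1 else 0 := by
    intro i hi; rw [sum_pow_K i hi, hK]
  simp_rw [hx, Finset.sum_add_distrib, mul_assoc, ← Finset.mul_sum] at hS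
  simp_rw [hy, mul_add, Finset.sum_add_distrib, mul_assoc, ← Finset.mul_sum] at hT
  simp only [S _ (show 0 < 20 by norm_num), S _ (show 0 < 17 by norm_num), S _ (show 0 < 16 by norm_num),
    S _ (show 0 < 11 by norm_num), S _ (show 0 < 8 by norm_num), S _ (show 0 < 7 by norm_num),
    S _ (show 0 < 5 by norm_num), S _ (show 0 < 4 by norm_num)] at hS
  simp only [S _ (show 0 < 25 by norm_num), S _ (show 0 < 22 by norm_num), S _ (show 0 < 21 by norm_num),
    S _ (show 0 < 19 by norm_num), S _ (show 0 < 18 by norm_num), S _ (show 0 < 17 by norm_num),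
    S _ (show 0 < 16 by norm_num), S _ (show 0 < 13 by norm_num), S _ (show 0 < 12 by norm_num),
    S _ (show 0 < 10 by norm_num), S _ (show 0 < 9 by norm_num), S _ (show 0 < 8 by norm_num),
    S _ (show 0 < 7 by norm_num), S _ (show 0 < 6 by norm_num),
    S _ (show 0 < 5 by norm_num)] at hT
  norm_num [-mul_eq_zero] at hS hT
  have hS' : B ^ 4 + C * (C ^ 2 + 1) = 0 := by linear_combination -hS
  have hT' : B ^ 3 * (C ^ 2 + 1) = 0 := by linear_combination -hT
  have hB : B = 0 := by
    rcases mul_eq_zero.1 hT' with h | h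
    · simpa using h
    · rw [h] at hS'; simpa using hS'
  subst hB
  refine ⟨rfl, ?_⟩
  have : C * (C ^ 2 + 1) = 0 := by linear_combination hS'
  rcases mul_eq_zero.1 this with h | h
  · exact Or.inl h
  · exact Or.inr (eq_neg_of_add_eq_zero_left h)

lemma transport {K : Type*} [Field K] [Fintype K] (p : ℕ) [Fact p.Prime] (σ : ZMod p ≃+* K) (a b c : ZMod p) :
    Function.Bijective (fun x : K => x ^ 5 + σ a * x ^ 3 + σ b * x ^ 2 + σ c * x) ↔
    ∀ x y : ZMod p, x ^ 5 + a * x ^ 3 + b * x ^ 2 + c * x = y ^ 5 + a * y ^ 3 + b * y ^ 2 + c * y → x = y := by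
  rw [← Finite.injective_iff_bijective]
  constructor
  · intro h x y hxy
    apply σ.injective
    apply h
    have := congrArg σ hxy
    simpa using this
  · intro h x y hxy
    obtain ⟨x, rfl⟩ := σ.surjective x
    obtain ⟨y, rfl⟩ := σ.surjective y
    rw [h x y]
    apply σ.injective
    simpa using hxy

set_option maxRecDepth 100000 in
lemma dec13 : ∀ A : ZMod 13, (∀ x y : ZMod 13, x ^ 5 + A * x ^ 3 + 0 * x ^ 2 + (3 * A ^ 2) * x = y ^ 5 + A * y ^ 3 + 0 * y ^ 2 + (3 * A ^ 2) * y → x = y) ↔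
    (A = 0 ∨ A = 2 ∨ A = -2 ∨ A = 5 ∨ A = -5 ∨ A = 6 ∨ A = -6) := by decide

set_option maxRecDepth 100000 in
lemma dec7 : ∀ A B : ZMod 7, (∀ x y : ZMod 7, x ^ 5 + A * x ^ 3 + B * x ^ 2 + (3 * A ^ 2) * x = y ^ 5 + A * y ^ 3 + B * y ^ 2 + (3 * A ^ 2) * y → x = y) ↔
    (B = 0 ∨ (A = 0 ∧ (B = 2 ∨ B = -2)) ∨ ((A = 3 ∨ A = 5 ∨ A = 6) ∧ (B = 1 ∨ B = -1))) := by decide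

set_option maxRecDepth 100000 in
lemma dec3 : ∀ A B C : ZMod 3, (∀ x y : ZMod 3, x ^ 5 + A * x ^ 3 + B * x ^ 2 + C * x = y ^ 5 + A * y ^ 3 + B * y ^ 2 + C * y → x = y) ↔
    (B = 0 ∧ A + C + 1 ≠ 0) := by decide

lemma K13 {K : Type*} [Field K] [Fintype K] (hK : Fintype.card K = 13) (A : K) :
    Function.Bijective (fun x : K => x ^ 5 + A * x ^ 3 + 0 * x ^ 2 + (3 * A ^ 2) * x) ↔
    (A = 0 ∨ A = 2 ∨ A = -2 ∨ A = 5 ∨ A = -5 ∨ A = 6 ∨ A = -6) := by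
  have : Fact (Nat.Prime 13) := ⟨by norm_num⟩
  obtain ⟨σ⟩ : Nonempty (ZMod 13 ≃+* K) := ⟨ZMod.ringEquivOfPrime K (by norm_num) hK⟩
  obtain ⟨a, rfl⟩ := σ.surjective A
  have h1 := transport 13 σ a 0 (3 * a ^ 2)
  have h2 := dec13 a
  have e : ∀ b : ZMod 13, σ a = σ b ↔ a = b := fun b => σ.injective.eq_iff
  rw [h2, ← e, ← e, ← e, ← e, ← e, ← e, ← e] at h1
  have m2 : σ 2 = 2 := map_ofNat σ 2
  have m3 : σ 3 = 3 := map_ofNat σ 3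
  have m5 : σ 5 = 5 := map_ofNat σ 5
  have m6 : σ 6 = 6 := map_ofNat σ 6
  simp only [map_neg, map_zero, map_one, map_mul, map_pow, m2, m3, m5, m6] at h1
  exact h1

lemma K7 {K : Type*} [Field K] [Fintype K] (hK : Fintype.card K = 7) (A B : K) :
    Function.Bijective (fun x : K => x ^ 5 + A * x ^ 3 + B * x ^ 2 + (3 * A ^ 2) * x) ↔
    (B = 0 ∨ (A = 0 ∧ (B = 2 ∨ B = -2)) ∨ ((A = 3 ∨ A = 5 ∨ A = 6) ∧ (B = 1 ∨ B = -1))) := by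
  have : Fact (Nat.Prime 7) := ⟨by norm_num⟩
  obtain ⟨σ⟩ : Nonempty (ZMod 7 ≃+* K) := ⟨ZMod.ringEquivOfPrime K (by norm_num) hK⟩
  obtain ⟨a, rfl⟩ := σ.surjective A
  obtain ⟨b, rfl⟩ := σ.surjective B
  have h1 := transport 7 σ a b (3 * a ^ 2)
  have h2 := dec7 a b
  have e : ∀ b : ZMod 7, σ a = σ b ↔ a = b := fun b => σ.injective.eq_iff
  have e' : ∀ c : ZMod 7, σ b = σ c ↔ b = c := fun b => σ.injective.eq_iff
  rw [h2, ← e, ← e, ← e, ← e, ← e', ← e', ← e', ← e', ← e'] at h1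
  have m2 : σ 2 = 2 := map_ofNat σ 2
  have m3 : σ 3 = 3 := map_ofNat σ 3
  have m5 : σ 5 = 5 := map_ofNat σ 5
  have m6 : σ 6 = 6 := map_ofNat σ 6
  simp only [map_neg, map_zero, map_one, map_mul, map_pow, m2, m3, m5, m6] at h1
  exact h1

lemma K3 {K : Type*} [Field K] [Fintype K] (hK : Fintype.card K = 3) (A B C : K) :
    Function.Bijective (fun x : K => x ^ 5 + A * x ^ 3 + B * x ^ 2 + C * x) ↔
    (B = 0 ∧ A + C + 1 ≠ 0) := by
  have : Fact (Nat.Prime 3) := ⟨by norm_num⟩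
  obtain ⟨σ⟩ : Nonempty (ZMod 3 ≃+* K) := ⟨ZMod.ringEquivOfPrime K (by norm_num) hK⟩
  obtain ⟨a, rfl⟩ := σ.surjective A
  obtain ⟨b, rfl⟩ := σ.surjective B
  obtain ⟨c, rfl⟩ := σ.surjective C
  have h1 := transport 3 σ a b c
  rw [dec3 a b c, ← σ.injective.eq_iff, Ne, ← σ.injective.eq_iff] at h1
  simpa using h1

lemma bij5 {K : Type*} [Field K] [Fintype K] (hg : Nat.gcd 5 (Fintype.card K - 1) = 1) :
    Function.Bijective (fun x : K => x ^ 5) := by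
  rw [← Finite.injective_iff_bijective]
  intro x y hxy
  simp only at hxy
  by_cases hy : y = 0
  · subst hy; simpa using hxy
  · have hx : x ≠ 0 := by rintro rfl; exact hy (by simpa using hxy.symm)
    have h1 : (x / y) ^ 5 = 1 := by rw [div_pow, hxy, div_self (pow_ne_zero 5 hy)]
    have h2 := FiniteField.pow_card_sub_one_eq_one (x / y) (div_ne_zero hx hy)
    have h3 := pow_gcd_eq_one.2 ⟨h1, h2⟩
    rw [hg, pow_one] at h3
    exact (div_eq_one_iff_eq hy).1 h3

lemma nsq5aux (u : ℤ) (hu : u = 1 ∨ u = -1) (z : ZMod 5) (hz : z = 2 ∨ z = 3) :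
    ¬ IsSquare ((u : ZMod 5) * z) := by
  rcases hu with rfl | rfl <;> rcases hz with rfl | rfl <;> decide

lemma nsq5 {K : Type*} [Field K] [Fintype K] (hc : ringChar K ≠ 2) (hm : Fintype.card K % 5 = 2 ∨ Fintype.card K % 5 = 3) : ¬ IsSquare (5 : K) := by
  have : Fact (Nat.Prime 5) := ⟨by norm_num⟩
  have := FiniteField.isSquare_odd_prime_iff (F := K) hc (p := 5) (by norm_num)
  rw [show (5 : K) = ((5 : ℕ) : K) by norm_num, this]
  push Not
  have hodd : Fintype.card K % 2 = 1 := FiniteField.odd_card_of_char_ne_two hc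
  have hx : ZMod.χ₄ (Fintype.card K : ZMod 4) = 1 ∨ ZMod.χ₄ (Fintype.card K : ZMod 4) = -1 := by
    rw [ZMod.χ₄_nat_eq_if_mod_four]
    split_ifs <;> simp_all
  have hy : (Fintype.card K : ZMod 5) = 2 ∨ (Fintype.card K : ZMod 5) = 3 := by
    rcases hm with h | h
    · left; rw [← ZMod.natCast_mod, h]; rfl
    · right; rw [← ZMod.natCast_mod, h]; rfl
  rw [quadraticChar_neg_one_iff_not_isSquare]
  exact nsq5aux _ hx _ hy

lemma dickson {K : Type*} [Field K] [Fintype K] (A C : K) (h5 : (5 : K) ≠ 0) (h2 : (2 : K) ≠ 0)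
    (hs : ¬ IsSquare (5 : K)) (hC : 5 * C = A ^ 2) :
    Function.Bijective (fun x : K => x ^ 5 + A * x ^ 3 + 0 * x ^ 2 + C * x) := by
  have key : ∀ r s : K, r ^ 2 = 5 * s ^ 2 → s = 0 := by
    intro r s h
    by_contra hs0
    exact hs ⟨r / s, by field_simp; exact h.symm⟩
  obtain ⟨α, hα⟩ : ∃ α, α = -A / 5 := ⟨_, rfl⟩
  have hA : A = -5 * α := by rw [hα]; field_simp
  have hC' : C = 5 * α ^ 2 := by
    apply mul_left_cancel₀ h5; rw [hC, hA]; ring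
  subst hA hC'
  rw [← Finite.injective_iff_bijective]
  intro x y hxy
  simp only at hxy
  by_contra hne
  have h1 : (x - y) * ((x ^ 2 + y ^ 2 - 3 * α) ^ 2 + (x ^ 2 + y ^ 2 - 3 * α) * (x * y + α) - (x * y + α) ^ 2) = 0 := by
    linear_combination hxy
  have h1 := (mul_eq_zero.1 h1).resolve_left (sub_ne_zero.2 hne)
  have hv : x * y + α = 0 := by
    apply key (2 * (x ^ 2 + y ^ 2 - 3 * α) + (x * y + α))
    linear_combination 4 * h1
  have hu : x ^ 2 + y ^ 2 - 3 * α = 0 := by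
    rw [hv] at h1; simpa using h1
  have hxy0 : x + y = 0 := by
    apply key (x - y)
    linear_combination -4 * hu - 12 * hv
  have hy : y = -x := eq_neg_of_add_eq_zero_right hxy0
  subst hy
  have hx : x ^ 2 = 0 := by linear_combination -hu - 3 * hv
  have hx : x = 0 := by simpa using hx
  subst hx
  simp at hne

lemma bij9 {K : Type*} [Field K] [Fintype K] [CharP K 3] (hK : Fintype.card K = 9) (C : K) (hC : C ^ 2 = -1) :
    Function.Bijective (fun x : K => x ^ 5 + 0 * x ^ 3 + 0 * x ^ 2 + C * x) := by
  have h3 : (3 : K) = 0 := by exact_mod_cast (CharP.cast_eq_zero K 3)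
  have h2 : (2 : K) ≠ 0 := by
    intro h; have : (1 : K) = 0 := by linear_combination h3 - h
    exact one_ne_zero this
  have h8 : ∀ x : K, x ≠ 0 → x ^ 8 = 1 := by
    intro x hx
    have := FiniteField.pow_card_sub_one_eq_one x hx
    rwa [hK] at this
  have hnz : ∀ x : K, x ≠ 0 → x ^ 4 + C ≠ 0 := by
    intro x hx h
    apply h2
    linear_combination (x ^ 4 - C) * h - h8 x hx + hC
  have h4 : ∀ x : K, x ≠ 0 → (x ^ 4 + C) ^ 4 = -1 := by
    intro x hx
    have h8 := h8 x hx
    have h16 : x ^ 16 = 1 := by rw [show x ^ 16 = (x^8)^2 by ring, h8]; ring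
    have : (x ^ 4 = 1) ∨ (x ^ 4 = -1) := by
      have : (x ^ 4) ^ 2 = 1 := by rw [← h8]; ring
      simpa using this
    rcases this with h | h <;> rw [h]
    · linear_combination (C ^ 2 + 5 + 4*C) * hC  - h3
    · linear_combination (C ^ 2 + 5 - 4*C) * hC - h3
  rw [← Finite.injective_iff_bijective]
  intro x y hxy
  have hxy : x * (x ^ 4 + C) = y * (y ^ 4 + C) := by linear_combination hxy
  by_cases hx : x = 0
  · subst hx
    by_contra hy
    have hy : y ≠ 0 := fun h => hy h.symm
    have : y * (y ^ 4 + C) = 0 := by rw [← hxy]; ring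
    simp [hy, hnz y hy] at this
  by_cases hy : y = 0
  · subst hy
    have : x * (x ^ 4 + C) = 0 := by rw [hxy]; ring
    simp [hx, hnz x hx] at this
  have h := congrArg (fun z => z ^ 4) hxy
  simp only [mul_pow, h4 x hx, h4 y hy] at h
  have h : x ^ 4 = y ^ 4 := by linear_combination -h
  rw [← h] at hxy
  exact mul_right_cancel₀ (hnz x hx) hxy

lemma K_main {K : Type*} [Field K] [Fintype K] (p k : ℕ) (hp : p.Prime) (hodd : Odd p) (hp5 : p ≠ 5)
    [CharP K p] (hk : 0 < k) (hK : Fintype.card K = p ^ k) (hg : Nat.gcd 5 (p ^ k - 1) = 1)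
    (h5 : (5 : K) ≠ 0) (h2 : (2 : K) ≠ 0) (A B C : K) :
    Function.Bijective (fun x : K => x ^ 5 + A * x ^ 3 + B * x ^ 2 + C * x) ↔
    ((A = 0 ∧ B = 0 ∧ C = 0) ∨ ((p ^ k % 5 = 2 ∨ p ^ k % 5 = 3) ∧ 5 * C = A ^ 2 ∧ B = 0) ∨
     (p = 3 ∧ k = 2 ∧ A = 0 ∧ B = 0 ∧ C ^ 2 = -1) ∨
     (p = 3 ∧ k = 1 ∧ B = 0 ∧ A + C + 1 ≠ 0) ∨
     (p = 7 ∧ k = 1 ∧ C = 3 * A ^ 2 ∧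
       ((A = 0 ∧ (B = 2 ∨ B = -2)) ∨ ((A = 3 ∨ A = 5 ∨ A = 6) ∧ (B = 1 ∨ B = -1)))) ∨
     (p = 13 ∧ k = 1 ∧ B = 0 ∧ C = 3 * A ^ 2 ∧
       (A = 2 ∨ A = -2 ∨ A = 5 ∨ A = -5 ∨ A = 6 ∨ A = -6))) := by
  have hchar : ringChar K ≠ 2 := by
    rw [ringChar.eq K p]; rintro rfl; exact absurd hodd (by decide)
  have hm0 : p ^ k % 5 ≠ 0 := by
    intro h
    have := Nat.Prime.dvd_of_dvd_pow (by norm_num : Nat.Prime 5) (Nat.dvd_of_mod_eq_zero h)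
    exact hp5 ((Nat.prime_dvd_prime_iff_eq (by norm_num) hp).1 this).symm
  have hm1 : p ^ k % 5 ≠ 1 := by
    intro h
    have : 5 ∣ p ^ k - 1 := by omega
    rw [Nat.gcd_eq_left this] at hg; omega
  have hqodd : p ^ k % 2 = 1 := Nat.odd_iff.1 (hodd.pow)
  have hpk : ∀ r, r.Prime → p ^ k = r → p = r ∧ k = 1 := by
    intro r hr h
    have hk1 : k = 1 := by
      rw [← h] at hr
      exact Nat.Prime.eq_one_of_pow hr
    subst hk1
    exact ⟨by simpa using h, rfl⟩
  constructor
  · intro hf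
    have hcases : p ^ k % 5 = 2 ∨ p ^ k % 5 = 3 ∨ p ^ k % 5 = 4 := by omega
    rcases hcases with hm | hm | hm
    · by_cases hq : 15 < p ^ k
      · obtain ⟨hB, hC⟩ := fwd2 p k hp hodd hp5 hk hK A B C h5 h2 hf hm hq
        exact Or.inr (Or.inl ⟨Or.inl hm, hC, hB⟩)
      · have hq7 : p ^ k = 7 := by omega
        obtain ⟨rfl, rfl⟩ := hpk 7 (by norm_num) hq7
        have h7 : (7 : K) = 0 := by exact_mod_cast (CharP.cast_eq_zero K 7)
        have E := e3 7 1 hp hp5 hK A B C h5 hf hm (by norm_num) (by decide)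
        have hC : C = 3 * A ^ 2 := by linear_combination E - (2 * C) * h7
        subst hC
        rcases (K7 (by simpa using hK) A B).1 hf with h | h
        · refine Or.inr (Or.inl ⟨Or.inl hm, ?_, h⟩)
          linear_combination 2 * A ^ 2 * h7
        · exact Or.inr (Or.inr (Or.inr (Or.inr (Or.inl ⟨rfl, rfl, rfl, h⟩))))
    · by_cases hq : 19 < p ^ k
      · obtain ⟨hB, hC⟩ := fwd3 p k hp hodd hp5 hk hK A B C h5 h2 hf hm hq
        exact Or.inr (Or.inl ⟨Or.inr hm, hC, hB⟩)
      · have hq' : p ^ k = 3 ∨ p ^ k = 13 := by omega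
        rcases hq' with hq' | hq'
        · obtain ⟨rfl, rfl⟩ := hpk 3 (by norm_num) hq'
          exact Or.inr (Or.inr (Or.inr (Or.inl ⟨rfl, rfl, (K3 (by simpa using hK) A B C).1 hf⟩)))
        · obtain ⟨rfl, rfl⟩ := hpk 13 (by norm_num) hq'
          have h13 : (13 : K) = 0 := by exact_mod_cast (CharP.cast_eq_zero K 13)
          obtain ⟨rfl, h⟩ := fwd3a 13 1 hp hodd hp5 hk hK A B C h5 h2 hf hm (by norm_num)
          rcases h (by norm_num) with h | h
          · exact Or.inr (Or.inl ⟨Or.inr hm, h, rfl⟩)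
          · have hC : C = 3 * A ^ 2 := by
              apply mul_left_cancel₀ h5; linear_combination h - A ^ 2 * h13
            subst hC
            rcases (K13 (by simpa using hK) A).1 hf with h | h
            · left; subst h; simp
            · exact Or.inr (Or.inr (Or.inr (Or.inr (Or.inr ⟨rfl, rfl, rfl, rfl, h⟩))))
    · by_cases hq : 18 < p ^ k
      · exact Or.inl (fwd4 p k hp hodd hp5 hk hK A B C h5 h2 hf hm hq)
      · have hq9 : p ^ k = 9 := by omega
        have hp3 : p = 3 := by
          have : p ∣ 3 ^ 2 := (dvd_pow_self p hk.ne').trans (by rw [hq9]; norm_num)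
          exact (Nat.prime_dvd_prime_iff_eq hp (by norm_num)).1 (hp.dvd_of_dvd_pow this)
        subst hp3
        have hk2 : k = 2 := Nat.pow_right_injective (by norm_num : 2 ≤ 3) (by simpa using hq9)
        subst hk2
        obtain ⟨hA, hB, hC⟩ := fwd9 (by simpa using hK) A B C h5 hf
        rcases hC with hC | hC
        · exact Or.inl ⟨hA, hB, hC⟩
        · exact Or.inr (Or.inr (Or.inl ⟨rfl, rfl, hA, hB, hC⟩))
  · rintro (⟨rfl, rfl, rfl⟩ | ⟨hm, hC, rfl⟩ | ⟨rfl, rfl, rfl, rfl, hC⟩ | ⟨rfl, rfl, h⟩ | ⟨rfl, rfl, rfl, h⟩ |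
      ⟨rfl, rfl, rfl, rfl, h⟩)
    · have := bij5 (K := K) (by rw [hK]; exact hg)
      convert this using 2
      ring
    · exact dickson A C h5 h2 (nsq5 hchar (by rw [hK]; exact hm)) hC
    · exact bij9 (by simpa using hK) C hC
    · exact (K3 (by simpa using hK) A B C).2 h
    · exact (K7 (by simpa using hK) A B).2 (Or.inr h)
    · exact (K13 (by simpa using hK) A).2 (Or.inr h)

lemma fix_mem {K F : Type*} [Field K] [Fintype K] [Field F] [Fintype F] (ι : K →+* F) (x : F)
    (hx : x ^ Fintype.card K = x) : ∃ c, ι c = x := by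
  classical
  have h1 : 1 < Fintype.card K := Fintype.one_lt_card
  have hne := FiniteField.X_pow_card_sub_X_ne_zero F h1
  have hsub : Finset.univ.image ι ⊆ (Polynomial.X ^ Fintype.card K - Polynomial.X : Polynomial F).roots.toFinset := by
    intro y hy
    obtain ⟨c, -, rfl⟩ := Finset.mem_image.1 hy
    rw [Multiset.mem_toFinset, Polynomial.mem_roots hne]
    simp [Polynomial.IsRoot, ← map_pow, FiniteField.pow_card]
  have hcard : (Polynomial.X ^ Fintype.card K - Polynomial.X : Polynomial F).roots.toFinset.card ≤ (Finset.univ.image ι).card := by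
    rw [Finset.card_image_of_injective _ ι.injective, Finset.card_univ]
    refine (Multiset.toFinset_card_le _).trans ((Polynomial.card_roots' _).trans ?_)
    rw [FiniteField.X_pow_card_sub_X_natDegree_eq F h1]
  have heq := Finset.eq_of_subset_of_card_le hsub hcard
  have : x ∈ Finset.univ.image ι := by
    rw [heq, Multiset.mem_toFinset, Polynomial.mem_roots hne]
    simp [Polynomial.IsRoot, hx]
  obtain ⟨c, -, hc⟩ := Finset.mem_image.1 this
  exact ⟨c, hc⟩

lemma shift5 {K : Type*} [Field K] [Finite K] (h5 : (5 : K) ≠ 0) (m1 m2 m3 m4 : K) :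
    Function.Bijective (fun c : K => c ^ 5 + m1 * c ^ 4 + m2 * c ^ 3 + m3 * c ^ 2 + m4 * c) ↔
    Function.Bijective (fun x : K => x ^ 5 + (-(2 / 5) * m1 ^ 2 + m2) * x ^ 3 +
      (m3 + (4 / 25) * m1 ^ 3 - (3 / 5) * m1 * m2) * x ^ 2 +
      (-(2 / 5) * m1 * m3 - (3 / 125) * m1 ^ 4 + (3 / 25) * m2 * m1 ^ 2 + m4) * x) := by
  have h25 : (25 : K) ≠ 0 := by rw [show (25 : K) = 5 ^ 2 by norm_num]; exact pow_ne_zero _ h5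
  have h125 : (125 : K) ≠ 0 := by rw [show (125 : K) = 5 ^ 3 by norm_num]; exact pow_ne_zero _ h5
  obtain ⟨u, rfl⟩ : ∃ u, m1 = 5 * u := ⟨m1 / 5, by field_simp⟩
  have e1 : (2 / 5 : K) * (5 * u) = 2 * u := by field_simp
  have e2 : (3 / 5 : K) * (5 * u) = 3 * u := by field_simp
  have e3 : (4 / 25 : K) * (5 * u) ^ 3 = 20 * u ^ 3 := by field_simp; ring
  have e4 : (3 / 125 : K) * (5 * u) ^ 4 = 15 * u ^ 4 := by field_simp; ring
  have e5 : (3 / 25 : K) * m2 * (5 * u) ^ 2 = 3 * m2 * u ^ 2 := by field_simp; ring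
  have e6 : (2 / 5 : K) * (5 * u) ^ 2 = 10 * u ^ 2 := by field_simp; ring
  simp only [neg_mul, e1, e2, e3, e4, e5, e6]
  rw [← Finite.injective_iff_bijective, ← Finite.injective_iff_bijective]
  constructor
  · intro h x y hxy
    have := @h (x - u) (y - u) (by linear_combination hxy)
    linear_combination this
  · intro h x y hxy
    have := @h (x + u) (y + u) (by linear_combination hxy)
    linear_combination this

lemma exp_eq {K : Type*} [Field K] [Fintype K] (p k : ℕ) (hK : Fintype.card K = p ^ k)
    : (p ^ (4 * k) - 1) / (p ^ k - 1) = 1 + p ^ k + p ^ (2 * k) + p ^ (3 * k) := by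
  have h1 : 2 ≤ p ^ k := by rw [← hK]; exact Fintype.one_lt_card
  have := Nat.geomSum_eq h1 4
  rw [show p ^ (4 * k) = (p ^ k) ^ 4 by rw [← pow_mul, mul_comm], ← this]
  simp only [Finset.sum_range_succ, Finset.sum_range_zero]
  ring

lemma norm_e {K F : Type*} [Field K] [Fintype K] [Field F] [Fintype F] [Algebra K F] (p k : ℕ)
    [Fact p.Prime] [CharP F p] (hK : Fintype.card K = p ^ k) (hF : Fintype.card F = p ^ (4 * k)) (hk : 0 < k)
    (x : F) : algebraMap K F (Algebra.norm K x) = x ^ ((p ^ (4 * k) - 1) / (p ^ k - 1)) := by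
  rw [FiniteField.algebraMap_norm_eq_pow, Nat.card_eq_fintype_card, Nat.card_eq_fintype_card, hK, hF]

lemma nprod {K F : Type*} [Field K] [Fintype K] [Field F] [Fintype F] [Algebra K F] (p k : ℕ)
    [Fact p.Prime] [CharP F p] (hK : Fintype.card K = p ^ k) (hF : Fintype.card F = p ^ (4 * k)) (hk : 0 < k)
    (x : F) : algebraMap K F (Algebra.norm K x) =
    x * x ^ (p ^ k) * x ^ (p ^ (2 * k)) * x ^ (p ^ (3 * k)) := by
  rw [norm_e p k hK hF hk, exp_eq p k hK]
  ring

lemma frk {K F : Type*} [Field K] [Fintype K] [Field F] [Fintype F] [Algebra K F] (p k : ℕ)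
    [Fact p.Prime] [CharP F p] (hK : Fintype.card K = p ^ k) (hF : Fintype.card F = p ^ (4 * k)) (hk : 0 < k)
    : Module.finrank K F = 4 := by
  have h1 : 2 ≤ p ^ k := by rw [← hK]; exact Fintype.one_lt_card
  have := Module.card_eq_pow_finrank (K := K) (V := F)
  rw [hF, hK, mul_comm, pow_mul] at this
  exact (Nat.pow_right_injective h1 this).symm

lemma bij_first {K F : Type*} [Field K] [Fintype K] [Field F] [Fintype F] [Algebra K F] (p k : ℕ)
    [Fact p.Prime] [CharP F p] (hK : Fintype.card K = p ^ k) (hF : Fintype.card F = p ^ (4 * k)) (hk : 0 < k)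
    (hg : Nat.gcd 5 (p ^ k - 1) = 1) (a : F) (ha : a ≠ 0) :
    Function.Bijective (fun x : F => a⁻¹ * x ^ ((p ^ (4 * k) - 1) / (p ^ k - 1) + 1)) := by
  rw [← Finite.injective_iff_bijective]
  intro x y hxy
  have hxy := mul_left_cancel₀ (inv_ne_zero ha) hxy
  rw [pow_succ, pow_succ, ← norm_e p k hK hF hk, ← norm_e p k hK hF hk] at hxy
  have h := congrArg (Algebra.norm K) hxy
  rw [map_mul, map_mul, Algebra.norm_algebraMap, Algebra.norm_algebraMap, frk p k hK hF hk,
    ← pow_succ, ← pow_succ] at h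
  have h := (bij5 (K := K) (by rw [hK]; exact hg)).1 h
  by_cases h0 : Algebra.norm K y = 0
  · rw [h0] at h
    rw [Algebra.norm_eq_zero_iff.1 h, Algebra.norm_eq_zero_iff.1 h0]
  · rw [h] at hxy
    exact mul_left_cancel₀ (by simpa using h0) hxy

lemma bij_second {K F : Type*} [Field K] [Fintype K] [Field F] [Fintype F] [Algebra K F] (p k : ℕ)
    [Fact p.Prime] [CharP F p] (hK : Fintype.card K = p ^ k) (hF : Fintype.card F = p ^ (4 * k)) (hk : 0 < k)
    (a : F) (ha : a ≠ 0) (m1 m2 m3 m4 : K)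
    (h1 : algebraMap K F m1 = a + a ^ p ^ k + a ^ p ^ (2 * k) + a ^ p ^ (3 * k))
    (h2 : algebraMap K F m2 = a * a ^ p ^ k + a * a ^ p ^ (2 * k) + a * a ^ p ^ (3 * k)
      + a ^ p ^ k * a ^ p ^ (2 * k) + a ^ p ^ k * a ^ p ^ (3 * k) + a ^ p ^ (2 * k) * a ^ p ^ (3 * k))
    (h3 : algebraMap K F m3 = a * a ^ p ^ k * a ^ p ^ (2 * k) + a * a ^ p ^ k * a ^ p ^ (3 * k)
      + a * a ^ p ^ (2 * k) * a ^ p ^ (3 * k) + a ^ p ^ k * a ^ p ^ (2 * k) * a ^ p ^ (3 * k))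
    (h4 : algebraMap K F m4 = a * a ^ p ^ k * a ^ p ^ (2 * k) * a ^ p ^ (3 * k)) :
    Function.Bijective (fun x : F => a⁻¹ * x ^ ((p ^ (4 * k) - 1) / (p ^ k - 1) + 1) + x) ↔
    Function.Bijective (fun c : K => c ^ 5 + m1 * c ^ 4 + m2 * c ^ 3 + m3 * c ^ 2 + m4 * c) := by
  have hN : ∀ c : K, Algebra.norm K (algebraMap K F c + a) = c ^ 4 + m1 * c ^ 3 + m2 * c ^ 2 + m3 * c + m4 := by
    intro c
    apply (algebraMap K F).injective
    have hc : c ^ p ^ k = c := by rw [← hK]; exact FiniteField.pow_card c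
    have hc2 : c ^ p ^ (2 * k) = c := by rw [two_mul, pow_add, pow_mul, hc, hc]
    have hc3 : c ^ p ^ (3 * k) = c := by
      rw [show 3 * k = 2 * k + k by ring, pow_add, pow_mul, hc2, hc]
    rw [nprod p k hK hF hk, add_pow_char_pow, add_pow_char_pow, add_pow_char_pow, ← map_pow, ← map_pow, ← map_pow,
      hc, hc2, hc3]
    simp only [map_add, map_mul, map_pow, h1, h2, h3, h4]
    ring
  have hH : ∀ x : F, a⁻¹ * x ^ ((p ^ (4 * k) - 1) / (p ^ k - 1) + 1) + x =
      a⁻¹ * (x * (algebraMap K F (Algebra.norm K x) + a)) := by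
    intro x
    rw [pow_succ, ← norm_e p k hK hF hk]
    field_simp
  have hNH : ∀ x : F, Algebra.norm K (x * (algebraMap K F (Algebra.norm K x) + a)) =
      (fun c : K => c ^ 5 + m1 * c ^ 4 + m2 * c ^ 3 + m3 * c ^ 2 + m4 * c) (Algebra.norm K x) := by
    intro x
    rw [map_mul, hN]
    ring
  simp_rw [hH]
  rw [← Finite.injective_iff_bijective, ← Finite.injective_iff_bijective]
  constructor
  · intro h c c' hcc
    obtain ⟨x, rfl⟩ := FiniteField.norm_surjective K F c
    obtain ⟨y, rfl⟩ := FiniteField.norm_surjective K F c'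
    rw [← hNH, ← hNH] at hcc
    by_cases h0 : y * (algebraMap K F (Algebra.norm K y) + a) = 0
    · have h0' : x * (algebraMap K F (Algebra.norm K x) + a) = 0 := by
        rw [h0] at hcc
        apply Algebra.norm_eq_zero_iff.1 (hcc.trans (by simp))
      have := @h x y (by simp only [h0, h0'])
      rw [this]
    · obtain ⟨w, hw⟩ : ∃ w, w = x * (algebraMap K F (Algebra.norm K x) + a) / (y * (algebraMap K F (Algebra.norm K y) + a)) := ⟨_, rfl⟩
      have hwN : Algebra.norm K w = 1 := by
        have hn0 := fun h => h0 ((Algebra.norm_eq_zero_iff (R := K)).1 h)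
        apply mul_right_cancel₀ hn0
        rw [← map_mul, hw, div_mul_cancel₀ _ h0, hcc, one_mul]
      have := @h x (w * y) (by
        simp only [map_mul, hwN, one_mul]
        rw [mul_assoc w, hw, div_mul_cancel₀ _ h0])
      rw [this, map_mul, hwN, one_mul]
  · intro h x y hxy
    have hxy := mul_left_cancel₀ (inv_ne_zero ha) hxy
    have hc := congrArg (Algebra.norm K) hxy
    rw [hNH, hNH] at hc
    have hc := h hc
    rw [hc] at hxy
    by_cases h0 : algebraMap K F (Algebra.norm K y) + a = 0
    · exfalso
      have hz : Algebra.norm K y = 0 := by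
        apply h
        rw [← hNH, h0, mul_zero]
        simp
      rw [hz] at h0
      simp at h0
      exact ha h0
    · exact mul_right_cancel₀ h0 hxy

lemma exists_emb (p k : ℕ) [Fact p.Prime] (hk : 0 < k) (F : Type*) [Field F] [Fintype F] [CharP F p]
    (hF : Fintype.card F = p ^ (4 * k)) : Nonempty (GaloisField p k →+* F) := by
  let _ := ZMod.algebra F p
  have h1 : Module.finrank (ZMod p) F = 4 * k := by
    have := Module.card_eq_pow_finrank (K := ZMod p) (V := F)
    rw [hF, ZMod.card] at this
    exact (Nat.pow_right_injective (Fact.out : p.Prime).two_le this).symm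
  obtain ⟨f⟩ := FiniteField.nonempty_algHom_of_finrank_dvd (F := ZMod p) (K := GaloisField p k) (L := F)
    (by rw [GaloisField.finrank p hk.ne', h1]; exact dvd_mul_left _ _)
  exact ⟨f.toRingHom⟩

lemma excl3 {F : Type*} [Field F] (h3 : (3 : F) = 0) (a : F) (ha : a ≠ 0) (a1 a2 a3 l1 l2 l3 l4 : F)
    (ha1 : a1 = a ^ 3) (ha2 : a2 = a ^ 9) (ha3 : a3 = a ^ 27)
    (hl1 : l1 = a + a1 + a2 + a3)
    (hl2 : l2 = a * a1 + a * a2 + a * a3 + a1 * a2 + a1 * a3 + a2 * a3)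
    (hl3 : l3 = a * a1 * a2 + a * a1 * a3 + a * a2 * a3 + a1 * a2 * a3)
    (hl4 : l4 = a * a1 * a2 * a3) (hfix : l1 ^ 3 = l1)
    (h2 : l2 = l1 ^ 2) (hh3 : l3 = -l1 ^ 3) (h4 : l4 + l1 ^ 4 = 1) : False := by
  have h20 : (2 : F) ≠ 0 := by
    intro h; have : (1 : F) = 0 := by linear_combination h3 - h
    exact one_ne_zero this
  have hchar : a ^ 4 - l1 * a ^ 3 + l2 * a ^ 2 - l3 * a + l4 = 0 := by
    rw [hl1, hl2, hl3, hl4]; ring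
  by_cases h0 : l1 = 0
  · have ha4 : a ^ 4 = -1 := by
      rw [h2, hh3, h0] at hchar
      rw [h0] at h4
      linear_combination hchar - h4
    have e2 : a2 = a := by rw [ha2]; linear_combination (a * (a^4 - 1)) * ha4
    have e3 : a3 = a ^ 3 := by
      rw [ha3, show a ^ 27 = (a ^ 4) ^ 6 * a ^ 3 by ring, ha4]; ring
    rw [h0, ha1, e2, e3] at hl1
    have : 2 * (a * (1 + a ^ 2)) = 0 := by linear_combination -hl1
    have := (mul_eq_zero.1 ((mul_eq_zero.1 this).resolve_left h20)).resolve_left ha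
    apply h20
    linear_combination -(a ^ 2 - 1) * this + ha4
  · have h1 : l1 ^ 2 = 1 := by
      apply mul_left_cancel₀ h0; linear_combination hfix
    have : l4 = 0 := by linear_combination h4 - (l1 ^ 2 + 1) * h1
    rw [this, ha1, ha2, ha3] at hl4
    have : a ^ 40 = 0 := by linear_combination -hl4
    exact ha (pow_eq_zero_iff (by norm_num) |>.1 this)

theorem stmt_4 (p : ℕ) (hp : p.Prime) (hodd : Odd p) (hp5 : p ≠ 5)
    (k : ℕ) (hk : 0 < k) (hgcd : Nat.gcd 5 (p ^ k - 1) = 1)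
    (n : ℕ) (hn : n = 4 * k) (d : ℕ) (hd : d = (p ^ (4 * k) - 1) / (p ^ k - 1) + 1)
    (F : Type*) [Field F] [Fintype F] (hF : Fintype.card F = p ^ n)
    (a : F) (ha : a ≠ 0)
    (a0 a1 a2 a3 : F) (ha0 : a0 = a) (ha1 : a1 = a ^ (p ^ k))
    (ha2 : a2 = a ^ (p ^ (2 * k))) (ha3 : a3 = a ^ (p ^ (3 * k)))
    (l1 l2 l3 l4 : F)
    (hl1 : l1 = a0 + a1 + a2 + a3)
    (hl2 : l2 = a0 * a1 + a0 * a2 + a0 * a3 + a1 * a2 + a1 * a3 + a2 * a3)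
    (hl3 : l3 = a0 * a1 * a2 + a0 * a1 * a3 + a0 * a2 * a3 + a1 * a2 * a3)
    (hl4 : l4 = a0 * a1 * a2 * a3) :
    (Function.Bijective (fun x : F => a⁻¹ * x ^ d) ∧
     Function.Bijective (fun x : F => a⁻¹ * x ^ d + x)) ↔
    ((-(2 / 5 : F) * l1 ^ 2 + l2 = 0 ∧
        -(2 / 5 : F) * l1 * l3 - (3 / 125 : F) * l1 ^ 4 + (3 / 25 : F) * l2 * l1 ^ 2 + l4 = 0 ∧
        l3 + (4 / 25 : F) * l1 ^ 3 - (3 / 5 : F) * l1 * l2 = 0) ∨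
     ((p ^ k % 5 = 2 ∨ p ^ k % 5 = 3) ∧
        (5 : F)⁻¹ * (-(2 / 5 : F) * l1 ^ 2 + l2) ^ 2 =
          -(2 / 5 : F) * l1 * l3 - (3 / 125 : F) * l1 ^ 4 + (3 / 25 : F) * l2 * l1 ^ 2 + l4 ∧
        l3 + (4 / 25 : F) * l1 ^ 3 - (3 / 5 : F) * l1 * l2 = 0) ∨
     (p = 3 ∧ k = 2 ∧ l2 = l1 ^ 2 ∧ l3 = -l1 ^ 3 ∧ (l4 + l1 ^ 4) ^ 2 = -1) ∨
     (p = 3 ∧ k = 1 ∧ l2 = l1 ^ 2 + 1 ∧ l3 = -l1 ^ 3 ∧ l4 = -l1 ^ 4) ∨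
     (p = 3 ∧ k = 1 ∧ l2 = l1 ^ 2 + 2 ∧ l3 = -l1 ^ 3 ∧ l4 = -l1 ^ 4 + 1) ∨
     (p = 7 ∧ k = 1 ∧ l1 ^ 2 + l2 = 0 ∧
        l1 * l3 + 3 * l1 ^ 4 - l2 * l1 ^ 2 + l4 = 0 ∧
        (l3 + l1 ^ 3 - 2 * l1 * l2 = 2 ∨ l3 + l1 ^ 3 - 2 * l1 * l2 = -2)) ∨
     (p = 7 ∧ k = 1 ∧ ∃ v : F, (v = 3 ∨ v = 5 ∨ v = 6) ∧
        l1 ^ 2 + l2 = v ∧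
        l1 * l3 + 3 * l1 ^ 4 - l2 * l1 ^ 2 + l4 = 3 * v ^ 2 ∧
        (l3 + l1 ^ 3 - 2 * l1 * l2 = 1 ∨ l3 + l1 ^ 3 - 2 * l1 * l2 = -1)) ∨
     (p = 13 ∧ k = 1 ∧ ∃ v : F,
        (v = 2 ∨ v = -2 ∨ v = 5 ∨ v = -5 ∨ v = 6 ∨ v = -6) ∧
        -3 * l1 ^ 2 + l2 = v ∧
        -3 * l1 * l3 - 2 * l1 ^ 4 - 3 * l2 * l1 ^ 2 + l4 = 3 * v ^ 2 ∧
        l3 - 4 * l1 ^ 3 + 2 * l1 * l2 = 0)) := by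
  subst hn hd ha0
  have hfact : Fact p.Prime := ⟨hp⟩
  have hcF : CharP F p := charP_of_card_eq_prime_pow hF
  obtain ⟨ι⟩ := exists_emb p k hk F hF
  let instK : Fintype (GaloisField p k) := Fintype.ofFinite _
  have hK : Fintype.card (GaloisField p k) = p ^ k := by
    rw [← Nat.card_eq_fintype_card]; exact GaloisField.card p k hk.ne'
  let algK : Algebra (GaloisField p k) F := ι.toAlgebra
  have hι : algebraMap (GaloisField p k) F = ι := rfl
  have hnd5 : ¬ p ∣ 5 := fun h => hp5 ((Nat.prime_dvd_prime_iff_eq hp (by norm_num)).1 h)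
  have hnd2 : ¬ p ∣ 2 := fun h => by
    have := (Nat.prime_dvd_prime_iff_eq hp (by norm_num)).1 h
    subst this; exact absurd hodd (by decide)
  have h5F : (5 : F) ≠ 0 := by exact_mod_cast nz_of (K := F) p 5 hnd5
  have h2F : (2 : F) ≠ 0 := by exact_mod_cast nz_of (K := F) p 2 hnd2
  have h5K : (5 : GaloisField p k) ≠ 0 := by exact_mod_cast nz_of (K := GaloisField p k) p 5 hnd5
  have h2K : (2 : GaloisField p k) ≠ 0 := by exact_mod_cast nz_of (K := GaloisField p k) p 2 hnd2
  -- Frobenius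
  have hφ : ∀ x : F, iterateFrobenius F p k x = x ^ p ^ k := fun x => iterateFrobenius_def p k x
  have f0 : iterateFrobenius F p k a0 = a1 := by rw [hφ, ha1]
  have f1 : iterateFrobenius F p k a1 = a2 := by
    rw [hφ, ha1, ha2, ← pow_mul, ← pow_add, two_mul]
  have f2 : iterateFrobenius F p k a2 = a3 := by
    rw [hφ, ha2, ha3, ← pow_mul, ← pow_add, show 2 * k + k = 3 * k by ring]
  have f3 : iterateFrobenius F p k a3 = a0 := by
    rw [hφ, ha3, ← pow_mul, ← pow_add, show 3 * k + k = 4 * k by ring, ← hF, FiniteField.pow_card]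
  have g1 : iterateFrobenius F p k l1 = l1 := by
    rw [hl1]; simp only [map_add, f0, f1, f2, f3]; ring
  have g2 : iterateFrobenius F p k l2 = l2 := by
    rw [hl2]; simp only [map_add, map_mul, f0, f1, f2, f3]; ring
  have g3 : iterateFrobenius F p k l3 = l3 := by
    rw [hl3]; simp only [map_add, map_mul, f0, f1, f2, f3]; ring
  have g4 : iterateFrobenius F p k l4 = l4 := by
    rw [hl4]; simp only [map_mul, f0, f1, f2, f3]; ring
  rw [hφ] at g1 g2 g3 g4
  obtain ⟨m1, hm1⟩ := fix_mem ι l1 (by rw [hK]; exact g1)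
  obtain ⟨m2, hm2⟩ := fix_mem ι l2 (by rw [hK]; exact g2)
  obtain ⟨m3, hm3⟩ := fix_mem ι l3 (by rw [hK]; exact g3)
  obtain ⟨m4, hm4⟩ := fix_mem ι l4 (by rw [hK]; exact g4)
  have hb1 := bij_first (K := GaloisField p k) p k hK hF hk hgcd a0 ha
  have hb2 := bij_second (K := GaloisField p k) p k hK hF hk a0 ha m1 m2 m3 m4
    (by rw [hι, hm1, hl1, ha1, ha2, ha3]) (by rw [hι, hm2, hl2, ha1, ha2, ha3])
    (by rw [hι, hm3, hl3, ha1, ha2, ha3]) (by rw [hι, hm4, hl4, ha1, ha2, ha3])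
  rw [hb2, shift5 h5K, K_main p k hp hodd hp5 hk hK hgcd h5K h2K]
  simp only [hb1, true_and]
  have i2 : ι 2 = 2 := map_ofNat ι 2
  have i3 : ι 3 = 3 := map_ofNat ι 3
  have i4 : ι 4 = 4 := map_ofNat ι 4
  have i5 : ι 5 = 5 := map_ofNat ι 5
  have i6 : ι 6 = 6 := map_ofNat ι 6
  have i25 : ι 25 = 25 := map_ofNat ι 25
  have i125 : ι 125 = 125 := map_ofNat ι 125
  simp only [Ne, ← ι.injective.eq_iff, map_add, map_mul, map_neg, map_sub, map_pow, map_div₀, map_zero, map_one,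
    i2, i3, i4, i5, i6, i25, i125, hm1, hm2, hm3, hm4]
  have hp25 : (25 : F) ≠ 0 := by rw [show (25 : F) = 5 ^ 2 by norm_num]; exact pow_ne_zero _ h5F
  have hp125 : (125 : F) ≠ 0 := by rw [show (125 : F) = 5 ^ 3 by norm_num]; exact pow_ne_zero _ h5F
  obtain ⟨A, hA⟩ : ∃ A, A = -(2 / 5 : F) * l1 ^ 2 + l2 := ⟨_, rfl⟩
  obtain ⟨B, hB⟩ : ∃ B, B = l3 + (4 / 25 : F) * l1 ^ 3 - (3 / 5 : F) * l1 * l2 := ⟨_, rfl⟩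
  obtain ⟨C, hC⟩ : ∃ C, C = -(2 / 5 : F) * l1 * l3 - (3 / 125 : F) * l1 ^ 4 + (3 / 25 : F) * l2 * l1 ^ 2 + l4 := ⟨_, rfl⟩
  rw [← hA, ← hB, ← hC]
  have c3 : p = 3 → (3 : F) = 0 ∧ A = -l1 ^ 2 + l2 ∧ B = l3 + l1 ^ 3 ∧ C = -l1 * l3 + l4 := by
    rintro rfl
    have h : (3 : F) = 0 := by exact_mod_cast (CharP.cast_eq_zero F 3)
    have d1 : (2 / 5 : F) = 1 := by rw [div_eq_iff h5F]; linear_combination -h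
    have d2 : (4 / 25 : F) = 1 := by rw [div_eq_iff hp25]; linear_combination -7 * h
    refine ⟨h, ?_, ?_, ?_⟩
    · rw [hA, d1]; ring
    · rw [hB, d2, h]; ring
    · rw [hC, d1, h]; ring
  have c7 : p = 7 → A = l1 ^ 2 + l2 ∧ B = l3 + l1 ^ 3 - 2 * l1 * l2 ∧
      C = l1 * l3 + 3 * l1 ^ 4 - l2 * l1 ^ 2 + l4 := by
    rintro rfl
    have h : (7 : F) = 0 := by exact_mod_cast (CharP.cast_eq_zero F 7)
    have d1 : (2 / 5 : F) = -1 := by rw [div_eq_iff h5F]; linear_combination h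
    have d2 : (4 / 25 : F) = 1 := by rw [div_eq_iff hp25]; linear_combination -3 * h
    have d3 : (3 / 5 : F) = 2 := by rw [div_eq_iff h5F]; linear_combination -h
    have d4 : (3 / 125 : F) = -3 := by rw [div_eq_iff hp125]; linear_combination 54 * h
    have d5 : (3 / 25 : F) = -1 := by rw [div_eq_iff hp25]; linear_combination 4 * h
    refine ⟨?_, ?_, ?_⟩
    · rw [hA, d1]; ring
    · rw [hB, d2, d3]; ring
    · rw [hC, d1, d4, d5]; ring
  have c13 : p = 13 → A = -3 * l1 ^ 2 + l2 ∧ B = l3 - 4 * l1 ^ 3 + 2 * l1 * l2 ∧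
      C = -3 * l1 * l3 - 2 * l1 ^ 4 - 3 * l2 * l1 ^ 2 + l4 := by
    rintro rfl
    have h : (13 : F) = 0 := by exact_mod_cast (CharP.cast_eq_zero F 13)
    have d1 : (2 / 5 : F) = 3 := by rw [div_eq_iff h5F]; linear_combination -h
    have d2 : (4 / 25 : F) = -4 := by rw [div_eq_iff hp25]; linear_combination 8 * h
    have d3 : (3 / 5 : F) = -2 := by rw [div_eq_iff h5F]; linear_combination h
    have d4 : (3 / 125 : F) = 2 := by rw [div_eq_iff hp125]; linear_combination -19 * h
    have d5 : (3 / 25 : F) = -3 := by rw [div_eq_iff hp25]; linear_combination 6 * h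
    refine ⟨?_, ?_, ?_⟩
    · rw [hA, d1]
    · rw [hB, d2, d3]; ring
    · rw [hC, d1, d4, d5]; ring
  have h5i : (5 : F)⁻¹ * A ^ 2 = C ↔ 5 * C = A ^ 2 := by
    rw [inv_mul_eq_iff_eq_mul₀ h5F]; exact eq_comm
  rw [h5i]
  constructor
  · rintro (⟨h1, h2, h3⟩ | h | ⟨rfl, rfl, hA0, hB0, hC2⟩ | ⟨rfl, rfl, hB0, hS⟩ | ⟨rfl, rfl, hCA, h⟩ |
      ⟨rfl, rfl, hB0, hCA, h⟩)
    · exact Or.inl ⟨h1, h3, h2⟩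
    · exact Or.inr (Or.inl h)
    · right; right; left
      obtain ⟨-, cA, cB, cC⟩ := c3 rfl
      refine ⟨rfl, rfl, ?_, ?_, ?_⟩
      · linear_combination hA0 - cA
      · linear_combination hB0 - cB
      · rw [← hC2]
        have : C = l4 + l1 ^ 4 := by linear_combination cC - l1 * hB0 + l1 * cB
        rw [this]
    · obtain ⟨h3, cA, cB, cC⟩ := c3 rfl
      have cC' : C = l4 + l1 ^ 4 := by linear_combination cC - l1 * hB0 + l1 * cB
      have k3 : l3 = -l1 ^ 3 := by linear_combination hB0 - cB
      simp only [pow_one] at g1 g2 g3 g4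
      have e3 : ∀ a b : F, (a + b) ^ 3 = a ^ 3 + b ^ 3 := by
        intro a b; linear_combination (a^2*b+a*b^2) * h3
      have hA3 : A ^ 3 = A := by
        rw [cA, e3, g2]; linear_combination -(l1 ^ 3 + l1) * g1
      have hC3 : C ^ 3 = C := by
        have : (l1 ^ 4) ^ 3 = l1 ^ 4 := by rw [← pow_mul, mul_comm, pow_mul, g1]
        rw [cC', e3, g4, this]
      have tri : ∀ x : F, x ^ 3 = x → x = 0 ∨ x = 1 ∨ x = -1 := by
        intro x hx
        have : x * ((x - 1) * (x + 1)) = 0 := by linear_combination hx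
        rcases mul_eq_zero.1 this with h | h
        · exact Or.inl h
        rcases mul_eq_zero.1 h with h | h
        · exact Or.inr (Or.inl (sub_eq_zero.1 h))
        · exact Or.inr (Or.inr (eq_neg_of_add_eq_zero_left h))
      rcases tri A hA3 with h | h | h <;> rcases tri C hC3 with h' | h' | h' <;> rw [h, h'] at hS
      · exact Or.inl ⟨h, h', hB0⟩
      · exfalso
        refine excl3 h3 a0 ha a1 a2 a3 l1 l2 l3 l4 (by simpa using ha1) (by simpa using ha2) (by simpa using ha3)
          hl1 hl2 hl3 hl4 g1 ?_ k3 ?_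
        · linear_combination h - cA
        · linear_combination h' - cC'
      · exfalso; apply hS; ring
      · right; right; right; left
        refine ⟨rfl, rfl, ?_, k3, ?_⟩
        · linear_combination h - cA
        · linear_combination h' - cC'
      · exfalso; apply hS; linear_combination h3
      · right; left
        refine ⟨by norm_num, ?_, hB0⟩
        rw [h, h']; linear_combination -2 * h3
      · exfalso; apply hS; ring
      · right; right; right; right; left
        refine ⟨rfl, rfl, ?_, k3, ?_⟩
        · linear_combination h - cA - h3
        · linear_combination h' - cC'
      · right; left
        refine ⟨by norm_num, ?_, hB0⟩
        rw [h, h']; linear_combination -2 * h3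
    · obtain ⟨cA, cB, cC⟩ := c7 rfl
      rw [← cA, ← cB, ← cC]
      rcases h with ⟨h1, h2⟩ | ⟨h1, h2⟩
      · right; right; right; right; right; left
        exact ⟨rfl, rfl, h1, by rw [hCA, h1]; ring, h2⟩
      · right; right; right; right; right; right; left
        exact ⟨rfl, rfl, A, h1, rfl, hCA, h2⟩
    · obtain ⟨cA, cB, cC⟩ := c13 rfl
      rw [← cA, ← cB, ← cC]
      right; right; right; right; right; right; right
      exact ⟨rfl, rfl, A, h, rfl, hCA, hB0⟩
  · rintro (⟨h1, h2, h3⟩ | h | ⟨rfl, rfl, k2, k3, k4⟩ | ⟨rfl, rfl, k2, k3, k4⟩ | ⟨rfl, rfl, k2, k3, k4⟩ |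
      ⟨rfl, rfl, h1, h2, h3⟩ | ⟨rfl, rfl, v, hv, h1, h2, h3⟩ | ⟨rfl, rfl, v, hv, h1, h2, h3⟩)
    · exact Or.inl ⟨h1, h3, h2⟩
    · exact Or.inr (Or.inl h)
    · obtain ⟨-, cA, cB, cC⟩ := c3 rfl
      right; right; left
      refine ⟨rfl, rfl, ?_, ?_, ?_⟩
      · linear_combination cA + k2
      · linear_combination cB + k3
      · rw [← k4, show C = l4 + l1 ^ 4 by linear_combination cC - l1 * k3]
    · obtain ⟨h3, cA, cB, cC⟩ := c3 rfl
      right; right; right; left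
      refine ⟨rfl, rfl, by linear_combination cB + k3, ?_⟩
      rw [show A = 1 by linear_combination cA + k2, show C = 0 by linear_combination cC - l1 * k3 + k4]
      intro h; exact h2F (by linear_combination h)
    · obtain ⟨h3, cA, cB, cC⟩ := c3 rfl
      right; right; right; left
      refine ⟨rfl, rfl, by linear_combination cB + k3, ?_⟩
      rw [show A = 2 by linear_combination cA + k2, show C = 1 by linear_combination cC - l1 * k3 + k4]
      intro h; exact h2F (by linear_combination 2 * h - 2 * h3)
    · obtain ⟨cA, cB, cC⟩ := c7 rfl
      rw [← cA] at h1
      rw [← cB] at h3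
      rw [← cC] at h2
      right; right; right; right; left
      exact ⟨rfl, rfl, by rw [h2, h1]; ring, Or.inl ⟨h1, h3⟩⟩
    · obtain ⟨cA, cB, cC⟩ := c7 rfl
      rw [← cA] at h1
      rw [← cB] at h3
      rw [← cC] at h2
      subst h1
      right; right; right; right; left
      exact ⟨rfl, rfl, h2, Or.inr ⟨hv, h3⟩⟩
    · obtain ⟨cA, cB, cC⟩ := c13 rfl
      rw [← cA] at h1
      rw [← cB] at h3
      rw [← cC] at h2
      subst h1
      right; right; right; right; right
      exact ⟨rfl, rfl, h3, h2, hv⟩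
end

section
/- Let k be a positive integer with gcd(5, 3^k - 1) = 1, n = 4k, and d = (3^{4k} - 1)/(3^k - 1) + 1. Let a ∈ F_{3^n}, a ≠ 0, and let λ_1, λ_2, λ_3, λ_4 ∈ F_{3^k} be the elementary symmetric functions of a, a^{3^k}, a^{3^{2k}}, a^{3^{3k}}. Then a^{-1}x^d is a complete permutation polynomial over F_{3^n} if and only if one of the following holds: (i) k = 2, λ_2 = λ_1², λ_3 = -λ_1³, and (λ_4 + λ_1⁴)² = -1; (ii) k = 1, λ_2 = λ_1² + 1, λ_3 = -λ_1³, and λ_4 = -λ_1⁴; (iii) k = 1, λ_2 = λ_1² + 2, λ_3 = -λ_1³, and λ_4 = -λ_1⁴ + 1; (iv) k ≡ 2 (mod 4), λ_2 = λ_1², λ_3 = -λ_1³, and λ_4 = -λ_1⁴; (v) k is odd, λ_3 = -λ_1³, and -(λ_2 - λ_1²)² = λ_4 - λ_1λ_3. -/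
open Polynomial in
theorem aux_sum_eval {K : Type*} [Field K] [Fintype K] (P : K[X]) (M : ℕ)
    (hP : P.natDegree < (M + 1) * (Fintype.card K - 1)) :
    ∑ x : K, P.eval x = - ∑ j ∈ Finset.Icc 1 M, P.coeff (j * (Fintype.card K - 1)) := by
  classical
  set q := Fintype.card K with hq
  have hq1 : 0 < q - 1 := by
    have : 1 < q := Fintype.one_lt_card
    omega
  have hs : ∀ i : ℕ, ∑ x : K, x ^ i = if i ≠ 0 ∧ (q - 1) ∣ i then (-1 : K) else 0 := by
    intro i
    by_cases hi : i = 0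
    · subst hi; simp
    · have := FiniteField.sum_pow_units K i
      have h2 : ∑ x : K, x ^ i = ∑ x : Kˣ, (x : K) ^ i := by
        rw [Fintype.sum_eq_add_sum_subtype_ne _ 0, zero_pow hi, zero_add]
        symm
        exact Fintype.sum_equiv unitsEquivNeZero _ _ (fun x => by simp)
      rw [h2, this]
      simp [hi, hq]
  have : ∀ x : K, P.eval x = ∑ i ∈ Finset.range ((M + 1) * (q - 1)), P.coeff i * x ^ i :=
    fun x => eval_eq_sum_range' hP x
  simp only [this]
  rw [Finset.sum_comm]
  simp only [← Finset.mul_sum, hs]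
  rw [← Finset.sum_neg_distrib]
  have hinj : Set.InjOn (fun j : ℕ => j * (q - 1)) (Finset.Icc 1 M : Finset ℕ) :=
    fun a _ b _ h => Nat.eq_of_mul_eq_mul_right hq1 h
  rw [← Finset.sum_image (f := fun i => - P.coeff i) (g := fun j : ℕ => j * (q - 1)) hinj]
  symm
  apply Finset.sum_subset_zero_on_sdiff
  · intro i hi
    simp only [Finset.mem_image, Finset.mem_Icc, Finset.mem_range] at hi ⊢
    obtain ⟨j, ⟨h1, h2⟩, rfl⟩ := hi
    exact Nat.mul_lt_mul_of_pos_right (by omega) hq1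
  · intro i hi
    simp only [Finset.mem_sdiff, Finset.mem_image, Finset.mem_Icc, Finset.mem_range, not_exists, not_and] at hi
    rw [if_neg, mul_zero]
    rintro ⟨h0, j, rfl⟩
    refine hi.2 j ⟨?_, ?_⟩ (mul_comm _ _)
    · rcases Nat.eq_zero_or_pos j with rfl | h
      · simp at h0
      · exact h
    · have := hi.1
      rw [mul_comm] at this
      have := Nat.lt_of_mul_lt_mul_right this
      omega
  · intro i hi
    simp only [Finset.mem_image, Finset.mem_Icc] at hi
    obtain ⟨j, ⟨h1, h2⟩, rfl⟩ := hi
    rw [if_pos]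
    · ring
    · refine ⟨?_, dvd_mul_left _ _⟩
      have : 0 < j * (q - 1) := Nat.mul_pos h1 hq1
      omega

open Polynomial in
theorem aux_hermite {K : Type*} [Field K] [Fintype K] (f : K[X])
    (hf : Function.Injective (fun x : K => f.eval x)) (t : ℕ) (ht : t < Fintype.card K - 1) :
    ∑ x : K, (f ^ t).eval x = 0 := by
  have hb : Function.Bijective (fun x : K => f.eval x) := Finite.injective_iff_bijective.mp hf
  simp only [eval_pow]
  rw [← FiniteField.sum_pow_lt_card_sub_one K t ht]
  exact Fintype.sum_bijective _ hb _ _ (fun _ => rfl)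

/-- The normalised quintic. -/
noncomputable def quint {K : Type*} [Field K] (b c e : K) : Polynomial K :=
  .monomial 5 1 + .monomial 3 b + .monomial 2 c + .monomial 1 e

open Polynomial in
theorem quint_deg {K : Type*} [Field K] (b c e : K) : (quint b c e).natDegree ≤ 5 := by
  unfold quint
  compute_degree!

open Polynomial in
theorem quint_pow_tail {K : Type*} [Field K] (b c e : K) (m : ℕ) :
    ∃ R : K[X], quint b c e ^ m = X ^ (5 * m) + R ∧ R.natDegree ≤ 5 * m - 2 := by
  induction m with
  | zero => exact ⟨0, by simp, by simp⟩
  | succ m ih =>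
    obtain ⟨R, h1, h2⟩ := ih
    rcases Nat.eq_zero_or_pos m with rfl | hm
    · refine ⟨monomial 3 b + monomial 2 c + monomial 1 e, ?_, ?_⟩
      · simp [quint, monomial_one_right_eq_X_pow]; ring
      · compute_degree!
    refine ⟨R * quint b c e + X ^ (5 * m) * (monomial 3 b + monomial 2 c + monomial 1 e), ?_, ?_⟩
    · rw [pow_succ, h1, quint, monomial_one_right_eq_X_pow]; ring
    · have h3 : (R * quint b c e).natDegree ≤ 5 * (m + 1) - 2 := by
        refine natDegree_mul_le.trans ?_
        have := quint_deg b c e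
        omega
      have h4 : (X ^ (5 * m) * (monomial 3 b + monomial 2 c + monomial 1 e)).natDegree ≤ 5 * (m + 1) - 2 := by
        refine natDegree_mul_le.trans ?_
        have : (monomial 3 b + monomial 2 c + monomial 1 e).natDegree ≤ 3 := by compute_degree!
        have h5 : (X ^ (5 * m) : K[X]).natDegree ≤ 5 * m := by simp
        omega
      exact (natDegree_add_le _ _).trans (max_le h3 h4)

open Polynomial in
theorem quint_crit {K : Type*} [Field K] [Fintype K] [CharP K 3] (b c e : K) (m N t : ℕ)
    (hq : Fintype.card K = 135 * m + N + 1)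
    (hf : Function.Injective (fun x : K => (quint b c e).eval x))
    (h1 : 5 * t < N + 54) (h2 : t + 27 * m < 135 * m + N) (h3 : 5 * t < 135 * m + 2 * N) :
    (quint b c e ^ t).coeff N = 0 := by
  have hs := aux_hermite (quint b c e) hf (t + 27 * m) (by omega)
  rw [aux_sum_eval _ 1] at hs
  swap
  · refine lt_of_le_of_lt natDegree_pow_le ?_
    have : (t + 27 * m) * (quint b c e).natDegree ≤ (t + 27 * m) * 5 :=
      Nat.mul_le_mul_left _ (quint_deg b c e)
    omega
  simp only [Finset.Icc_self, Finset.sum_singleton, neg_eq_zero, one_mul, hq] at hs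
  obtain ⟨R, hR, hRd⟩ := quint_pow_tail b c e m
  have hfr : (X ^ (5 * m) + R) ^ 27 = X ^ (135 * m) + R ^ 27 := by
    have := add_pow_char_pow (X ^ (5 * m)) R (p := 3) (n := 3)
    norm_num at this
    rw [this]; ring
  rw [pow_add, mul_comm 27 m, pow_mul _ m 27, hR, hfr, mul_add, coeff_add,
    show 135 * m + N + 1 - 1 = N + 135 * m by omega, coeff_mul_X_pow] at hs
  rcases Nat.eq_zero_or_pos m with rfl | hm
  · have : R = 0 := by simpa using hR
    subst this
    simpa using hs
  rw [coeff_eq_zero_of_natDegree_lt (p := quint b c e ^ t * R ^ 27), add_zero] at hs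
  · exact hs
  · refine lt_of_le_of_lt natDegree_mul_le ?_
    have e1 : (quint b c e ^ t).natDegree ≤ t * 5 :=
      natDegree_pow_le.trans (Nat.mul_le_mul_left _ (quint_deg b c e))
    have e2 : (R ^ 27).natDegree ≤ 27 * (5 * m - 2) :=
      natDegree_pow_le.trans (Nat.mul_le_mul_left _ hRd)
    omega

theorem quint_pow3 {K : Type*} [Field K] [CharP K 3] (b c e : K) :
    quint b c e ^ 3 = .monomial 15 1 + .monomial 9 (b ^ 3) + .monomial 6 (c ^ 3)
      + .monomial 3 (e ^ 3) := by
  simp only [quint, add_pow_char, Polynomial.monomial_pow, one_pow]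

theorem quint_pow9 {K : Type*} [Field K] [CharP K 3] (b c e : K) :
    quint b c e ^ 9 = .monomial 45 1 + .monomial 27 (b ^ 9) + .monomial 18 (c ^ 9)
      + .monomial 9 (e ^ 9) := by
  rw [show (9 : ℕ) = 3 * 3 from rfl, pow_mul, quint_pow3]
  simp only [add_pow_char, Polynomial.monomial_pow, one_pow]
  simp only [← pow_mul]

open Polynomial in
theorem cfA22 {K : Type*} [Field K] [CharP K 3] (b c e : K) :
    (quint b c e ^ 22).coeff 107 = c := by
  have h3 : (3 : K) = 0 := CharP.cast_eq_zero K 3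
  rw [show (22 : ℕ) = 9 + 9 + 3 + 1 from rfl]
  simp only [pow_add, quint_pow9, quint_pow3, pow_one]
  simp only [quint, add_mul, mul_add, monomial_mul_monomial, coeff_add, coeff_monomial]
  norm_num

open Polynomial in
theorem cfA23 {K : Type*} [Field K] [CharP K 3] (b e : K) :
    (quint b 0 e ^ 23).coeff 107 = e ^ 2 - b ^ 4 := by
  have h3 : (3 : K) = 0 := CharP.cast_eq_zero K 3
  rw [show (23 : ℕ) = 9 + 9 + 3 + 1 + 1 from rfl]
  simp only [pow_add, quint_pow9, quint_pow3, pow_one]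
  simp only [quint, add_mul, mul_add, monomial_mul_monomial, coeff_add, coeff_monomial]
  norm_num
  grind

open Polynomial in
theorem cfA25 {K : Type*} [Field K] [CharP K 3] (b e : K) :
    (quint b 0 e ^ 25).coeff 107 = -(b ^ 3 * (e + b ^ 2) ^ 3) := by
  have h3 : (3 : K) = 0 := CharP.cast_eq_zero K 3
  rw [show (25 : ℕ) = 9 + 9 + 3 + 3 + 1 from rfl]
  simp only [pow_add, quint_pow9, quint_pow3, pow_one]
  simp only [quint, add_mul, mul_add, monomial_mul_monomial, coeff_add, coeff_monomial]
  norm_num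
  grind

open Polynomial in
theorem cfB7 {K : Type*} [Field K] [CharP K 3] (b c e : K) :
    (quint b c e ^ 7).coeff 26 = -(c * (c ^ 2 + b ^ 3)) := by
  have h3 : (3 : K) = 0 := CharP.cast_eq_zero K 3
  rw [show (7 : ℕ) = 3 + 3 + 1 from rfl]
  simp only [pow_add, quint_pow9, quint_pow3, pow_one]
  simp only [quint, add_mul, mul_add, monomial_mul_monomial, coeff_add, coeff_monomial]
  norm_num
  grind

open Polynomial in
theorem cfB8 {K : Type*} [Field K] [CharP K 3] (b c e : K) :
    (quint b c e ^ 8).coeff 26 = -(b * (b ^ 6 - e ^ 3 - c ^ 4 + b ^ 2 * e ^ 2)) := by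
  have h3 : (3 : K) = 0 := CharP.cast_eq_zero K 3
  rw [show (8 : ℕ) = 3 + 3 + 1 + 1 from rfl]
  simp only [pow_add, quint_pow9, quint_pow3, pow_one]
  simp only [quint, add_mul, mul_add, monomial_mul_monomial, coeff_add, coeff_monomial]
  norm_num
  grind

open Polynomial in
theorem cfB11 {K : Type*} [Field K] [CharP K 3] (b c e : K) :
    (quint b c e ^ 11).coeff 26 = -(b * c ^ 9) := by
  have h3 : (3 : K) = 0 := CharP.cast_eq_zero K 3
  rw [show (11 : ℕ) = 9 + 1 + 1 from rfl]
  simp only [pow_add, quint_pow9, quint_pow3, pow_one]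
  simp only [quint, add_mul, mul_add, monomial_mul_monomial, coeff_add, coeff_monomial]
  norm_num
  grind

open Polynomial in
theorem cfB14 {K : Type*} [Field K] [CharP K 3] (e : K) :
    (quint 0 0 e ^ 14).coeff 26 = e ^ 11 := by
  have h3 : (3 : K) = 0 := CharP.cast_eq_zero K 3
  rw [show (14 : ℕ) = 9 + 3 + 1 + 1 from rfl]
  simp only [pow_add, quint_pow9, quint_pow3, pow_one]
  simp only [quint, add_mul, mul_add, monomial_mul_monomial, coeff_add, coeff_monomial]
  norm_num
  try grind

open Polynomial in
theorem cfC11 {K : Type*} [Field K] [CharP K 3] (b c e : K) :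
    (quint b c e ^ 11).coeff 53 = -b := by
  have h3 : (3 : K) = 0 := CharP.cast_eq_zero K 3
  rw [show (11 : ℕ) = 9 + 1 + 1 from rfl]
  simp only [pow_add, quint_pow9, quint_pow3, pow_one]
  simp only [quint, add_mul, mul_add, monomial_mul_monomial, coeff_add, coeff_monomial]
  norm_num
  grind

open Polynomial in
theorem cfC13 {K : Type*} [Field K] [CharP K 3] (c e : K) :
    (quint 0 c e ^ 13).coeff 53 = e ^ 3 + c ^ 4 := by
  have h3 : (3 : K) = 0 := CharP.cast_eq_zero K 3
  rw [show (13 : ℕ) = 9 + 3 + 1 from rfl]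
  simp only [pow_add, quint_pow9, quint_pow3, pow_one]
  simp only [quint, add_mul, mul_add, monomial_mul_monomial, coeff_add, coeff_monomial]
  norm_num
  grind

open Polynomial in
theorem cfC14 {K : Type*} [Field K] [CharP K 3] (c e : K) :
    (quint 0 c e ^ 14).coeff 53 = e ^ 2 * c ^ 3 := by
  have h3 : (3 : K) = 0 := CharP.cast_eq_zero K 3
  rw [show (14 : ℕ) = 9 + 3 + 1 + 1 from rfl]
  simp only [pow_add, quint_pow9, quint_pow3, pow_one]
  simp only [quint, add_mul, mul_add, monomial_mul_monomial, coeff_add, coeff_monomial]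
  norm_num
  grind

open Polynomial in
theorem cfD13 {K : Type*} [Field K] [CharP K 3] (β : K) :
    (quint (-β ^ 2) (β ^ 3) 0 ^ 13).coeff 26 + (quint (-β ^ 2) (β ^ 3) 0 ^ 13).coeff 52 = β ^ 39 := by
  have h3 : (3 : K) = 0 := CharP.cast_eq_zero K 3
  rw [show (13 : ℕ) = 9 + 3 + 1 from rfl]
  simp only [pow_add, quint_pow9, quint_pow3, pow_one]
  simp only [quint, add_mul, mul_add, monomial_mul_monomial, coeff_add, coeff_monomial]
  norm_num
  grind

open Polynomial in
theorem cfD14 {K : Type*} [Field K] [CharP K 3] (e : K) :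
    (quint 0 0 e ^ 14).coeff 26 + (quint 0 0 e ^ 14).coeff 52 = e ^ 11 := by
  have h3 : (3 : K) = 0 := CharP.cast_eq_zero K 3
  rw [show (14 : ℕ) = 9 + 3 + 1 + 1 from rfl]
  simp only [pow_add, quint_pow9, quint_pow3, pow_one]
  simp only [quint, add_mul, mul_add, monomial_mul_monomial, coeff_add, coeff_monomial]
  norm_num
  try grind

open Polynomial in
theorem cfE2 {K : Type*} [Field K] [CharP K 3] (b c e : K) :
    (quint b c e ^ 2).coeff 8 = -b := by
  have h3 : (3 : K) = 0 := CharP.cast_eq_zero K 3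
  rw [show (2 : ℕ) = 1 + 1 from rfl]
  simp only [pow_add, quint_pow9, quint_pow3, pow_one]
  simp only [quint, add_mul, mul_add, monomial_mul_monomial, coeff_add, coeff_monomial]
  norm_num
  grind

open Polynomial in
theorem cfE4 {K : Type*} [Field K] [CharP K 3] (c e : K) :
    (quint 0 c e ^ 4).coeff 8 + (quint 0 c e ^ 4).coeff 16 = e + e ^ 3 + c ^ 4 := by
  have h3 : (3 : K) = 0 := CharP.cast_eq_zero K 3
  rw [show (4 : ℕ) = 3 + 1 from rfl]
  simp only [pow_add, quint_pow9, quint_pow3, pow_one]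
  simp only [quint, add_mul, mul_add, monomial_mul_monomial, coeff_add, coeff_monomial]
  norm_num
  grind

open Polynomial in
theorem cfE5 {K : Type*} [Field K] [CharP K 3] (c e : K) :
    (quint 0 c e ^ 5).coeff 8 + (quint 0 c e ^ 5).coeff 16 + (quint 0 c e ^ 5).coeff 24 = c ^ 3 * (1 + e ^ 2) := by
  have h3 : (3 : K) = 0 := CharP.cast_eq_zero K 3
  rw [show (5 : ℕ) = 3 + 1 + 1 from rfl]
  simp only [pow_add, quint_pow9, quint_pow3, pow_one]
  simp only [quint, add_mul, mul_add, monomial_mul_monomial, coeff_add, coeff_monomial]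
  norm_num
  grind

open Polynomial in
theorem quint_eval {K : Type*} [Field K] (b c e x : K) :
    (quint b c e).eval x = x ^ 5 + b * x ^ 3 + c * x ^ 2 + e * x := by
  simp [quint, eval_monomial]

open Polynomial in
theorem quint_small {K : Type*} [Field K] [Fintype K] (b c e : K) (t M : ℕ)
    (hf : Function.Injective (fun x : K => (quint b c e).eval x))
    (h1 : t < Fintype.card K - 1) (h2 : t * 5 < (M + 1) * (Fintype.card K - 1)) :
    ∑ j ∈ Finset.Icc 1 M, (quint b c e ^ t).coeff (j * (Fintype.card K - 1)) = 0 := by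
  have hs := aux_hermite (quint b c e) hf t h1
  rw [aux_sum_eval _ M, neg_eq_zero] at hs
  · exact hs
  · refine lt_of_le_of_lt natDegree_pow_le (lt_of_le_of_lt ?_ h2)
    exact Nat.mul_le_mul_left _ (quint_deg b c e)

theorem mod135 (k : ℕ) (hk : 3 ≤ k) :
    (k % 4 = 1 → ∃ m, 1 ≤ m ∧ 3 ^ k = 135 * m + 107 + 1) ∧
    (k % 4 = 3 → (k = 3 ∨ ∃ m, 1 ≤ m ∧ 3 ^ k = 135 * m + 26 + 1)) ∧
    (k % 4 = 2 → ∃ m, 1 ≤ m ∧ 3 ^ k = 135 * m + 53 + 1) := by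
  have key : ∀ j r : ℕ, 3 ≤ r → ∃ m, 3 ^ (4 * j + r) = 135 * m + 3 ^ r := by
    intro j r hr
    obtain ⟨r, rfl⟩ := Nat.exists_eq_add_of_le hr
    induction j with
    | zero => exact ⟨0, by simp⟩
    | succ j ih =>
      obtain ⟨m, hm⟩ := ih
      refine ⟨81 * m + 16 * 3 ^ r, ?_⟩
      rw [show 4 * (j + 1) + (3 + r) = 4 * j + (3 + r) + 4 by ring, pow_add, hm, pow_add]
      ring
  refine ⟨fun h => ?_, fun h => ?_, fun h => ?_⟩
  · obtain ⟨m, hm⟩ := key (k / 4 - 1) 5 (by norm_num)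
    rw [show 4 * (k / 4 - 1) + 5 = k by omega] at hm
    exact ⟨m + 1, by omega, by rw [hm]; ring⟩
  · by_cases h3 : k = 3
    · exact Or.inl h3
    · right
      obtain ⟨m, hm⟩ := key (k / 4 - 1) 7 (by norm_num)
      rw [show 4 * (k / 4 - 1) + 7 = k by omega] at hm
      exact ⟨m + 16, by omega, by rw [hm]; ring⟩
  · obtain ⟨m, hm⟩ := key (k / 4 - 1) 6 (by norm_num)
    rw [show 4 * (k / 4 - 1) + 6 = k by omega] at hm
    exact ⟨m + 5, by omega, by rw [hm]; ring⟩

theorem neg_one_ns {K : Type*} [Field K] [Fintype K] (k : ℕ) (hk : k % 2 = 1)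
    (hq : Fintype.card K = 3 ^ k) (x y : K) (h : x ^ 2 + y ^ 2 = 0) : x = 0 ∧ y = 0 := by
  have hns : ¬ IsSquare (-1 : K) := by
    rw [FiniteField.isSquare_neg_one_iff, not_not, hq]
    obtain ⟨j, rfl⟩ : ∃ j, k = 2 * j + 1 := ⟨k / 2, by omega⟩
    rw [pow_succ, pow_mul, Nat.mul_mod, Nat.pow_mod]
    norm_num
  have hy : y = 0 := by
    by_contra hy
    apply hns
    refine ⟨x / y, ?_⟩
    field_simp
    linear_combination -h
  subst hy
  exact ⟨by simpa using h, rfl⟩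

theorem nec_one {K : Type*} [Field K] [Fintype K] [CharP K 3] (k : ℕ) (hk : k % 4 = 1) (hk2 : 3 ≤ k)
    (hq : Fintype.card K = 3 ^ k) (b c e : K)
    (hf : Function.Injective (fun x : K => (quint b c e).eval x)) : c = 0 ∧ -b ^ 2 = e := by
  obtain ⟨m, hm, hm2⟩ := (mod135 k hk2).1 hk
  rw [hm2] at hq
  have h1 := quint_crit b c e m 107 22 hq hf (by omega) (by omega) (by omega)
  rw [cfA22] at h1
  subst h1
  refine ⟨rfl, ?_⟩
  have h2 := quint_crit b 0 e m 107 23 hq hf (by omega) (by omega) (by omega)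
  rw [cfA23] at h2
  have h3 := quint_crit b 0 e m 107 25 hq hf (by omega) (by omega) (by omega)
  rw [cfA25, neg_eq_zero, mul_eq_zero] at h3
  rcases h3 with h | h
  · have hb : b = 0 := by simpa using h
    subst hb
    have : e = 0 := by simpa using h2
    simp [this]
  · have : e + b ^ 2 = 0 := by simpa using h
    linear_combination -this

theorem nec_two {K : Type*} [Field K] [Fintype K] [CharP K 3] (k : ℕ) (hk : k % 4 = 2) (hk2 : 3 ≤ k)
    (hq : Fintype.card K = 3 ^ k) (b c e : K)
    (hf : Function.Injective (fun x : K => (quint b c e).eval x)) : b = 0 ∧ c = 0 ∧ e = 0 := by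
  obtain ⟨m, hm, hm2⟩ := (mod135 k hk2).2.2 hk
  rw [hm2] at hq
  have h1 := quint_crit b c e m 53 11 hq hf (by omega) (by omega) (by omega)
  rw [cfC11, neg_eq_zero] at h1
  subst h1
  have h2 := quint_crit 0 c e m 53 13 hq hf (by omega) (by omega) (by omega)
  rw [cfC13] at h2
  have h3 := quint_crit 0 c e m 53 14 hq hf (by omega) (by omega) (by omega)
  rw [cfC14, mul_eq_zero] at h3
  rcases h3 with h | h
  · have he : e = 0 := by simpa using h
    subst he
    have : c = 0 := by simpa using h2
    simp [this]
  · have hc : c = 0 := by simpa using h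
    subst hc
    have : e = 0 := by simpa using h2
    simp [this]

theorem nec_nine {K : Type*} [Field K] [Fintype K] [CharP K 3]
    (hq : Fintype.card K = 9) (b c e : K)
    (hf : Function.Injective (fun x : K => (quint b c e).eval x)) :
    b = 0 ∧ c = 0 ∧ (e = 0 ∨ e ^ 2 = -1) := by
  have h1 := quint_small b c e 2 1 hf (by omega) (by omega)
  simp only [hq, show Finset.Icc 1 1 = {1} by rfl, Finset.sum_singleton] at h1
  norm_num at h1
  rw [cfE2, neg_eq_zero] at h1
  subst h1
  have h2 := quint_small 0 c e 4 2 hf (by omega) (by omega)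
  simp only [hq, show Finset.Icc 1 2 = {1, 2} by rfl] at h2
  norm_num at h2
  rw [cfE4] at h2
  have h3 := quint_small 0 c e 5 3 hf (by omega) (by omega)
  simp only [hq, show Finset.Icc 1 3 = {1, 2, 3} by rfl] at h3
  norm_num at h3
  rw [← add_assoc, cfE5, mul_eq_zero] at h3
  have hc : c = 0 := by
    rcases h3 with h | h
    · simpa using h
    · have : c ^ 4 = 0 := by linear_combination h2 - e * h
      simpa using this
  subst hc
  refine ⟨rfl, rfl, ?_⟩
  have : e * (e ^ 2 + 1) = 0 := by linear_combination h2
  rcases mul_eq_zero.mp this with h | h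
  · exact Or.inl h
  · right; linear_combination h

theorem nec_three_aux {K : Type*} [Field K] [Fintype K] [CharP K 3] (k : ℕ) (hk : k % 4 = 3)
    (hq : Fintype.card K = 3 ^ k) (b e : K) (hb : b ≠ 0)
    (h : b * (b ^ 6 - e ^ 3 - 0 ^ 4 + b ^ 2 * e ^ 2) = 0) : -b ^ 2 = e := by
  have h3 : (3 : K) = 0 := CharP.cast_eq_zero K 3
  have h1 := (mul_eq_zero.mp h).resolve_left hb
  have h2 : (e + b ^ 2) * ((e - b ^ 2) ^ 2 + (b ^ 2) ^ 2) = 0 := by grind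
  rcases mul_eq_zero.mp h2 with h | h
  · linear_combination -h
  · have := (neg_one_ns k (by omega) hq _ _ h).2
    exact absurd (by simpa using this) hb

theorem nec_three {K : Type*} [Field K] [Fintype K] [CharP K 3] (k : ℕ) (hk : k % 4 = 3)
    (hq : Fintype.card K = 3 ^ k) (b c e : K)
    (hf : Function.Injective (fun x : K => (quint b c e).eval x)) : c = 0 ∧ -b ^ 2 = e := by
  have h3 : (3 : K) = 0 := CharP.cast_eq_zero K 3
  rcases (mod135 k (by omega)).2.1 hk with rfl | ⟨m, hm, hm2⟩
  · have hq' := hq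
    norm_num at hq'
    have e1 := quint_crit b c e 0 26 7 hq' hf (by omega) (by omega) (by omega)
    have e2 := quint_crit b c e 0 26 8 hq' hf (by omega) (by omega) (by omega)
    rw [cfB7, neg_eq_zero] at e1
    rw [cfB8, neg_eq_zero] at e2
    have hc : c = 0 := by
      by_contra hc
      have e3 := (mul_eq_zero.mp e1).resolve_left hc
      have hb : b ≠ 0 := by
        rintro rfl
        apply hc
        simpa using e3
      obtain ⟨β, hβ⟩ : ∃ β, β = - c / b := ⟨_, rfl⟩
      have hbb : b = -β ^ 2 := by
        rw [hβ]; field_simp; linear_combination e3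
      have hcc : c = β ^ 3 := by
        have : c = - β * b := by rw [hβ]; field_simp
        rw [this]; nth_rewrite 1 [hbb]; ring
      have hb0 : β ≠ 0 := by
        rintro rfl
        apply hc
        simpa using hcc
      clear hβ e3 e1
      subst hbb hcc
      have e4 := (mul_eq_zero.mp e2).resolve_left hb
      have e5 : e ^ 2 * (e - β ^ 4) = 0 := by
        have : β ^ 4 * e ^ 2 = e ^ 3 := by linear_combination e4
        linear_combination -this
      rcases mul_eq_zero.mp e5 with h | h
      · have he : e = 0 := by simpa using h
        subst he
        have e6 := quint_small _ _ _ 13 2 hf (by omega) (by omega)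
        simp only [hq', show Finset.Icc 1 2 = {1, 2} by rfl] at e6
        norm_num at e6
        rw [cfD13] at e6
        exact hb0 (by simpa using e6)
      · have : -β = 0 := by
          apply hf
          simp only [quint_eval]
          have he : e = β ^ 4 := by linear_combination h
          rw [he]
          ring
        exact hb0 (by simpa using this)
    subst hc
    refine ⟨rfl, ?_⟩
    by_cases hb : b = 0
    · subst hb
      have e6 := quint_small _ _ _ 14 2 hf (by omega) (by omega)
      simp only [hq', show Finset.Icc 1 2 = {1, 2} by rfl] at e6
      norm_num at e6
      rw [cfD14] at e6
      have : e = 0 := by simpa using e6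
      simp [this]
    · exact nec_three_aux 3 (by omega) hq b e hb e2
  · have hq' := hq
    rw [hm2] at hq
    have e1 := quint_crit b c e m 26 7 hq hf (by omega) (by omega) (by omega)
    have e2 := quint_crit b c e m 26 8 hq hf (by omega) (by omega) (by omega)
    have e3 := quint_crit b c e m 26 11 hq hf (by omega) (by omega) (by omega)
    have e4 := quint_crit b c e m 26 14 hq hf (by omega) (by omega) (by omega)
    rw [cfB7, neg_eq_zero] at e1
    rw [cfB8, neg_eq_zero] at e2
    rw [cfB11, neg_eq_zero] at e3
    have hc : c = 0 := by
      rcases mul_eq_zero.mp e3 with rfl | h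
      · rcases mul_eq_zero.mp e1 with h | h
        · exact h
        · simpa using h
      · simpa using h
    subst hc
    refine ⟨rfl, ?_⟩
    by_cases hb : b = 0
    · subst hb
      rw [cfB14] at e4
      have : e = 0 := by simpa using e4
      simp [this]
    · exact nec_three_aux k (by omega) hq' b e hb e2

theorem pow5_inj {K : Type*} [Field K] [Fintype K] (h : Nat.Coprime 5 (Fintype.card K - 1)) :
    Function.Injective (fun x : K => x ^ 5) := by
  intro x y hxy
  simp only at hxy
  by_cases hy : y = 0
  · subst hy; simpa using hxy
  have hx : x ≠ 0 := by
    rintro rfl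
    apply hy
    simpa using hxy.symm
  have h1 : (x / y) ^ 5 = 1 := by rw [div_pow, hxy]; field_simp
  have h2 : (x / y) ^ (Fintype.card K - 1) = 1 :=
    FiniteField.pow_card_sub_one_eq_one _ (div_ne_zero hx hy)
  have h3 : orderOf (x / y) ∣ 1 := by
    rw [← h]
    exact Nat.dvd_gcd (orderOf_dvd_of_pow_eq_one h1) (orderOf_dvd_of_pow_eq_one h2)
  have h4 : x / y = 1 := by
    rw [← orderOf_eq_one_iff]
    exact Nat.dvd_one.mp h3
  field_simp at h4
  exact h4

theorem suf_odd {K : Type*} [Field K] [Fintype K] [CharP K 3] (k : ℕ) (hk : k % 2 = 1)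
    (hq : Fintype.card K = 3 ^ k) (b : K) :
    Function.Injective (fun x : K => (quint b 0 (-b ^ 2)).eval x) := by
  have h3 : (3 : K) = 0 := CharP.cast_eq_zero K 3
  intro x y hxy
  simp only [quint_eval] at hxy
  by_contra hne
  have hne' : x - y ≠ 0 := sub_ne_zero.mpr hne
  have h1 : (x - y) * ((x * y + b) ^ 2 + ((x + y) ^ 2 - b) ^ 2) = 0 := by grind
  have h2 := (mul_eq_zero.mp h1).resolve_left hne'
  obtain ⟨h4, h5⟩ := neg_one_ns k hk hq _ _ h2
  have h6 : (x + y) ^ 2 + (x - y) ^ 2 = 0 := by grind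
  exact hne' (neg_one_ns k hk hq _ _ h6).2

theorem suf_nine {K : Type*} [Field K] [Fintype K] [CharP K 3]
    (hq : Fintype.card K = 9) (e : K) (he : e ^ 2 = -1) :
    Function.Injective (fun x : K => (quint 0 0 e).eval x) := by
  have h3 : (3 : K) = 0 := CharP.cast_eq_zero K 3
  have key : ∀ x : K, x ^ 4 * (x ^ 4 + e) ^ 4 = - x ^ 4 := by
    intro x
    by_cases hx : x = 0
    · simp [hx]
    have h8 := FiniteField.pow_card_sub_one_eq_one x hx
    rw [hq] at h8
    norm_num at h8
    have h9 : (x ^ 4) ^ 2 = 1 := by rw [← h8]; ring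
    generalize x ^ 4 = u at *
    have : (u + e) ^ 2 = 2 * u * e := by linear_combination h9 + he
    rw [show (u + e) ^ 4 = ((u + e) ^ 2) ^ 2 by ring, this]
    grind
  intro x y hxy
  simp only [quint_eval] at hxy
  have e1 : x * (x ^ 4 + e) = y * (y ^ 4 + e) := by linear_combination hxy
  have e2 : x ^ 4 = y ^ 4 := by
    have := congrArg (fun z => z ^ 4) e1
    simp only [mul_pow, key] at this
    linear_combination -this
  rw [e2] at e1
  by_cases hy : y ^ 4 + e = 0
  · have h5 := key y
    rw [hy] at h5
    have : y ^ 4 = 0 := by linear_combination h5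
    rw [this] at e2
    rw [show x = 0 by simpa using e2, show y = 0 by simpa using this]
  · exact mul_right_cancel₀ hy e1

/-- Classification of normalised permutation quintics in characteristic three, `k ≥ 2`. -/
theorem classify {K : Type*} [Field K] [Fintype K] [CharP K 3] (k : ℕ) (hk : 2 ≤ k)
    (hq : Fintype.card K = 3 ^ k) (hgcd : Nat.gcd 5 (3 ^ k - 1) = 1) (b c e : K) :
    Function.Injective (fun x : K => (quint b c e).eval x) ↔
    ((k = 2 ∧ b = 0 ∧ c = 0 ∧ e ^ 2 = -1) ∨ (k % 4 = 2 ∧ b = 0 ∧ c = 0 ∧ e = 0) ∨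
      (k % 2 = 1 ∧ c = 0 ∧ -b ^ 2 = e)) := by
  have h0 : k % 4 ≠ 0 := by
    intro h
    obtain ⟨j, rfl⟩ : ∃ j, k = 4 * j := ⟨k / 4, by omega⟩
    have : 5 ∣ 3 ^ (4 * j) - 1 := by
      rw [pow_mul]
      have := Nat.sub_dvd_pow_sub_pow (3 ^ 4) 1 j
      rw [one_pow] at this
      exact dvd_trans (by norm_num) this
    have := Nat.gcd_eq_left this
    omega
  constructor
  · intro hf
    have : k % 4 = 1 ∨ k % 4 = 2 ∨ k % 4 = 3 := by omega
    rcases this with h | h | h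
    · exact Or.inr (Or.inr ⟨by omega, nec_one k h (by omega) hq b c e hf⟩)
    · by_cases h2 : k = 2
      · subst h2
        obtain ⟨r1, r2, r3 | r3⟩ := nec_nine (by simpa using hq) b c e hf
        · exact Or.inr (Or.inl ⟨by omega, r1, r2, r3⟩)
        · exact Or.inl ⟨rfl, r1, r2, r3⟩
      · exact Or.inr (Or.inl ⟨h, nec_two k h (by omega) hq b c e hf⟩)
    · exact Or.inr (Or.inr ⟨by omega, nec_three k h hq b c e hf⟩)
  · rintro (⟨rfl, rfl, rfl, h⟩ | ⟨h, rfl, rfl, rfl⟩ | ⟨h, rfl, rfl⟩)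
    · exact suf_nine (by simpa using hq) e h
    · have := pow5_inj (K := K) (by rw [hq]; exact hgcd)
      simpa [quint_eval] using this
    · exact suf_odd k h hq b

theorem mem_of_pow {K F : Type*} [Field K] [Fintype K] [Field F] [Algebra K F] (x : F)
    (hx : x ^ Fintype.card K = x) : ∃ y : K, algebraMap K F y = x := by
  classical
  by_contra hcon
  push Not at hcon
  have hq : 1 < Fintype.card K := Fintype.one_lt_card
  set P : Polynomial F := Polynomial.X ^ Fintype.card K - Polynomial.X with hP
  have hP0 : P ≠ 0 := FiniteField.X_pow_card_sub_X_ne_zero F hq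
  have hd : P.natDegree = Fintype.card K := FiniteField.X_pow_card_sub_X_natDegree_eq F hq
  have hsub : insert x (Finset.univ.image (algebraMap K F)) ⊆ P.roots.toFinset := by
    intro z hz
    rw [Multiset.mem_toFinset, Polynomial.mem_roots hP0]
    simp only [Finset.mem_insert, Finset.mem_image, Finset.mem_univ, true_and] at hz
    rcases hz with rfl | ⟨y, rfl⟩
    · simp [hP, hx]
    · simp [hP, ← map_pow, FiniteField.pow_card]
  have h1 := Finset.card_le_card hsub
  rw [Finset.card_insert_of_notMem (by simpa using hcon),
    Finset.card_image_of_injective _ (algebraMap K F).injective, Finset.card_univ] at h1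
  have h2 := Multiset.toFinset_card_le P.roots
  have h3 := Polynomial.card_roots' P
  omega

theorem norm_formula {K F : Type*} [Field K] [Fintype K] [Field F] [Fintype F] [Algebra K F]
    (hc : Fintype.card F = Fintype.card K ^ 4) (x : F) :
    algebraMap K F (Algebra.norm K x) =
      x * x ^ Fintype.card K * x ^ (Fintype.card K ^ 2) * x ^ (Fintype.card K ^ 3) := by
  have hr : Module.finrank K F = 4 := by
    have := Module.card_eq_pow_finrank (K := K) (V := F)
    rw [hc] at this
    exact (Nat.pow_right_injective (Fintype.one_lt_card (α := K)) this).symm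
  rw [FiniteField.algebraMap_norm_eq_prod_pow, hr]
  simp [Finset.prod_range_succ]

theorem reduction {K F : Type*} [Field K] [Fintype K] [Field F] [Fintype F] [Algebra K F]
    (ψ : K → F) (a : F) (ha : a ≠ 0) (h : K → K) (h0 : h 0 = 0)
    (hh : ∀ y, h y = y * Algebra.norm K (ψ y)) :
    Function.Bijective (fun x : F => a⁻¹ * (x * ψ (Algebra.norm K x))) ↔ Function.Injective h := by
  constructor
  · intro hb
    apply Finite.injective_iff_surjective.mpr
    intro z
    obtain ⟨w, hw⟩ := FiniteField.norm_surjective K F (z / Algebra.norm K a)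
    obtain ⟨x, hx⟩ := hb.2 w
    refine ⟨Algebra.norm K x, ?_⟩
    simp only at hx
    have hna : Algebra.norm K a ≠ 0 := by rwa [Ne, Algebra.norm_eq_zero_iff]
    have := congrArg (Algebra.norm K) hx
    rw [hw, map_mul, map_mul, ← hh, Algebra.norm_inv] at this
    field_simp at this
    exact this
  · intro hi
    apply Finite.injective_iff_bijective.mp
    intro x x' hx
    simp only at hx
    have e1 := mul_left_cancel₀ (inv_ne_zero ha) hx
    have e2 := congrArg (Algebra.norm K) e1
    rw [map_mul, map_mul, ← hh, ← hh] at e2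
    have e3 := hi e2
    rw [e3] at e1
    by_cases hz : ψ (Algebra.norm K x') = 0
    · have : Algebra.norm K x' = 0 := by
        apply hi
        rw [h0, hh, hz, Algebra.norm_zero, mul_zero]
      have e4 := e3.trans this
      rw [Algebra.norm_eq_zero_iff] at this e4
      rw [this, e4]
    · exact mul_right_cancel₀ hz e1

theorem main_aux {K F : Type*} [Field K] [Fintype K] [CharP K 3] [Field F] [Fintype F] [Algebra K F]
    (k : ℕ) (hk : 0 < k) (hgcd : Nat.gcd 5 (3 ^ k - 1) = 1) (hK : Fintype.card K = 3 ^ k)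
    (d : ℕ) (hd : d = (3 ^ (4 * k) - 1) / (3 ^ k - 1) + 1)
    (hF : Fintype.card F = 3 ^ (4 * k)) (a : F) (ha : a ≠ 0)
    (a1 a2 a3 : F) (ha1 : a1 = a ^ (3 ^ k))
    (ha2 : a2 = a ^ (3 ^ (2 * k))) (ha3 : a3 = a ^ (3 ^ (3 * k)))
    (m1 m2 m3 m4 : K)
    (hl1 : algebraMap K F m1 = a + a1 + a2 + a3)
    (hl2 : algebraMap K F m2 = a * a1 + a * a2 + a * a3 + a1 * a2 + a1 * a3 + a2 * a3)
    (hl3 : algebraMap K F m3 = a * a1 * a2 + a * a1 * a3 + a * a2 * a3 + a1 * a2 * a3)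
    (hl4 : algebraMap K F m4 = a * a1 * a2 * a3) :
    (Function.Bijective (fun x : F => a⁻¹ * x ^ d) ∧
     Function.Bijective (fun x : F => a⁻¹ * x ^ d + x)) ↔
     Function.Injective (fun y : K => y ^ 5 + m1 * y ^ 4 + m2 * y ^ 3 + m3 * y ^ 2 + m4 * y) := by
  have hc : Fintype.card F = Fintype.card K ^ 4 := by rw [hF, hK, ← pow_mul, mul_comm]
  have : CharP F 3 := charP_of_injective_algebraMap (algebraMap K F).injective 3
  have hN : ∀ x : F, x ^ d = x * algebraMap K F (Algebra.norm K x) := by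
    intro x
    rw [FiniteField.algebraMap_norm_eq_pow, Nat.card_eq_fintype_card, Nat.card_eq_fintype_card,
      hF, hK, hd, pow_succ, mul_comm]
  have b1 : Function.Bijective (fun x : F => a⁻¹ * x ^ d) := by
    simp only [hN]
    rw [reduction (fun y => algebraMap K F y) a ha (fun y => y ^ 5) (by simp)]
    · exact pow5_inj (by rw [hK]; exact hgcd)
    · intro y
      apply (algebraMap K F).injective
      rw [map_mul, norm_formula hc]
      simp only [← map_pow, FiniteField.pow_card, FiniteField.pow_card_pow, ← map_mul]
      congr 1
      ring
  have hfr : ∀ (y : K) (j : ℕ), (a + algebraMap K F y) ^ (Fintype.card K ^ j) =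
      a ^ (3 ^ (j * k)) + algebraMap K F y := by
    intro y j
    rw [hK, ← pow_mul, mul_comm k j, add_pow_char_pow, ← map_pow, mul_comm j k, pow_mul, ← hK,
      FiniteField.pow_card_pow]
  rw [and_iff_right b1]
  rw [show (fun x : F => a⁻¹ * x ^ d + x) = (fun x : F => a⁻¹ *
    (x * (fun y : K => a + algebraMap K F y) (Algebra.norm K x))) by
      funext x
      rw [hN]
      field_simp
      ring]
  refine reduction (fun y : K => a + algebraMap K F y) a ha _ ?_ ?_
  · simp
  · intro y
    apply (algebraMap K F).injective
    have f1 := hfr y 1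
    have f2 := hfr y 2
    have f3 := hfr y 3
    rw [pow_one, one_mul] at f1
    rw [map_mul, norm_formula hc, f1, f2, f3]
    simp only [map_add, map_mul, map_pow, hl1, hl2, hl3, hl4, ← ha1, ← ha2, ← ha3]
    ring

theorem shift_inj {K : Type*} [Field K] [CharP K 3] (m1 m2 m3 m4 : K) :
    Function.Injective (fun y : K => y ^ 5 + m1 * y ^ 4 + m2 * y ^ 3 + m3 * y ^ 2 + m4 * y) ↔
    Function.Injective (fun x : K => (quint (m2 - m1 ^ 2) (m3 + m1 ^ 3) (m4 - m1 * m3)).eval x) := by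
  have h3 : (3 : K) = 0 := CharP.cast_eq_zero K 3
  have key : ∀ x : K, (quint (m2 - m1 ^ 2) (m3 + m1 ^ 3) (m4 - m1 * m3)).eval x =
     ((x + m1) ^ 5 + m1 * (x + m1) ^ 4 + m2 * (x + m1) ^ 3 + m3 * (x + m1) ^ 2 + m4 * (x + m1))
      - (m1 ^ 5 + m1 * m1 ^ 4 + m2 * m1 ^ 3 + m3 * m1 ^ 2 + m4 * m1) := by
    intro x
    rw [quint_eval]
    grind
  simp only [key]
  constructor
  · intro h x y hxy
    simp only [sub_left_inj] at hxy
    exact add_right_cancel (h hxy)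
  · intro h x y hxy
    have : x - m1 = y - m1 := by
      apply h
      simp only [sub_add_cancel]
      simp only at hxy
      rw [hxy]
    exact sub_left_inj.mp this

theorem F3_cases {K : Type*} [Field K] [Fintype K] [CharP K 3] (hK : Fintype.card K = 3) (x : K) :
    x = 0 ∨ x = 1 ∨ x = -1 := by
  have := FiniteField.pow_card x
  rw [hK] at this
  have h : x * ((x - 1) * (x + 1)) = 0 := by linear_combination this
  rcases mul_eq_zero.mp h with h | h
  · exact Or.inl h
  · rcases mul_eq_zero.mp h with h | h
    · right; left; linear_combination h
    · right; right; linear_combination h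

theorem F3_inj {K : Type*} [Field K] [Fintype K] [CharP K 3] (hK : Fintype.card K = 3)
    (m1 m2 m3 m4 : K) :
    Function.Injective (fun y : K => y ^ 5 + m1 * y ^ 4 + m2 * y ^ 3 + m3 * y ^ 2 + m4 * y) ↔
    (m3 = - m1 ∧ 1 + m2 + m4 ≠ 0) := by
  have h3 : (3 : K) = 0 := CharP.cast_eq_zero K 3
  have h10 : (1 : K) ≠ 0 := one_ne_zero
  have h11 : (1 : K) ≠ -1 := by
    intro h
    apply h10
    linear_combination h3 - h
  constructor
  · intro h
    have e1 := h.ne h10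
    have e2 := h.ne (neg_ne_zero.mpr h10)
    have e3 := h.ne h11
    rcases F3_cases hK (m1 + m3) with h | h | h <;> rcases F3_cases hK (1 + m2 + m4) with h' | h' | h' <;> grind
  · rintro ⟨rfl, h⟩ x y hxy
    rcases F3_cases hK x with rfl | rfl | rfl <;> rcases F3_cases hK y with rfl | rfl | rfl <;> grind

theorem F3_final {K : Type*} [Field K] [Fintype K] [CharP K 3] (hK : Fintype.card K = 3)
    (m1 m2 m3 m4 : K) (h40 : m4 ≠ 0) (hex : ¬ (m1 = 0 ∧ m2 = 0 ∧ m3 = 0 ∧ m4 = 1)) :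
    (m3 = -m1 ∧ 1 + m2 + m4 ≠ 0) ↔
    ((m2 = m1 ^ 2 + 1 ∧ m3 = -m1 ^ 3 ∧ m4 = -m1 ^ 4) ∨
     (m2 = m1 ^ 2 + 2 ∧ m3 = -m1 ^ 3 ∧ m4 = -m1 ^ 4 + 1) ∨
     (m3 = -m1 ^ 3 ∧ -(m2 - m1 ^ 2) ^ 2 = m4 - m1 * m3)) := by
  have h3 : (3 : K) = 0 := CharP.cast_eq_zero K 3
  have h10 : (1 : K) ≠ 0 := one_ne_zero
  have hc : m1 ^ 3 = m1 := by
    have := FiniteField.pow_card m1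
    rwa [hK] at this
  rw [hc]
  by_cases hm : m3 = -m1
  swap
  · simp [hm]
  subst hm
  simp only [true_and]
  have e1 : (-1 : K) ≠ 0 := neg_ne_zero.mpr h10
  have e2 : (1 : K) ≠ -1 := by
    intro h
    apply h10
    linear_combination h3 - h
  have two : (2 : K) = -1 := by linear_combination h3
  have four : (1 + 1 : K) = -1 := by linear_combination h3
  have five : (-1 + -1 : K) = 1 := by linear_combination -h3
  have six : (-1 - 1 : K) = 1 := by linear_combination -h3
  rcases F3_cases hK m1 with rfl | rfl | rfl <;> rcases F3_cases hK m2 with rfl | rfl | rfl <;>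
    rcases F3_cases hK m4 with rfl | rfl | rfl <;>
    first
    | exact absurd rfl h40
    | (norm_num [two, e1, e2, e2.symm, four, five, six] at hex ⊢; done)
    | grind

theorem exists_K (k : ℕ) (hk : 0 < k) (F : Type*) [Field F] [Fintype F]
    (hF : Fintype.card F = 3 ^ (4 * k)) : CharP F 3 ∧ Nonempty (GaloisField 3 k →+* F) := by
  have : Fact (Nat.Prime 3) := ⟨Nat.prime_three⟩
  have : CharP F 3 := charP_of_card_eq_prime_pow hF
  refine ⟨inferInstance, ?_⟩
  let _ : Algebra (ZMod 3) F := ZMod.algebra F 3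
  have h1 : Module.finrank (ZMod 3) F = 4 * k := by
    have := FiniteField.pow_finrank_eq_card 3 F
    rw [hF] at this
    exact Nat.pow_right_injective (le_refl 2 |>.trans (by norm_num)) this
  have h2 := GaloisField.finrank 3 hk.ne'
  obtain ⟨f⟩ := FiniteField.nonempty_algHom_of_finrank_dvd (F := ZMod 3) (K := GaloisField 3 k) (L := F)
    (by rw [h1, h2]; exact dvd_mul_left _ _)
  exact ⟨f.toRingHom⟩


theorem main_K {K F : Type*} [Field K] [Fintype K] [CharP K 3] [Field F] [Fintype F] [Algebra K F]
    (k : ℕ) (hk : 0 < k) (hgcd : Nat.gcd 5 (3 ^ k - 1) = 1) (hK : Fintype.card K = 3 ^ k)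
    (d : ℕ) (hd : d = (3 ^ (4 * k) - 1) / (3 ^ k - 1) + 1)
    (hF : Fintype.card F = 3 ^ (4 * k)) (a : F) (ha : a ≠ 0)
    (a1 a2 a3 : F) (ha1 : a1 = a ^ (3 ^ k))
    (ha2 : a2 = a ^ (3 ^ (2 * k))) (ha3 : a3 = a ^ (3 ^ (3 * k)))
    (l1 l2 l3 l4 : F)
    (hl1 : l1 = a + a1 + a2 + a3)
    (hl2 : l2 = a * a1 + a * a2 + a * a3 + a1 * a2 + a1 * a3 + a2 * a3)
    (hl3 : l3 = a * a1 * a2 + a * a1 * a3 + a * a2 * a3 + a1 * a2 * a3)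
    (hl4 : l4 = a * a1 * a2 * a3) :
    (Function.Bijective (fun x : F => a⁻¹ * x ^ d) ∧
     Function.Bijective (fun x : F => a⁻¹ * x ^ d + x)) ↔
    ((k = 2 ∧ l2 = l1 ^ 2 ∧ l3 = -l1 ^ 3 ∧ (l4 + l1 ^ 4) ^ 2 = -1) ∨
     (k = 1 ∧ l2 = l1 ^ 2 + 1 ∧ l3 = -l1 ^ 3 ∧ l4 = -l1 ^ 4) ∨
     (k = 1 ∧ l2 = l1 ^ 2 + 2 ∧ l3 = -l1 ^ 3 ∧ l4 = -l1 ^ 4 + 1) ∨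
     (k % 4 = 2 ∧ l2 = l1 ^ 2 ∧ l3 = -l1 ^ 3 ∧ l4 = -l1 ^ 4) ∨
     (k % 2 = 1 ∧ l3 = -l1 ^ 3 ∧ -(l2 - l1 ^ 2) ^ 2 = l4 - l1 * l3)) := by
  have hF3 : CharP F 3 := charP_of_injective_algebraMap (algebraMap K F).injective 3
  have h3 : (3 : F) = 0 := CharP.cast_eq_zero F 3
  have h3K : (3 : K) = 0 := CharP.cast_eq_zero K 3
  have f0 : a ^ 3 ^ k = a1 := ha1.symm
  have f1 : a1 ^ 3 ^ k = a2 := by rw [ha1, ha2, ← pow_mul, ← pow_add, two_mul]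
  have f2 : a2 ^ 3 ^ k = a3 := by
    rw [ha2, ha3, ← pow_mul, ← pow_add, show 2 * k + k = 3 * k by ring]
  have f3 : a3 ^ 3 ^ k = a := by
    rw [ha3, ← pow_mul, ← pow_add, show 3 * k + k = 4 * k by ring, ← hF, FiniteField.pow_card]
  obtain ⟨m1, hm1⟩ := mem_of_pow (K := K) l1 (by
    rw [hK, hl1]; simp only [add_pow_char_pow, mul_pow, f0, f1, f2, f3]; ring)
  obtain ⟨m2, hm2⟩ := mem_of_pow (K := K) l2 (by
    rw [hK, hl2]; simp only [add_pow_char_pow, mul_pow, f0, f1, f2, f3]; ring)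
  obtain ⟨m3, hm3⟩ := mem_of_pow (K := K) l3 (by
    rw [hK, hl3]; simp only [add_pow_char_pow, mul_pow, f0, f1, f2, f3]; ring)
  obtain ⟨m4, hm4⟩ := mem_of_pow (K := K) l4 (by
    rw [hK, hl4]; simp only [mul_pow, f0, f1, f2, f3]; ring)
  have inj : ∀ x y : K, algebraMap K F x = algebraMap K F y ↔ x = y :=
    fun x y => (algebraMap K F).injective.eq_iff
  rw [main_aux k hk hgcd hK d hd hF a ha a1 a2 a3 ha1 ha2 ha3 m1 m2 m3 m4 (hm1.trans hl1)
    (hm2.trans hl2) (hm3.trans hl3) (hm4.trans hl4)]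
  have t1 : l2 = l1 ^ 2 ↔ m2 = m1 ^ 2 := by rw [← inj]; simp [hm1, hm2]
  have t2 : l3 = -l1 ^ 3 ↔ m3 = -m1 ^ 3 := by rw [← inj]; simp [hm1, hm3]
  have t3 : (l4 + l1 ^ 4) ^ 2 = -1 ↔ (m4 + m1 ^ 4) ^ 2 = -1 := by rw [← inj]; simp [hm1, hm4]
  have t4 : l2 = l1 ^ 2 + 1 ↔ m2 = m1 ^ 2 + 1 := by rw [← inj]; simp [hm1, hm2]
  have t5 : l4 = -l1 ^ 4 ↔ m4 = -m1 ^ 4 := by rw [← inj]; simp [hm1, hm4]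
  have t6 : l2 = l1 ^ 2 + 2 ↔ m2 = m1 ^ 2 + 2 := by
    rw [← inj]; simp [hm1, hm2, map_ofNat]
  have t7 : l4 = -l1 ^ 4 + 1 ↔ m4 = -m1 ^ 4 + 1 := by rw [← inj]; simp [hm1, hm4]
  have t8 : -(l2 - l1 ^ 2) ^ 2 = l4 - l1 * l3 ↔ -(m2 - m1 ^ 2) ^ 2 = m4 - m1 * m3 := by
    rw [← inj]; simp [hm1, hm2, hm3, hm4]
  rw [t1, t2, t3, t4, t5, t6, t7, t8]
  by_cases hk1 : k = 1
  · subst hk1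
    have hK3 : Fintype.card K = 3 := by simpa using hK
    rw [F3_inj hK3]
    simp only [show (1 : ℕ) ≠ 2 by norm_num, show 1 % 4 ≠ 2 by norm_num, show 1 % 2 = 1 by norm_num,
      false_and, true_and, false_or]
    have h40 : m4 ≠ 0 := by
      rintro rfl
      rw [map_zero, hl4, ha1, ha2, ha3] at hm4
      simp [ha] at hm4
    have hex : ¬ (m1 = 0 ∧ m2 = 0 ∧ m3 = 0 ∧ m4 = 1) := by
      rintro ⟨rfl, rfl, rfl, rfl⟩
      simp only [map_zero, map_one] at hm1 hm2 hm3 hm4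
      rw [← hm1] at hl1
      rw [← hm2] at hl2
      rw [← hm3] at hl3
      rw [← hm4] at hl4
      have e4 : a ^ 4 = -1 := by
        linear_combination a ^ 3 * (-hl1) + a ^ 2 * hl2 - a * hl3 + hl4
      simp only [pow_one] at f0 f1
      have e1 : a2 = a := by
        rw [← f1, ← f0]
        linear_combination (a ^ 5 - a) * e4
      have e2 : a3 = a1 := by
        rw [← f2, e1, pow_one, f0]
      rw [e1, e2, ← f0] at hl1
      have e5 : a * (a ^ 2 + 1) = 0 := by linear_combination hl1 + (a ^ 3 + a) * h3
      have e6 := (mul_eq_zero.mp e5).resolve_left ha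
      have e7 : (1 : F) = 0 := by linear_combination h3 - (1 - a ^ 2) * e6 - e4
      exact one_ne_zero e7
    exact F3_final hK3 m1 m2 m3 m4 h40 hex
  · rw [shift_inj, classify k (by omega) hK hgcd]
    have u1 : m2 - m1 ^ 2 = 0 ↔ m2 = m1 ^ 2 := sub_eq_zero
    have u2 : m3 + m1 ^ 3 = 0 ↔ m3 = -m1 ^ 3 := eq_neg_iff_add_eq_zero.symm
    rw [u1, u2]
    simp only [hk1, false_and, false_or]
    have u3 : m3 = -m1 ^ 3 → m4 - m1 * m3 = m4 + m1 ^ 4 := by rintro rfl; ring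
    have u4 : m4 + m1 ^ 4 = 0 ↔ m4 = -m1 ^ 4 := eq_neg_iff_add_eq_zero.symm
    refine or_congr ?_ (or_congr ?_ Iff.rfl)
    · refine and_congr_right fun _ => and_congr_right fun _ => and_congr_right fun h => ?_
      rw [u3 h]
    · refine and_congr_right fun _ => and_congr_right fun _ => and_congr_right fun h => ?_
      rw [u3 h, u4]


/-- **Corollary (p = 3, r = 4).** Let `k ≥ 1` with `gcd(5, 3^k - 1) = 1`, `n = 4k`,
`d = (3^{4k} - 1)/(3^k - 1) + 1`, and let `F` be the finite field with `3^n` elements.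
For `a ∈ F`, `a ≠ 0`, let `λ₁, λ₂, λ₃, λ₄` be the elementary symmetric functions of
`a, a^{3^k}, a^{3^{2k}}, a^{3^{3k}}`. Then `a⁻¹ x^d` is a complete permutation
polynomial over `F` iff one of conditions (i)–(v) holds. -/
theorem stmt_5 (k : ℕ) (hk : 0 < k) (hgcd : Nat.gcd 5 (3 ^ k - 1) = 1)
    (n : ℕ) (hn : n = 4 * k) (d : ℕ) (hd : d = (3 ^ (4 * k) - 1) / (3 ^ k - 1) + 1)
    (F : Type*) [Field F] [Fintype F] (hF : Fintype.card F = 3 ^ n)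
    (a : F) (ha : a ≠ 0)
    (a0 a1 a2 a3 : F) (ha0 : a0 = a) (ha1 : a1 = a ^ (3 ^ k))
    (ha2 : a2 = a ^ (3 ^ (2 * k))) (ha3 : a3 = a ^ (3 ^ (3 * k)))
    (l1 l2 l3 l4 : F)
    (hl1 : l1 = a0 + a1 + a2 + a3)
    (hl2 : l2 = a0 * a1 + a0 * a2 + a0 * a3 + a1 * a2 + a1 * a3 + a2 * a3)
    (hl3 : l3 = a0 * a1 * a2 + a0 * a1 * a3 + a0 * a2 * a3 + a1 * a2 * a3)
    (hl4 : l4 = a0 * a1 * a2 * a3) :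
    (Function.Bijective (fun x : F => a⁻¹ * x ^ d) ∧
     Function.Bijective (fun x : F => a⁻¹ * x ^ d + x)) ↔
    ((k = 2 ∧ l2 = l1 ^ 2 ∧ l3 = -l1 ^ 3 ∧ (l4 + l1 ^ 4) ^ 2 = -1) ∨
     (k = 1 ∧ l2 = l1 ^ 2 + 1 ∧ l3 = -l1 ^ 3 ∧ l4 = -l1 ^ 4) ∨
     (k = 1 ∧ l2 = l1 ^ 2 + 2 ∧ l3 = -l1 ^ 3 ∧ l4 = -l1 ^ 4 + 1) ∨
     (k % 4 = 2 ∧ l2 = l1 ^ 2 ∧ l3 = -l1 ^ 3 ∧ l4 = -l1 ^ 4) ∨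
     (k % 2 = 1 ∧ l3 = -l1 ^ 3 ∧ -(l2 - l1 ^ 2) ^ 2 = l4 - l1 * l3)) := by
  have : Fact (Nat.Prime 3) := ⟨Nat.prime_three⟩
  rw [hn] at hF
  obtain ⟨hF3, ⟨f⟩⟩ := exists_K k hk F hF
  let _ : Algebra (GaloisField 3 k) F := f.toAlgebra
  let _ : Fintype (GaloisField 3 k) := Fintype.ofFinite _
  have hK : Fintype.card (GaloisField 3 k) = 3 ^ k := by
    rw [← Nat.card_eq_fintype_card, GaloisField.card 3 k hk.ne']
  subst ha0
  exact main_K (K := GaloisField 3 k) k hk hgcd hK d hd hF a0 ha a1 a2 a3 ha1 ha2 ha3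
    l1 l2 l3 l4 hl1 hl2 hl3 hl4
end

section
/- Let k be a positive integer with gcd(k, 4) = 1, n = 4k, and d = (3^{4k} - 1)/(3^k - 1) + 1. Let β ∈ F_{3^n} satisfy β⁴ - β - 1 = 0, and let u, v ∈ F_{3^k}, not both zero. Then a^{-1}x^d is a complete permutation polynomial over F_{3^n} for each of the following choices of a: (1) a = u(1 - β² - β³) + v(β + β³); (2) a = u(1 - β²) + v(β - β² - β³); (3) a = u(1 + β) + v(β² - β³); (4) a = u(1 + β³) + v(β + β²). -/
/-- The quintic Dickson difference vanishes only on the diagonal, as `-1` is not a square. -/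
lemma dickson_inj {F : Type*} [Field F] [CharP F 3] (φ : F →+* F)
    (hi : ∀ i : F, φ i = i → i ^ 2 ≠ -1) (α x y : F) (hα : φ α = α) (hx : φ x = x)
    (hy : φ y = y)
    (h : x ^ 5 + α * x ^ 3 - α ^ 2 * x = y ^ 5 + α * y ^ 3 - α ^ 2 * y) : x = y := by
  have h3 : (3 : F) = 0 := by exact_mod_cast CharP.cast_eq_zero F 3
  have key : ∀ r s : F, φ r = r → φ s = s → r ^ 2 + s ^ 2 = 0 → s = 0 := by
    intro r s hr hs hrs
    by_contra hs0
    apply hi (r / s) (by rw [map_div₀, hr, hs])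
    field_simp
    linear_combination hrs
  by_contra hxy
  have hxy' : x - y ≠ 0 := sub_ne_zero.mpr hxy
  have hfac : (x - y) * ((x ^ 2 + y ^ 2 - (x * y + α)) ^ 2 + (x * y + α) ^ 2) = 0 := by
    grind
  have h0 := (mul_eq_zero.mp hfac).resolve_left hxy'
  have hB := key _ _ (by simp [hx, hy, hα]) (by simp [hx, hy, hα]) h0
  have hA : x ^ 2 + y ^ 2 = 0 := by
    rw [hB] at h0
    simpa using h0
  have hy0 := key _ _ hx hy hA
  have hx0 := key _ _ hy hx (by rw [add_comm]; exact hA)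
  exact hxy (by rw [hx0, hy0])

/-- The general criterion: if the quintic attached to `a` is a shifted Dickson polynomial
(coefficients expressed by elementary symmetric functions of the conjugates). -/
lemma cpp_core {F : Type*} [Field F] [Fintype F] [CharP F 3] (φ : F →+* F) (q d : ℕ)
    (hφ : ∀ x, φ x = x ^ q) (hφ4 : ∀ x, φ (φ (φ (φ x))) = x)
    (hi : ∀ i : F, φ i = i → i ^ 2 ≠ -1)
    (h5 : ∀ s t : F, φ s = s → φ t = t → s ^ 5 = t ^ 5 → s = t)
    (hd : d = q ^ 3 + q ^ 2 + q + 1 + 1) (a a1 a2 a3 e1 e2 : F) (hne : ¬(e1 = 0 ∧ e2 = 0))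
    (ha1 : φ a = a1) (ha2 : φ a1 = a2) (ha3 : φ a2 = a3)
    (he1 : φ e1 = e1) (he2 : φ e2 = e2)
    (H1 : a + a1 + a2 + a3 = e1)
    (H2 : a * a1 + a * a2 + a * a3 + a1 * a2 + a1 * a3 + a2 * a3 = e2)
    (H3 : a * a1 * a2 + a * a1 * a3 + a * a2 * a3 + a1 * a2 * a3 = - e1 ^ 3)
    (H4 : a * a1 * a2 * a3 = e1 ^ 4 - e1 ^ 2 * e2 - e2 ^ 2) :
    Function.Bijective (fun x : F => a⁻¹ * x ^ d) ∧
      Function.Bijective (fun x : F => a⁻¹ * x ^ d + x) := by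
  have h3 : (3 : F) = 0 := by exact_mod_cast CharP.cast_eq_zero F 3
  have ha : a ≠ 0 := by
    rintro rfl
    rw [map_zero] at ha1
    subst ha1
    rw [map_zero] at ha2
    subst ha2
    rw [map_zero] at ha3
    subst ha3
    exact hne ⟨by simpa using H1.symm, by simpa using H2.symm⟩
  set N : F → F := fun x => x * φ x * φ (φ x) * φ (φ (φ x)) with hN
  have hNφ : ∀ x, φ (N x) = N x := by
    intro x
    simp only [hN, map_mul, hφ4]
    ring
  have hNmul : ∀ x y, N (x * y) = N x * N y := by
    intro x y
    simp only [hN, map_mul]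
    ring
  have hNt : ∀ t, φ t = t → N t = t ^ 4 := by
    intro t ht
    simp only [hN, ht]
    ring
  have hN0 : ∀ x, N x = 0 → x = 0 := by
    intro x hx
    simpa [hN] using hx
  have hpow : ∀ x, x ^ d = N x * x := by
    intro x
    simp only [hN, hφ, hd]
    ring
  have hai : a⁻¹ ≠ 0 := inv_ne_zero ha
  refine ⟨Finite.injective_iff_bijective.mp ?_, Finite.injective_iff_bijective.mp ?_⟩
  · intro x y hxy
    have h : N x * x = N y * y := by
      simpa [hpow, hai] using hxy
    have h' := congrArg N h
    rw [hNmul (N x), hNmul (N y), hNt _ (hNφ x), hNt _ (hNφ y), ← pow_succ, ← pow_succ] at h'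
    have hxyN := h5 _ _ (hNφ x) (hNφ y) h'
    by_cases h0 : N x = 0
    · rw [hN0 x h0, hN0 y (hxyN ▸ h0)]
    · rw [← hxyN] at h
      exact mul_left_cancel₀ h0 h
  · intro x y hxy
    have h : (N x + a) * x = (N y + a) * y := by
      have : a⁻¹ * (N x * x) + x = a⁻¹ * (N y * y) + y := by simpa only [hpow] using hxy
      field_simp at this
      linear_combination this
    have hNa : ∀ t, φ t = t → N (t + a) * t =
        ((t - e1) ^ 5 + (e2 - e1 ^ 2) * (t - e1) ^ 3 - (e2 - e1 ^ 2) ^ 2 * (t - e1)) -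
        ((- e1) ^ 5 + (e2 - e1 ^ 2) * (- e1) ^ 3 - (e2 - e1 ^ 2) ^ 2 * (- e1)) := by
      intro t ht
      have : N (t + a) = t ^ 4 + e1 * t ^ 3 + e2 * t ^ 2 - e1 ^ 3 * t
          + (e1 ^ 4 - e1 ^ 2 * e2 - e2 ^ 2) := by
        simp only [hN, map_add, ht, ha1, ha2, ha3]
        linear_combination t ^ 3 * H1 + t ^ 2 * H2 + t * H3 + H4
      rw [this]
      clear * - h3
      grind
    have h' := congrArg N h
    rw [hNmul (N x + a), hNmul (N y + a), hNa _ (hNφ x), hNa _ (hNφ y)] at h'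
    have hxyN := dickson_inj φ hi (e2 - e1 ^ 2) (N x - e1) (N y - e1) (by simp [he1, he2])
      (by simp [he1, hNφ]) (by simp [he1, hNφ]) (sub_left_inj.mp h')
    have hxyN : N x = N y := sub_left_inj.mp hxyN
    by_cases h0 : N x = 0
    · rw [hN0 x h0, hN0 y (hxyN ▸ h0)]
    · by_cases h1 : N x + a = 0
      · exfalso
        have haN : a = - N x := by linear_combination h1
        have hφa : φ a = a := by rw [haN, map_neg, hNφ]
        have e1a : a1 = a := ha1.symm.trans hφa
        have e2a : a2 = a := by rw [← ha2, e1a, hφa]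
        have e3a : a3 = a := by rw [← ha3, e2a, hφa]
        rw [e1a, e2a, e3a] at H1 H2 H3 H4
        have : a ^ 4 = 0 := by
          clear * - h3 H1 H2 H3 H4
          grind
        exact ha (pow_eq_zero_iff (by norm_num) |>.mp this)
      · rw [← hxyN] at h
        exact mul_left_cancel₀ h1 h

theorem stmt_6 (k : ℕ) (hk : 0 < k) (hk4 : Nat.gcd k 4 = 1)
    (n : ℕ) (hn : n = 4 * k) (d : ℕ) (hd : d = (3 ^ (4 * k) - 1) / (3 ^ k - 1) + 1)
    (F : Type*) [Field F] [Fintype F] (hF : Fintype.card F = 3 ^ n)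
    (β : F) (hβ : β ^ 4 - β - 1 = 0)
    (u v : F) (hu : u ^ (3 ^ k) = u) (hv : v ^ (3 ^ k) = v)
    (huv : ¬(u = 0 ∧ v = 0)) :
    ∀ a : F,
      (a = u * (1 - β ^ 2 - β ^ 3) + v * (β + β ^ 3) ∨
       a = u * (1 - β ^ 2) + v * (β - β ^ 2 - β ^ 3) ∨
       a = u * (1 + β) + v * (β ^ 2 - β ^ 3) ∨
       a = u * (1 + β ^ 3) + v * (β + β ^ 2)) →
      Function.Bijective (fun x : F => a⁻¹ * x ^ d) ∧
      Function.Bijective (fun x : F => a⁻¹ * x ^ d + x) := by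
  have : Fact (Nat.Prime 3) := ⟨by norm_num⟩
  have : CharP F 3 := by
    have hn0 : n ≠ 0 := by omega
    obtain ⟨p, hp⟩ := CharP.exists F
    obtain ⟨m, hpp, hm⟩ := FiniteField.card F p
    have hdvd : p ∣ 3 ^ n := by
      rw [← hF, hm]; exact dvd_pow_self p m.pos.ne'
    have := (Nat.prime_dvd_prime_iff_eq hpp Nat.prime_three).mp (hpp.dvd_of_dvd_pow hdvd)
    exact this ▸ hp
  have h3 : (3 : F) = 0 := by exact_mod_cast CharP.cast_eq_zero F 3
  set φ : F →+* F := iterateFrobenius F 3 k with hφdef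
  have hφ : ∀ x, φ x = x ^ (3 ^ k) := fun x => iterateFrobenius_def 3 k x
  have hφ4 : ∀ x, φ (φ (φ (φ x))) = x := by
    intro x
    have := FiniteField.pow_card x
    rw [hF, hn] at this
    simp only [hφ, ← pow_mul]
    rw [← pow_add, ← pow_add, ← pow_add]
    convert this using 2
    ring_nf
  have hφu : φ u = u := by rw [hφ, hu]
  have hφv : φ v = v := by rw [hφ, hv]
  have hkodd : k % 4 = 1 ∨ k % 4 = 3 := by
    have : k % 4 < 4 := Nat.mod_lt _ (by norm_num)
    have h2 : Nat.gcd (k % 4) 4 = 1 := by rw [← hk4, Nat.gcd_comm k 4, Nat.gcd_rec 4 k]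
    interval_cases h : k % 4 <;> simp_all
  have hiter : ∀ x : F, x ^ 81 = x → φ x = x ^ 3 ∨ φ x = x ^ 27 := by
    intro x hx
    have h81 : ∀ m : ℕ, x ^ (3 ^ (4 * m)) = x := by
      intro m
      induction m with
      | zero => simp
      | succ m ih =>
        rw [show 4 * (m + 1) = 4 * m + 4 by ring, pow_add, pow_mul, ih]
        simpa using hx
    rw [hφ]
    rcases hkodd with h | h
    · left
      rw [show k = 4 * (k / 4) + 1 by omega, pow_add, pow_mul, h81, pow_one]
    · right
      rw [show k = 4 * (k / 4) + 3 by omega, pow_add, pow_mul, h81]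
      norm_num
  have hi : ∀ i : F, φ i = i → i ^ 2 ≠ -1 := by
    intro i h h2
    have h4 : i ^ 4 = 1 := by rw [show i ^ 4 = (i ^ 2) ^ 2 by ring, h2]; ring
    have h81 : i ^ 81 = i := by
      rw [show i ^ 81 = (i ^ 4) ^ 20 * i by ring, h4]; ring
    have hneg : i = - i := by
      rcases hiter i h81 with h' | h'
      · rw [h] at h'
        linear_combination h' + i * h2
      · rw [h, show i ^ 27 = (i ^ 4) ^ 6 * (i ^ 2 * i) by ring, h4, h2] at h'
        linear_combination h'
    have : i = 0 := by linear_combination i * h3 - hneg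
    rw [this] at h2
    norm_num at h2
  have h5 : ∀ s t : F, φ s = s → φ t = t → s ^ 5 = t ^ 5 → s = t := by
    intro s t hs ht h
    exact dickson_inj φ hi 0 s t (map_zero φ) hs ht (by linear_combination h)
  have hd' : d = (3 ^ k) ^ 3 + (3 ^ k) ^ 2 + 3 ^ k + 1 + 1 := by
    have h1 : 1 < 3 ^ k := Nat.one_lt_pow hk.ne' (by norm_num)
    rw [hd, mul_comm 4 k, pow_mul]
    generalize 3 ^ k = q at h1
    obtain ⟨r, rfl⟩ : ∃ r, q = r + 2 := ⟨q - 2, by omega⟩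
    congr 1
    apply Nat.div_eq_of_eq_mul_left (by omega)
    have : (r + 2) ^ 4 = (((r + 2) ^ 3 + (r + 2) ^ 2 + (r + 2) + 1) * (r + 2 - 1)) + 1 := by
      rw [show r + 2 - 1 = r + 1 by omega]; ring
    omega
  -- conjugates of β
  have hb2 : (β ^ 3) ^ 3 = β ^ 3 - β ^ 2 + β := by
    clear * - h3 hβ
    grind
  have hb3 : (β ^ 3 - β ^ 2 + β) ^ 3 = β ^ 3 + β ^ 2 + β := by
    clear * - h3 hβ
    grind
  have hb4 : (β ^ 3 + β ^ 2 + β) ^ 3 = β := by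
    clear * - h3 hβ
    grind
  have hβ27 : β ^ 27 = β ^ 3 + β ^ 2 + β := by
    rw [← hb3, ← hb2]; ring
  have hβ81 : β ^ 81 = β := by
    rw [show β ^ 81 = (β ^ 27) ^ 3 by ring, hβ27, hb4]
  have hc : ∃ b1 b2 b3 : F, φ β = b1 ∧ φ b1 = b2 ∧ φ b2 = b3 ∧ b2 = β ^ 3 - β ^ 2 + β ∧
      ((b1 = β ^ 3 ∧ b3 = β ^ 3 + β ^ 2 + β) ∨ (b3 = β ^ 3 ∧ b1 = β ^ 3 + β ^ 2 + β)) := by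
    rcases hiter β hβ81 with h | h
    · refine ⟨_, _, _, h, rfl, rfl, ?_, Or.inl ⟨rfl, ?_⟩⟩
      · rw [map_pow, h, hb2]
      · rw [map_pow, h, hb2, map_add, map_sub, map_pow, map_pow, h]
        clear * - h3 hβ
        grind
    · rw [hβ27] at h
      have h2 : φ (β ^ 3 + β ^ 2 + β) = β ^ 3 - β ^ 2 + β := by
        rw [map_add, map_add, map_pow, map_pow, h]
        clear * - h3 hβ
        grind
      refine ⟨_, _, _, h, h2, rfl, rfl, Or.inr ⟨?_, rfl⟩⟩
      rw [map_add, map_sub, map_pow, map_pow, h]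
      clear * - h3 hβ
      grind
  obtain ⟨b1, b2, b3, hφ1, hφ2, hφ3, hb2, hb13⟩ := hc
  intro a ha
  have hv0 : u = 0 → v ≠ 0 := fun h h' => huv ⟨h, h'⟩
  rcases ha with ha | ha | ha | ha
  · refine cpp_core φ (3 ^ k) d hφ hφ4 hi h5 hd' a
      (u * (1 - b1 ^ 2 - b1 ^ 3) + v * (b1 + b1 ^ 3))
      (u * (1 - b2 ^ 2 - b2 ^ 3) + v * (b2 + b2 ^ 3))
      (u * (1 - b3 ^ 2 - b3 ^ 3) + v * (b3 + b3 ^ 3))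
      u (u ^ 2 + u * v - v ^ 2) ?_ ?_ ?_ ?_ hφu (by simp [hφu, hφv]) ?_ ?_ ?_ ?_
    · rintro ⟨h1, h2⟩
      apply hv0 h1
      simpa [h1] using h2
    · simp [ha, hφu, hφv, hφ1]
    · simp [hφu, hφv, hφ2]
    · simp [hφu, hφv, hφ3]
    all_goals
      rw [ha]
      clear * - h3 hβ hb2 hb13
      rcases hb13 with ⟨rfl, rfl⟩ | ⟨rfl, rfl⟩ <;> subst hb2 <;> grind
  · refine cpp_core φ (3 ^ k) d hφ hφ4 hi h5 hd' a
      (u * (1 - b1 ^ 2) + v * (b1 - b1 ^ 2 - b1 ^ 3))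
      (u * (1 - b2 ^ 2) + v * (b2 - b2 ^ 2 - b2 ^ 3))
      (u * (1 - b3 ^ 2) + v * (b3 - b3 ^ 2 - b3 ^ 3))
      u (u ^ 2 - u * v - v ^ 2) ?_ ?_ ?_ ?_ hφu (by simp [hφu, hφv]) ?_ ?_ ?_ ?_
    · rintro ⟨h1, h2⟩
      apply hv0 h1
      simpa [h1] using h2
    · simp [ha, hφu, hφv, hφ1]
    · simp [hφu, hφv, hφ2]
    · simp [hφu, hφv, hφ3]
    all_goals
      rw [ha]
      clear * - h3 hβ hb2 hb13
      rcases hb13 with ⟨rfl, rfl⟩ | ⟨rfl, rfl⟩ <;> subst hb2 <;> grind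
  · refine cpp_core φ (3 ^ k) d hφ hφ4 hi h5 hd' a
      (u * (1 + b1) + v * (b1 ^ 2 - b1 ^ 3))
      (u * (1 + b2) + v * (b2 ^ 2 - b2 ^ 3))
      (u * (1 + b3) + v * (b3 ^ 2 - b3 ^ 3))
      u (u * v + v ^ 2) ?_ ?_ ?_ ?_ hφu (by simp [hφu, hφv]) ?_ ?_ ?_ ?_
    · rintro ⟨h1, h2⟩
      apply hv0 h1
      simpa [h1] using h2
    · simp [ha, hφu, hφv, hφ1]
    · simp [hφu, hφv, hφ2]
    · simp [hφu, hφv, hφ3]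
    all_goals
      rw [ha]
      clear * - h3 hβ hb2 hb13
      rcases hb13 with ⟨rfl, rfl⟩ | ⟨rfl, rfl⟩ <;> subst hb2 <;> grind
  · refine cpp_core φ (3 ^ k) d hφ hφ4 hi h5 hd' a
      (u * (1 + b1 ^ 3) + v * (b1 + b1 ^ 2))
      (u * (1 + b2 ^ 3) + v * (b2 + b2 ^ 2))
      (u * (1 + b3 ^ 3) + v * (b3 + b3 ^ 2))
      u (- u * v + v ^ 2) ?_ ?_ ?_ ?_ hφu (by simp [hφu, hφv]) ?_ ?_ ?_ ?_
    · rintro ⟨h1, h2⟩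
      apply hv0 h1
      simpa [h1] using h2
    · simp [ha, hφu, hφv, hφ1]
    · simp [hφu, hφv, hφ2]
    · simp [hφu, hφv, hφ3]
    all_goals
      rw [ha]
      clear * - h3 hβ hb2 hb13
      rcases hb13 with ⟨rfl, rfl⟩ | ⟨rfl, rfl⟩ <;> subst hb2 <;> grind
end
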